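/- arXiv:2402.18739 — 4 statements merged into one kernel-verified Lean document; each statement's English description precedes it below -/
import Mathlib

section
/- Every d-regular finite simple graph with d ≥ 54000 is decomposable into 4 locally irregular subgraphs; that is, its edge set E can be partitioned into 4 sets E_1, E_2, E_3, E_4 such that each spanning subgraph (V, E_i) is locally irregular. -/
/-- The degree of a vertex `v` with respect to a set `E'` of edges:
the number of edges of `E'` incident with `v`. -/
noncomputable def edgeDeg {V : Type*} (E' : Set (Sym2 V)) (v : V) : ℕ :=
  {e ∈ E' | v ∈ e}.ncard

/-- A set of edges `E'` induces a locally irregular (spanning) subgraph: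
any two vertices joined by an edge of `E'` have distinct degrees w.r.t. `E'`. -/
def LocallyIrregular {V : Type*} (E' : Set (Sym2 V)) : Prop :=
  ∀ v w : V, s(v, w) ∈ E' → edgeDeg E' v ≠ edgeDeg E' w

/-!
Label the vertices uniformly at random with `k` labels. By Hoeffding's inequality and the Lovász
local lemma (and compactness, if the graph is infinite) some labelling is balanced: every label
occurs on about a `1/k` fraction of the neighbours of each vertex. Edges between two label classes
are coloured according to a fixed table on pairs of labels, which confines the degrees of the
vertices of one class in each colour to a short interval. The table (with `k = 14` and four colours)
is chosen so that, for each pair of distinct labels, these intervals are disjoint in every colour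
that an edge between the two classes can get. For each label one further colour is used inside the
class, and a vertex may switch some of its edges to two other classes to that colour. There are
enough of these edges to choose the numbers of switches greedily so that adjacent vertices of the
same class get distinct degrees in that colour.
-/

open Finset MeasureTheory ProbabilityTheory

section LocalLemma

variable {Ω ι : Type*} [MeasurableSpace Ω] {μ : Measure Ω}
  {A : ι → Set Ω} {D : ι → Finset ι} {p : ℝ} {Δ : ℕ}

theorem measureReal_biInter_compl_le [IsFiniteMeasure μ] [DecidableEq ι] (T S : Finset ι) :
    μ.real (⋂ j ∈ T \ S, (A j)ᶜ) ≤ μ.real (⋂ j ∈ T, (A j)ᶜ) +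
      ∑ j ∈ T ∩ S, μ.real (A j ∩ ⋂ k ∈ T \ S, (A k)ᶜ) := by
  have hcover : ⋂ j ∈ T \ S, (A j)ᶜ ⊆
      (⋂ j ∈ T, (A j)ᶜ) ∪ ⋃ j ∈ T ∩ S, A j ∩ ⋂ k ∈ T \ S, (A k)ᶜ := by
    intro ω hω
    by_cases hT : ω ∈ ⋂ j ∈ T, (A j)ᶜ
    · exact Or.inl hT
    · simp only [Set.mem_iInter, Set.mem_compl_iff, not_forall, not_not] at hT
      obtain ⟨j, hjT, hj⟩ := hT
      have hjS : j ∈ S := by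
        by_contra hjS
        exact Set.mem_iInter₂.mp hω j (mem_sdiff.mpr ⟨hjT, hjS⟩) hj
      exact Or.inr (Set.mem_iUnion₂.mpr ⟨j, mem_inter.mpr ⟨hjT, hjS⟩, hj, hω⟩)
  exact (measureReal_mono hcover).trans <| (measureReal_union_le _ _).trans <|
    add_le_add_right (measureReal_biUnion_finset_le _ _) _

/-- The bound `2p` on the conditional probability of `A i` given that no event of `T` occurs,
multiplied out because that condition is not yet known to have positive probability. -/
theorem measureReal_inter_biInter_compl_le [IsFiniteMeasure μ]
    (hp : ∀ i, μ.real (A i) ≤ p) (hD : ∀ i, #(D i) ≤ Δ) (hpΔ : 4 * p * Δ ≤ 1)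
    (hind : ∀ i (T : Finset ι), Disjoint T (D i) → IndepSet (A i) (⋂ j ∈ T, (A j)ᶜ) μ)
    (T : Finset ι) (i : ι) :
    μ.real (A i ∩ ⋂ j ∈ T, (A j)ᶜ) ≤ 2 * p * μ.real (⋂ j ∈ T, (A j)ᶜ) := by
  classical
  have hp0 : 0 ≤ p := measureReal_nonneg.trans (hp i)
  have hmul (i : ι) {T : Finset ι} (hT : Disjoint T (D i)) :
      μ.real (A i ∩ ⋂ j ∈ T, (A j)ᶜ) ≤ p * μ.real (⋂ j ∈ T, (A j)ᶜ) := by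
    rw [measureReal_def, (hind i T hT).measure_inter_eq_mul, ENNReal.toReal_mul]
    exact mul_le_mul_of_nonneg_right (hp i) measureReal_nonneg
  induction T using Finset.strongInduction generalizing i with
  | H T ih =>
    by_cases hdisj : Disjoint T (D i)
    · have := hmul i hdisj
      have : 0 ≤ p * μ.real (⋂ j ∈ T, (A j)ᶜ) := by positivity
      linarith
    set far := μ.real (⋂ j ∈ T \ D i, (A j)ᶜ)
    set all := μ.real (⋂ j ∈ T, (A j)ᶜ)
    have hlt : T \ D i ⊂ T :=
      sdiff_subset.ssubset_of_ne fun h ↦ hdisj (Finset.sdiff_eq_self_iff_disjoint.mp h)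
    have hsum : ∑ j ∈ T ∩ D i, μ.real (A j ∩ ⋂ k ∈ T \ D i, (A k)ᶜ) ≤ Δ * (2 * p * far) := by
      have hcard : (#(T ∩ D i) : ℝ) ≤ Δ := mod_cast (card_le_card inter_subset_right).trans (hD i)
      calc _ ≤ ∑ _j ∈ T ∩ D i, 2 * p * far := sum_le_sum fun j _ ↦ ih _ hlt j
        _ = #(T ∩ D i) * (2 * p * far) := by rw [sum_const, nsmul_eq_mul]
        _ ≤ Δ * (2 * p * far) := by gcongr
    have hhalf : far ≤ 2 * all := by
      have hcover : far ≤ all + _ := measureReal_biInter_compl_le T (D i)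
      have : 4 * p * Δ * far ≤ 1 * far := by gcongr
      linarith
    calc μ.real (A i ∩ ⋂ j ∈ T, (A j)ᶜ)
        ≤ μ.real (A i ∩ ⋂ j ∈ T \ D i, (A j)ᶜ) := measureReal_mono <|
          Set.inter_subset_inter_right _ <| Set.biInter_mono sdiff_subset fun _ _ ↦ subset_rfl
      _ ≤ p * far := hmul i sdiff_disjoint
      _ ≤ p * (2 * all) := by gcongr
      _ = 2 * p * all := by ring

/-- The symmetric Lovász local lemma. -/
theorem measureReal_biInter_compl_pos [IsProbabilityMeasure μ]
    (hp : ∀ i, μ.real (A i) ≤ p) (hD : ∀ i, #(D i) ≤ Δ) (hself : ∀ i, i ∈ D i)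
    (hpΔ : 4 * p * Δ ≤ 1)
    (hind : ∀ i (T : Finset ι), Disjoint T (D i) → IndepSet (A i) (⋂ j ∈ T, (A j)ᶜ) μ)
    (T : Finset ι) :
    0 < μ.real (⋂ j ∈ T, (A j)ᶜ) := by
  classical
  induction T using Finset.induction_on with
  | empty => simp
  | insert i T hi ih =>
    have hcond := measureReal_inter_biInter_compl_le hp hD hpΔ hind T i
    have hsplit := measureReal_biInter_compl_le (μ := μ) (A := A) (insert i T) {i}
    rw [sdiff_singleton_eq_erase, erase_insert hi, inter_singleton_of_mem (mem_insert_self i T),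
      sum_singleton] at hsplit
    have hp0 : 0 ≤ p := measureReal_nonneg.trans (hp i)
    have hΔ : (1 : ℝ) ≤ Δ := mod_cast (card_pos.mpr ⟨i, hself i⟩).trans_le (hD i)
    have : 4 * p ≤ 1 := by nlinarith
    nlinarith

end LocalLemma

section ProductMeasure

variable {ι : Type*} {X : ι → Type*}

theorem restrict_preimage_updateFinset_preimage [DecidableEq ι] (a : ∀ i, X i) {s : Finset ι}
    {E : Set (∀ i, X i)} (hE : DependsOn (· ∈ E) s) :
    s.restrict ⁻¹' (Function.updateFinset a s ⁻¹' E) = E := by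
  ext x
  refine iff_of_eq (hE fun i hi ↦ ?_)
  simp [Function.updateFinset, mem_coe.mp hi]

variable [∀ i, MeasurableSpace (X i)]

theorem measurableSet_of_dependsOn [∀ i, Countable (X i)] [∀ i, MeasurableSingletonClass (X i)]
    {s : Finset ι} {E : Set (∀ i, X i)} (hE : DependsOn (· ∈ E) s) : MeasurableSet E := by
  classical
  obtain rfl | ⟨a, -⟩ := E.eq_empty_or_nonempty
  · exact .empty
  · rw [← restrict_preimage_updateFinset_preimage a hE]
    exact measurable_restrict s .of_discrete

theorem indepSet_infinitePi_of_dependsOn (μ : ∀ i, Measure (X i)) [∀ i, IsProbabilityMeasure (μ i)]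
    {A B : Set (∀ i, X i)} (hA : MeasurableSet A) (hB : MeasurableSet B) {s t : Finset ι}
    (hAs : DependsOn (· ∈ A) s) (hBt : DependsOn (· ∈ B) t) (hst : Disjoint s t) :
    IndepSet A B (Measure.infinitePi μ) := by
  classical
  obtain ⟨a⟩ := nonempty_of_isProbabilityMeasure (Measure.infinitePi μ)
  rw [← restrict_preimage_updateFinset_preimage a hAs,
    ← restrict_preimage_updateFinset_preimage a hBt]
  have hind := (iIndepFun_infinitePi (P := μ) fun _ ↦ measurable_id).indepFun_finset s t hst
    fun i ↦ measurable_pi_apply i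
  exact (indepFun_iff_indepSet_preimage (measurable_restrict s) (measurable_restrict t)).mp hind
    _ _ (measurable_updateFinset hA) (measurable_updateFinset hB)

theorem measureReal_infinitePi_card_filter_ge_le {α : Type*} [MeasurableSpace α] (ν : Measure α)
    [IsProbabilityMeasure ν] {S : Set α} [DecidablePred (· ∈ S)] (hS : MeasurableSet S)
    (N : Finset ι) {ε : ℝ} (hε : 0 ≤ ε) :
    (Measure.infinitePi fun _ : ι ↦ ν).real {f | #N * ν.real S + ε ≤ #{u ∈ N | f u ∈ S}} ≤
      Real.exp (-2 * ε ^ 2 / #N) := by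
  let Y : α → ℝ := S.indicator 1
  have hY : Measurable Y := measurable_const.indicator hS
  have hYmean : ∫ x, Y x ∂ν = ν.real S := integral_indicator_one hS
  have hsubG (u : ι) : HasSubgaussianMGF (fun f : ι → α ↦ Y (f u) - ν.real S)
      ((‖(1 : ℝ) - 0‖₊ / 2) ^ 2) (Measure.infinitePi fun _ ↦ ν) := by
    have hmean : ∫ f : ι → α, Y (f u) ∂(Measure.infinitePi fun _ ↦ ν) = ν.real S := by
      rw [← integral_map (φ := fun f : ι → α ↦ f u) (measurable_pi_apply u).aemeasurable
        hY.aestronglyMeasurable, Measure.infinitePi_map_eval, hYmean]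
    rw [← hmean]
    refine hasSubgaussianMGF_of_mem_Icc (hY.comp (measurable_pi_apply u)).aemeasurable
      (ae_of_all _ fun f ↦ ?_)
    by_cases h : f u ∈ S <;> simp [Y, h]
  have hindep : iIndepFun (fun u (f : ι → α) ↦ Y (f u) - ν.real S) (Measure.infinitePi fun _ ↦ ν) :=
    iIndepFun_infinitePi (X := fun _ x ↦ Y x - ν.real S) fun _ ↦ hY.sub_const _
  have hsum (f : ι → α) :
      ∑ u ∈ N, (Y (f u) - ν.real S) = #{u ∈ N | f u ∈ S} - #N * ν.real S := by
    simp [Y, sum_sub_distrib, Set.indicator_apply]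
  have hoeffding := HasSubgaussianMGF.measure_sum_ge_le_of_iIndepFun hindep (s := N)
    (fun u _ ↦ hsubG u) hε
  simp only [hsum] at hoeffding
  have hvariance : 2 * ((∑ _u ∈ N, (‖(1 : ℝ) - 0‖₊ / 2) ^ 2 : NNReal) : ℝ) = #N / 2 := by
    rw [sum_const, nsmul_eq_mul]
    push_cast
    norm_num
    ring
  rw [hvariance, show -ε ^ 2 / (#N / 2 : ℝ) = -2 * ε ^ 2 / #N by ring] at hoeffding
  simpa only [le_sub_iff_add_le'] using hoeffding

end ProductMeasure

section Balanced

variable {V ι : Type*} [DecidableEq ι] (G : SimpleGraph V) [G.LocallyFinite]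

/-- The number of neighbours of `v` whose label under `f` lies in `S`. -/
def labelDegree (f : V → ι) (v : V) (S : Finset ι) : ℕ :=
  #{u ∈ G.neighborFinset v | f u ∈ S}

/-- A labelling `f` with `k` labels is balanced at `v` if every set `S` of labels occurs on fewer
than a `(#S + 1/4) / k` fraction of the neighbours of `v`; a uniformly random labelling has an
expected fraction of `#S / k`. -/
def IsBalancedAt [Fintype ι] (f : V → ι) (v : V) : Prop :=
  ∀ S : Finset ι, 4 * (Fintype.card ι * labelDegree G f v S) < (4 * #S + 1) * G.degree v

variable {G}

theorem labelDegree_congr {f g : V → ι} {v : V} (h : ∀ u ∈ G.neighborFinset v, f u = g u)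
    (S : Finset ι) : labelDegree G f v S = labelDegree G g v S := by
  exact congr_arg card (filter_congr fun u hu ↦ by rw [h u hu])

theorem labelDegree_add_compl [Fintype ι] (f : V → ι) (v : V) (S : Finset ι) :
    labelDegree G f v S + labelDegree G f v Sᶜ = G.degree v := by
  simp only [labelDegree, mem_compl]
  rw [card_filter_add_card_filter_not, G.card_neighborFinset_eq_degree]

theorem IsBalancedAt.lt_labelDegree [Fintype ι] {f : V → ι} {v : V} (hf : IsBalancedAt G f v)
    (S : Finset ι) :
    4 * #S * G.degree v < 4 * (Fintype.card ι * labelDegree G f v S) + G.degree v := by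
  have hcompl := hf Sᶜ
  have hcard : #Sᶜ + #S = Fintype.card ι := card_compl_add_card S
  have hdeg := labelDegree_add_compl (G := G) f v S
  nlinarith

theorem dependsOn_isBalancedAt [Fintype ι] (v : V) :
    DependsOn (fun f : V → ι ↦ IsBalancedAt G f v) (G.neighborFinset v) :=
  fun _ _ h ↦ by simp only [IsBalancedAt, labelDegree_congr h]

theorem indepSet_not_isBalancedAt [Fintype ι] [DecidableEq V] [MeasurableSpace ι]
    [MeasurableSingletonClass ι] (ν : Measure ι) [IsProbabilityMeasure ν] {v : V} {T : Finset V}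
    (hT : Disjoint (G.neighborFinset v) (T.biUnion fun w ↦ G.neighborFinset w)) :
    IndepSet {f : V → ι | ¬ IsBalancedAt G f v} (⋂ w ∈ T, {f | ¬ IsBalancedAt G f w}ᶜ)
      (Measure.infinitePi fun _ ↦ ν) := by
  have hv : DependsOn (· ∈ {f : V → ι | ¬ IsBalancedAt G f v}) (G.neighborFinset v) :=
    fun f g h ↦ congr_arg Not (dependsOn_isBalancedAt v h)
  have hT' : DependsOn (· ∈ ⋂ w ∈ T, {f : V → ι | ¬ IsBalancedAt G f w}ᶜ)
      (T.biUnion fun w ↦ G.neighborFinset w) := by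
    intro f g h
    simp only [Set.mem_iInter, Set.mem_compl_iff, Set.mem_ofPred_eq, not_not]
    exact pi_congr fun w ↦ pi_congr fun hw ↦ dependsOn_isBalancedAt w fun u hu ↦
      h u (mem_biUnion.mpr ⟨w, hw, hu⟩)
  exact indepSet_infinitePi_of_dependsOn _ (measurableSet_of_dependsOn hv)
    (measurableSet_of_dependsOn hT') hv hT' hT

theorem measureReal_labelDegree_ge_le [Fintype ι] [Nonempty ι] [MeasurableSpace ι]
    [MeasurableSingletonClass ι] (v : V) (S : Finset ι) :
    (Measure.infinitePi fun _ : V ↦ uniformOn (Set.univ : Set ι)).real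
        {f | (4 * #S + 1) * G.degree v ≤ 4 * (Fintype.card ι * labelDegree G f v S)} ≤
      Real.exp (-(G.degree v / (8 * Fintype.card ι ^ 2))) := by
  set k : ℝ := (Fintype.card ι : ℝ) with hk
  set d : ℝ := (G.degree v : ℝ) with hd
  have hk0 : 0 < k := Nat.cast_pos.mpr Fintype.card_pos
  have hmass : (uniformOn Set.univ).real (S : Set ι) = #S / k := by
    rw [measureReal_def, uniformOn_univ, Measure.count_apply_finset]
    simp [k]
  have hoeffding := measureReal_infinitePi_card_filter_ge_le (uniformOn Set.univ) S.measurableSet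
    (G.neighborFinset v) (ε := d / (4 * k)) (by positivity)
  have hexponent : -2 * (d / (4 * k)) ^ 2 / d = -(d / (8 * k ^ 2)) := by
    by_cases hd : d = 0
    · simp [hd]
    · field_simp
      norm_num
  rw [hmass, G.card_neighborFinset_eq_degree, hexponent] at hoeffding
  refine (measureReal_mono (fun f hf ↦ ?_) (measure_ne_top _ _)).trans hoeffding
  have hf : (4 * #S + 1) * d ≤ 4 * (k * labelDegree G f v S) := by
    rw [hk, hd]
    exact_mod_cast hf
  calc d * (#S / k) + d / (4 * k) = (4 * #S + 1) * d / (4 * k) := by field_simp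
    _ ≤ labelDegree G f v S := by rw [div_le_iff₀ (by positivity)]; linarith
    _ = _ := by rw [labelDegree]; congr

theorem measureReal_not_isBalancedAt_le [Fintype ι] [Nonempty ι] [MeasurableSpace ι]
    [MeasurableSingletonClass ι] (v : V) :
    (Measure.infinitePi fun _ : V ↦ uniformOn (Set.univ : Set ι)).real {f | ¬ IsBalancedAt G f v} ≤
      2 ^ Fintype.card ι * Real.exp (-(G.degree v / (8 * Fintype.card ι ^ 2))) := by
  have hcover : {f | ¬ IsBalancedAt G f v} ⊆ ⋃ S ∈ (univ : Finset (Finset ι)),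
      {f | (4 * #S + 1) * G.degree v ≤ 4 * (Fintype.card ι * labelDegree G f v S)} := by
    intro f hf
    simpa [IsBalancedAt] using hf
  calc _ ≤ _ := measureReal_mono hcover (measure_ne_top _ _)
    _ ≤ _ := measureReal_biUnion_finset_le _ _
    _ ≤ ∑ _S : Finset ι, Real.exp (-(G.degree v / (8 * Fintype.card ι ^ 2))) :=
      sum_le_sum fun S _ ↦ measureReal_labelDegree_ge_le v S
    _ = _ := by simp

theorem exists_forall_mem_isBalancedAt [Fintype ι] [Nonempty ι] {d : ℕ} (hd : 0 < d)
    (hG : G.IsRegularOfDegree d)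
    (hexp : 2 ^ (Fintype.card ι + 2) * (d : ℝ) ^ 2 ≤ Real.exp (d / (8 * Fintype.card ι ^ 2)))
    (T : Finset V) :
    ∃ f : V → ι, ∀ v ∈ T, IsBalancedAt G f v := by
  classical
  let _ : MeasurableSpace ι := ⊤
  let D (v : V) : Finset V := (G.neighborFinset v).biUnion fun u ↦ G.neighborFinset u
  have hD (v : V) : #(D v) ≤ d ^ 2 := by
    have hcard (u : V) : #(G.neighborFinset u) = d := by simp [hG.degree_eq]
    calc #(D v) ≤ #(G.neighborFinset v) * d := card_biUnion_le_card_mul _ _ _ fun u _ ↦ (hcard u).le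
      _ = d ^ 2 := by rw [hcard, sq]
  have hself (v : V) : v ∈ D v := by
    obtain ⟨u, hu⟩ := (G.degree_pos_iff_exists_adj v).mp (hd.trans_eq (hG v).symm)
    exact mem_biUnion.mpr ⟨u, by simpa using hu, by simpa using hu.symm⟩
  have hdisj {v : V} {T : Finset V} (hT : Disjoint T (D v)) :
      Disjoint (G.neighborFinset v) (T.biUnion fun w ↦ G.neighborFinset w) := by
    simp only [D, disjoint_left, mem_biUnion, not_exists, not_and] at hT ⊢
    intro u hvu w hw hwu
    exact hT hw u hvu (by simpa [G.adj_comm] using hwu)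
  have hp : 4 * (2 ^ Fintype.card ι * Real.exp (-(d / (8 * Fintype.card ι ^ 2)))) *
      ((d ^ 2 : ℕ) : ℝ) ≤ 1 := by
    rw [Real.exp_neg]
    calc _ = 2 ^ (Fintype.card ι + 2) * (d : ℝ) ^ 2 / Real.exp (d / (8 * Fintype.card ι ^ 2)) := by
          push_cast; ring
      _ ≤ 1 := div_le_one_of_le₀ hexp (Real.exp_pos _).le
  have hpos := measureReal_biInter_compl_pos
    (fun v ↦ (measureReal_not_isBalancedAt_le v).trans_eq (by rw [hG v])) hD hself hp
    (fun v T hT ↦ indepSet_not_isBalancedAt (uniformOn (Set.univ : Set ι)) (hdisj hT)) T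
  obtain ⟨f, hf⟩ := nonempty_of_measureReal_ne_zero hpos.ne'
  exact ⟨f, by simpa using hf⟩

theorem exists_forall_isBalancedAt [Fintype ι] [Nonempty ι] {d : ℕ} (hd : 0 < d)
    (hG : G.IsRegularOfDegree d)
    (hexp : 2 ^ (Fintype.card ι + 2) * (d : ℝ) ^ 2 ≤ Real.exp (d / (8 * Fintype.card ι ^ 2))) :
    ∃ f : V → ι, ∀ v, IsBalancedAt G f v := by
  classical
  choose g hg using exists_forall_mem_isBalancedAt (ι := ι) hd hG hexp
  obtain ⟨f, hf⟩ := rado_selection g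
  refine ⟨f, fun v ↦ ?_⟩
  obtain ⟨T, hT, hfg⟩ := hf (insert v (G.neighborFinset v))
  have hiff := dependsOn_isBalancedAt v fun u hu ↦ hfg u (mem_insert_of_mem hu)
  exact hiff.mpr (hg T v (hT (mem_insert_self _ _)))

end Balanced

theorem two_pow_sixteen_mul_sq_le_exp {d : ℝ} (hd : 51744 ≤ d) :
    2 ^ 16 * d ^ 2 ≤ Real.exp (d / 1568) := by
  set x := d / 51744
  have hd_eq : d = 51744 * x := by simp only [x]; ring
  have hx : 1 ≤ x := (one_le_div (by norm_num)).mpr hd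
  have hsq : x ^ 2 ≤ Real.exp (2 * (x - 1)) := by
    calc x ^ 2 ≤ Real.exp (x - 1) ^ 2 := by
          gcongr
          simpa using Real.add_one_le_exp (x - 1)
      _ = Real.exp (2 * (x - 1)) := by rw [← Real.exp_nat_mul]; norm_num
  have hbase : 2 ^ 16 * 51744 ^ 2 ≤ Real.exp 33 := by
    calc (2 : ℝ) ^ 16 * 51744 ^ 2 ≤ 2.7182818283 ^ 33 := by norm_num
      _ ≤ Real.exp 1 ^ 33 := by gcongr; exact Real.exp_one_gt_d9.le
      _ = Real.exp 33 := by rw [← Real.exp_nat_mul]; norm_num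
  calc 2 ^ 16 * d ^ 2 = 2 ^ 16 * 51744 ^ 2 * x ^ 2 := by rw [hd_eq]; ring
    _ ≤ Real.exp 33 * Real.exp (2 * (x - 1)) := by gcongr
    _ ≤ Real.exp (d / 1568) := by
      rw [← Real.exp_add, hd_eq]
      gcongr
      linarith [hx]

section ListColoring

variable {V α : Type*} {H : SimpleGraph V} [H.LocallyFinite]

theorem exists_coloring_mem_of_degree_lt_card {L : V → Finset α}
    (hL : ∀ v, H.degree v < #(L v)) : ∃ C : H.Coloring α, ∀ v, C v ∈ L v := by
  classical
  have hfree (v : V) (C : ∀ u, WellOrderingRel u v → α) :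
      ∃ a ∈ L v, ∀ u (hu : WellOrderingRel u v), H.Adj v u → C u hu ≠ a := by
    obtain ⟨a₀, -⟩ := card_pos.mp ((Nat.zero_le _).trans_lt (hL v))
    let C' (u : V) : α := if hu : WellOrderingRel u v then C u hu else a₀
    obtain ⟨a, haL, ha⟩ : ∃ a ∈ L v, a ∉ (H.neighborFinset v).image C' :=
      exists_mem_notMem_of_card_lt_card <| card_image_le.trans_lt (hL v)
    refine ⟨a, haL, fun u hu hvu hCu ↦ ha (mem_image.mpr ⟨u, by simpa using hvu, ?_⟩)⟩
    simpa [C', hu] using hCu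
  choose color hmem hne using hfree
  let C : V → α := IsWellFounded.fix WellOrderingRel color
  have hC (v : V) : C v = color v fun u _ ↦ C u := IsWellFounded.fix_eq _ _ _
  have hlt {u v : V} (huv : WellOrderingRel u v) (hadj : H.Adj v u) : C u ≠ C v := by
    rw [hC v]
    exact hne v (fun u _ ↦ C u) u huv hadj
  refine ⟨.mk C fun {v w} hvw ↦ ?_, fun v ↦ (hC v).symm ▸ hmem v _⟩
  obtain h | rfl | h := trichotomous_of WellOrderingRel v w
  · exact hlt h hvw.symm
  · exact absurd hvw (H.irrefl)
  · exact (hlt h hvw).symm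

theorem exists_le_degree_add_ne (H : SimpleGraph V) [H.LocallyFinite] (b : V → ℕ) :
    ∃ x : V → ℕ, (∀ v, x v ≤ H.degree v) ∧ ∀ v w, H.Adj v w → b v + x v ≠ b w + x w := by
  obtain ⟨C, hC⟩ := exists_coloring_mem_of_degree_lt_card (H := H)
    (L := fun v ↦ Icc (b v) (b v + H.degree v)) fun v ↦ by simp [add_assoc]
  simp only [mem_Icc] at hC
  refine ⟨fun v ↦ C v - b v, fun v ↦ by grind, fun v w hvw ↦ ?_⟩
  simpa only [Nat.add_sub_cancel' (hC _).1] using C.valid hvw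

end ListColoring

section ColorDegree

variable {V κ : Type*} (G : SimpleGraph V) [G.LocallyFinite] [DecidableEq κ]

/-- The number of neighbours `u` of `v` for which the pair `v, u` has colour `c`. -/
def colorDegree (C : V → V → κ) (v : V) (c : κ) : ℕ :=
  #{u ∈ G.neighborFinset v | C v u = c}

theorem edgeDeg_colorClass (C : Sym2 V → κ) (c : κ) (v : V) :
    edgeDeg {e | e ∈ G.edgeSet ∧ C e = c} v = colorDegree G (fun v u ↦ C s(v, u)) v c := by
  rw [edgeDeg, colorDegree, ← Set.ncard_coe_finset,
    ← Set.ncard_image_of_injective (f := fun u ↦ s(v, u)) _ fun _ _ ↦ Sym2.congr_right.mp]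
  congr 1
  ext e
  simp only [Set.mem_ofPred_eq, Set.mem_image, coe_filter, SimpleGraph.mem_neighborFinset]
  constructor
  · rintro ⟨⟨he, hc⟩, u, rfl⟩
    exact ⟨u, ⟨he, hc⟩, rfl⟩
  · rintro ⟨u, ⟨hu, hc⟩, rfl⟩
    exact ⟨⟨hu, hc⟩, Sym2.mem_mk_left v u⟩

end ColorDegree

section WithinClasses

variable {V ι : Type*} (G : SimpleGraph V) (f : V → ι)

/-- The subgraph of `G` formed by the edges whose ends have the same label under `f`. -/
def withinClasses : SimpleGraph V where
  Adj v w := G.Adj v w ∧ f v = f w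
  symm := ⟨fun _ _ h ↦ ⟨h.1.symm, h.2.symm⟩⟩
  loopless := ⟨fun _ h ↦ G.irrefl h.1⟩

variable [DecidableEq ι] [G.LocallyFinite]

instance : (withinClasses G f).LocallyFinite := fun v ↦
  .ofFinset {u ∈ G.neighborFinset v | f u ∈ ({f v} : Finset ι)} fun u ↦ by
    simp [withinClasses, eq_comm]

theorem degree_withinClasses (v : V) : (withinClasses G f).degree v = labelDegree G f v {f v} := by
  rw [← SimpleGraph.card_neighborSet_eq_degree]
  exact Fintype.card_ofFinset _ _

end WithinClasses

/-- A rule for colouring the edges of a vertex-labelled graph. Of two labels, one may *control* the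
other; a vertex then chooses the colours of its edges to vertices with a label controlled by its own
one. All other edges are coloured according to the labels of their ends. -/
structure LabelScheme (ι κ : Type*) where
  /-- The colour of the edges between two labels neither of which controls the other. -/
  fixedColor : ι → ι → κ
  /-- The labels controlled by a given label. -/
  controls : ι → Finset ι
  /-- The colour that a vertex gives to an edge under its control unless it decides to switch it to
  the colour of the edges within its label class. -/
  baseColor : ι → κ

namespace LabelScheme

variable {V ι κ : Type*} [DecidableEq ι] [DecidableEq κ] (R : LabelScheme ι κ)

/-- The colour of the edges within a label class, to which vertices of this class may also switch
edges under their control. -/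
def innerColor (j : ι) : κ := R.fixedColor j j

/-- The set of colours that an edge between the labels `j` and `l` can receive. -/
def palette (j l : ι) : Finset κ :=
  if l ∈ R.controls j then {R.innerColor j, R.baseColor j}
  else if j ∈ R.controls l then {R.innerColor l, R.baseColor l}
  else {R.fixedColor j l}

section Degrees

variable [Fintype ι]

/-- The labels `l` such that all edges between `j` and `l` have colour `c`. -/
def certainLabels (j : ι) (c : κ) : Finset ι := {l | R.palette j l = {c}}

/-- The labels `l` such that edges between `j` and `l` may have colour `c`. -/
def possibleLabels (j : ι) (c : κ) : Finset ι := {l | c ∈ R.palette j l}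

/-- Lower bound for the degree in colour `c` of a vertex with label `j`, up to the balancedness
error, in units of the average size of the set of its neighbours with a given label. A vertex
switches at most one such unit of edges away from its base colour. -/
def minDegree (j : ι) (c : κ) : ℕ :=
  #(R.certainLabels j c) + if c = R.baseColor j then #(R.controls j) - 1 else 0

/-- Upper bound for the degree in colour `c` of a vertex with label `j`, in the units and with the
error of `LabelScheme.minDegree`. -/
def maxDegree (j : ι) (c : κ) : ℕ :=
  if c = R.innerColor j then #(R.certainLabels j c) + 1 else #(R.possibleLabels j c)

/-- The conditions on a label scheme under which it can be used to decompose regular graphs into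
locally irregular subgraphs. The last one makes the degrees in any possible colour of an edge
between two different labels distinct. -/
structure IsSeparating : Prop where
  fixedColor_comm (j l : ι) : R.fixedColor j l = R.fixedColor l j
  controls_asymm {j l : ι} : l ∈ R.controls j → j ∉ R.controls l
  two_le_card_controls (j : ι) : 2 ≤ #(R.controls j)
  innerColor_ne_baseColor (j : ι) : R.innerColor j ≠ R.baseColor j
  innerColor_notMem_palette {j l : ι} : j ∈ R.controls l → R.innerColor j ∉ R.palette j l
  separated {j l : ι} {c : κ} : j ≠ l → c ∈ R.palette j l →
    R.maxDegree j c < R.minDegree l c ∨ R.maxDegree l c < R.minDegree j c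

variable {R} in
theorem IsSeparating.labelDegree_self_le_labelDegree_controls (hR : R.IsSeparating)
    {G : SimpleGraph V} [G.LocallyFinite] {f : V → ι} {v : V} (hf : IsBalancedAt G f v) :
    labelDegree G f v {f v} ≤ labelDegree G f v (R.controls (f v)) := by
  have hclass := hf {f v}
  rw [card_singleton] at hclass
  have hctrl := hf.lt_labelDegree (R.controls (f v))
  have := Nat.mul_le_mul_right (G.degree v) (hR.two_le_card_controls (f v))
  exact (lt_of_mul_lt_mul_left (a := Fintype.card ι) (by linarith) (Nat.zero_le _)).le

end Degrees

section EdgeColor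

variable [DecidableEq V] (f : V → ι) (X : V → Finset V)

/-- The colour of the edge `vw` of a graph with vertex labelling `f`, if every vertex `v` switches
those of the edges under its control that lead to `X v`. -/
def edgeColor (v w : V) : κ :=
  if f w ∈ R.controls (f v) then if w ∈ X v then R.innerColor (f v) else R.baseColor (f v)
  else if f v ∈ R.controls (f w) then if v ∈ X w then R.innerColor (f w) else R.baseColor (f w)
  else R.fixedColor (f v) (f w)

variable {R f X}

variable (R f X) in
theorem edgeColor_mem_palette (v w : V) : R.edgeColor f X v w ∈ R.palette (f v) (f w) := by
  unfold edgeColor palette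
  split_ifs <;> simp

variable [Fintype ι]

theorem mem_certainLabels {j l : ι} {c : κ} : l ∈ R.certainLabels j c ↔ R.palette j l = {c} := by
  simp [certainLabels]

theorem edgeColor_eq_of_mem_certainLabels {v w : V} {c : κ}
    (h : f w ∈ R.certainLabels (f v) c) : R.edgeColor f X v w = c := by
  have hmem := R.edgeColor_mem_palette f X v w
  rwa [mem_certainLabels.mp h, mem_singleton] at hmem

theorem IsSeparating.edgeColor_comm (hR : R.IsSeparating) (v w : V) :
    R.edgeColor f X v w = R.edgeColor f X w v := by
  have hasymm := hR.controls_asymm (j := f v) (l := f w)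
  have hcomm := hR.fixedColor_comm (f v) (f w)
  unfold edgeColor
  split_ifs <;> simp_all

theorem IsSeparating.notMem_controls_self (hR : R.IsSeparating) (j : ι) : j ∉ R.controls j :=
  fun h ↦ hR.controls_asymm h h

theorem IsSeparating.disjoint_certainLabels_controls (hR : R.IsSeparating) (j : ι) (c : κ) :
    Disjoint (R.certainLabels j c) (R.controls j) := by
  rw [disjoint_left]
  intro l hl hctrl
  have hpair : {R.innerColor j, R.baseColor j} = ({c} : Finset κ) := by
    rw [← mem_certainLabels.mp hl, palette, if_pos hctrl]
  have hcard := card_pair (hR.innerColor_ne_baseColor j)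
  simp [hpair] at hcard

theorem IsSeparating.edgeColor_eq_innerColor_iff (hR : R.IsSeparating) {v w : V}
    (hX : w ∈ X v → f w ∈ R.controls (f v)) :
    R.edgeColor f X v w = R.innerColor (f v) ↔
      f w ∈ R.certainLabels (f v) (R.innerColor (f v)) ∨ w ∈ X v := by
  by_cases hvw : f w ∈ R.controls (f v)
  · have hcertain := disjoint_right.mp
      (hR.disjoint_certainLabels_controls (f v) (R.innerColor (f v))) hvw
    have hne := (hR.innerColor_ne_baseColor (f v)).symm
    simp [edgeColor, hvw, hcertain, hne]
  by_cases hwv : f v ∈ R.controls (f w)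
  · have hpalette := hR.innerColor_notMem_palette hwv
    have hcolor : R.edgeColor f X v w ≠ R.innerColor (f v) :=
      fun h ↦ hpalette (h ▸ R.edgeColor_mem_palette f X v w)
    have hcertain : f w ∉ R.certainLabels (f v) (R.innerColor (f v)) :=
      fun h ↦ hcolor (edgeColor_eq_of_mem_certainLabels h)
    simp [hcolor, hcertain, mt hX hvw]
  · simp [edgeColor, mem_certainLabels, palette, hvw, hwv, mt hX hvw]

theorem IsSeparating.edgeColor_of_label_eq (hR : R.IsSeparating) {v w : V} (h : f v = f w) :
    R.edgeColor f X v w = R.innerColor (f v) := by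
  simp [edgeColor, innerColor, ← h, hR.notMem_controls_self]

section ColorDegree

variable {G : SimpleGraph V} [G.LocallyFinite] {v : V}

theorem IsSeparating.colorDegree_innerColor (hR : R.IsSeparating)
    (hX : X v ⊆ {u ∈ G.neighborFinset v | f u ∈ R.controls (f v)}) :
    colorDegree G (R.edgeColor f X) v (R.innerColor (f v)) =
      labelDegree G f v (R.certainLabels (f v) (R.innerColor (f v))) + #(X v) := by
  classical
  have hdisj : Disjoint
      {u ∈ G.neighborFinset v | f u ∈ R.certainLabels (f v) (R.innerColor (f v))} (X v) := by
    refine disjoint_left.mpr fun u hu huX ↦ ?_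
    exact disjoint_left.mp (hR.disjoint_certainLabels_controls _ _) (mem_filter.mp hu).2
      (mem_filter.mp (hX huX)).2
  rw [labelDegree, colorDegree, ← card_union_of_disjoint hdisj]
  congr 1
  ext u
  have hcolor := hR.edgeColor_eq_innerColor_iff (f := f) (X := X) (v := v) (w := u)
    fun hu ↦ (mem_filter.mp (hX hu)).2
  have hadj : u ∈ X v → u ∈ G.neighborFinset v := fun hu ↦ (mem_filter.mp (hX hu)).1
  simp only [mem_filter, mem_union, hcolor]
  tauto

variable (R f X G v) in
theorem labelDegree_certainLabels_le (c : κ) :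
    labelDegree G f v (R.certainLabels (f v) c) ≤ colorDegree G (R.edgeColor f X) v c := by
  refine card_le_card fun u hu ↦ ?_
  rw [mem_filter] at hu ⊢
  exact ⟨hu.1, edgeColor_eq_of_mem_certainLabels hu.2⟩

variable (R f X G v) in
theorem labelDegree_certainLabels_union_controls_le :
    labelDegree G f v (R.certainLabels (f v) (R.baseColor (f v)) ∪ R.controls (f v)) ≤
      colorDegree G (R.edgeColor f X) v (R.baseColor (f v)) + #(X v) := by
  classical
  refine (card_le_card fun u hu ↦ ?_).trans (card_union_le _ _)
  simp only [mem_filter, mem_union] at hu ⊢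
  obtain ⟨hadj, hu | hu⟩ := hu
  · exact Or.inl ⟨hadj, edgeColor_eq_of_mem_certainLabels hu⟩
  · by_cases huX : u ∈ X v
    · exact Or.inr huX
    · exact Or.inl ⟨hadj, by simp [edgeColor, hu, huX]⟩

variable (R f X G v) in
theorem colorDegree_le_labelDegree_possibleLabels (c : κ) :
    colorDegree G (R.edgeColor f X) v c ≤ labelDegree G f v (R.possibleLabels (f v) c) := by
  refine card_le_card fun u hu ↦ ?_
  rw [mem_filter] at hu ⊢
  simp only [possibleLabels, mem_filter_univ]
  exact ⟨hu.1, hu.2 ▸ R.edgeColor_mem_palette f X v u⟩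

theorem IsSeparating.colorDegree_lt (hR : R.IsSeparating) (hf : IsBalancedAt G f v)
    (hX : X v ⊆ {u ∈ G.neighborFinset v | f u ∈ R.controls (f v)})
    (hXcard : #(X v) ≤ labelDegree G f v {f v}) (c : κ) :
    2 * (Fintype.card ι * colorDegree G (R.edgeColor f X) v c) <
      (2 * R.maxDegree (f v) c + 1) * G.degree v := by
  unfold maxDegree
  split_ifs with hc
  · subst hc
    rw [hR.colorDegree_innerColor hX]
    have hcertain := hf (R.certainLabels (f v) (R.innerColor (f v)))
    have hclass := hf {f v}
    rw [card_singleton] at hclass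
    have := Nat.mul_le_mul_left (Fintype.card ι) hXcard
    linarith
  · have hpossible := hf (R.possibleLabels (f v) c)
    have := Nat.mul_le_mul_left (Fintype.card ι)
      (R.colorDegree_le_labelDegree_possibleLabels f X G v c)
    linarith

theorem IsSeparating.lt_colorDegree (hR : R.IsSeparating) (hf : IsBalancedAt G f v)
    (hXcard : #(X v) ≤ labelDegree G f v {f v}) (c : κ) :
    2 * R.minDegree (f v) c * G.degree v <
      2 * (Fintype.card ι * colorDegree G (R.edgeColor f X) v c) + G.degree v := by
  unfold minDegree
  split_ifs with hc
  · subst hc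
    have hunion := hf.lt_labelDegree (R.certainLabels (f v) (R.baseColor (f v)) ∪ R.controls (f v))
    rw [card_union_of_disjoint (hR.disjoint_certainLabels_controls _ _)] at hunion
    have hclass := hf {f v}
    rw [card_singleton] at hclass
    have := Nat.mul_le_mul_left (Fintype.card ι) <|
      (R.labelDegree_certainLabels_union_controls_le f X G v).trans (Nat.add_le_add_left hXcard _)
    obtain ⟨m, hm⟩ := Nat.exists_eq_add_of_le' (hR.two_le_card_controls (f v))
    rw [hm] at hunion ⊢
    simp only [Nat.add_succ_sub_one]
    linarith
  · have hcertain := hf.lt_labelDegree (R.certainLabels (f v) c)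
    have := Nat.mul_le_mul_left (Fintype.card ι)
      (R.labelDegree_certainLabels_le f X G v c)
    linarith

theorem IsSeparating.colorDegree_lt_colorDegree (hR : R.IsSeparating) {w : V}
    (hv : IsBalancedAt G f v) (hw : IsBalancedAt G f w) (hdeg : G.degree v = G.degree w)
    (hX : X v ⊆ {u ∈ G.neighborFinset v | f u ∈ R.controls (f v)})
    (hXv : #(X v) ≤ labelDegree G f v {f v}) (hXw : #(X w) ≤ labelDegree G f w {f w}) {c : κ}
    (hc : R.maxDegree (f v) c < R.minDegree (f w) c) :
    colorDegree G (R.edgeColor f X) v c < colorDegree G (R.edgeColor f X) w c := by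
  have hupper := hR.colorDegree_lt hv hX hXv c
  have hlower := hR.lt_colorDegree hw hXw c
  rw [hdeg] at hupper
  have := Nat.mul_le_mul_right (G.degree w) (Nat.succ_le_of_lt hc)
  exact lt_of_mul_lt_mul_left (a := Fintype.card ι) (by linarith) (Nat.zero_le _)

end ColorDegree
end EdgeColor

section Decomposition

variable [Fintype ι] {R} {G : SimpleGraph V} [G.LocallyFinite] {f : V → ι} {d : ℕ}

/-- Vertices with the same label are distinguished by the numbers of edges they switch, vertices
with different labels by separation. -/
theorem IsSeparating.exists_colorDegree_ne (hR : R.IsSeparating)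
    (hG : G.IsRegularOfDegree d) (hf : ∀ v, IsBalancedAt G f v) :
    ∃ C : V → V → κ, (∀ v w, C v w = C w v) ∧
      ∀ v w, G.Adj v w → colorDegree G C v (C v w) ≠ colorDegree G C w (C v w) := by
  classical
  obtain ⟨x, hxle, hx⟩ := exists_le_degree_add_ne (withinClasses G f)
    fun v ↦ labelDegree G f v (R.certainLabels (f v) (R.innerColor (f v)))
  simp only [degree_withinClasses] at hxle
  have hexists (v : V) : ∃ X ⊆ {u ∈ G.neighborFinset v | f u ∈ R.controls (f v)}, #X = x v :=
    exists_subset_card_eq ((hxle v).trans (hR.labelDegree_self_le_labelDegree_controls (hf v)))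
  choose X hX hXx using hexists
  have hXcard (v : V) : #(X v) ≤ labelDegree G f v {f v} := (hXx v).trans_le (hxle v)
  refine ⟨R.edgeColor f X, hR.edgeColor_comm, fun v w hvw ↦ ?_⟩
  by_cases hlabel : f v = f w
  · rw [hR.edgeColor_of_label_eq hlabel, hR.colorDegree_innerColor (hX v), hlabel,
      hR.colorDegree_innerColor (hX w), hXx, hXx, ← hlabel]
    simpa only [hlabel] using hx v w ⟨hvw, hlabel⟩
  · obtain h | h := hR.separated hlabel (R.edgeColor_mem_palette f X v w)
    · exact (hR.colorDegree_lt_colorDegree (hf v) (hf w) ((hG v).trans (hG w).symm) (hX v)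
        (hXcard v) (hXcard w) h).ne
    · exact (hR.colorDegree_lt_colorDegree (hf w) (hf v) ((hG w).trans (hG v).symm) (hX w)
        (hXcard w) (hXcard v) h).ne'

theorem IsSeparating.exists_locallyIrregular [Nonempty ι] (hR : R.IsSeparating)
    (hd : 0 < d) (hG : G.IsRegularOfDegree d)
    (hexp : 2 ^ (Fintype.card ι + 2) * (d : ℝ) ^ 2 ≤ Real.exp (d / (8 * Fintype.card ι ^ 2))) :
    ∃ C : Sym2 V → κ, ∀ c, LocallyIrregular {e | e ∈ G.edgeSet ∧ C e = c} := by
  obtain ⟨f, hf⟩ := exists_forall_isBalancedAt (ι := ι) hd hG hexp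
  obtain ⟨C, hcomm, hC⟩ := hR.exists_colorDegree_ne hG hf
  refine ⟨Sym2.lift ⟨C, hcomm⟩, ?_⟩
  rintro _ v w ⟨hvw, rfl⟩
  rw [edgeDeg_colorClass, edgeDeg_colorClass]
  exact hC v w hvw

end Decomposition

end LabelScheme

/-- A label scheme found by computer search; only its separation matters. The entries of
`fixedColor` at pairs of labels one of which controls the other are irrelevant and set to `0`. -/
def fourColorScheme : LabelScheme (Fin 14) (Fin 4) where
  fixedColor :=
    ![![2, 0, 0, 2, 3, 2, 0, 0, 2, 1, 1, 1, 2, 1],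
      ![0, 3, 1, 1, 0, 0, 2, 0, 1, 1, 1, 0, 0, 0],
      ![0, 1, 3, 1, 0, 2, 2, 0, 2, 0, 1, 0, 0, 0],
      ![2, 1, 1, 2, 0, 0, 0, 3, 2, 0, 1, 1, 1, 0],
      ![3, 0, 0, 0, 1, 0, 0, 1, 0, 1, 1, 0, 3, 0],
      ![2, 0, 2, 0, 0, 0, 2, 2, 0, 0, 0, 2, 2, 0],
      ![0, 2, 2, 0, 0, 2, 3, 0, 2, 2, 0, 0, 0, 0],
      ![0, 0, 0, 3, 1, 2, 0, 1, 0, 0, 3, 0, 3, 0],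
      ![2, 1, 2, 2, 0, 0, 2, 0, 3, 0, 0, 2, 2, 0],
      ![1, 1, 0, 0, 1, 0, 2, 0, 0, 2, 1, 2, 1, 0],
      ![1, 1, 1, 1, 1, 0, 0, 3, 0, 1, 1, 1, 1, 0],
      ![1, 0, 0, 1, 0, 2, 0, 0, 2, 2, 1, 3, 2, 0],
      ![2, 0, 0, 1, 3, 2, 0, 3, 2, 1, 1, 2, 1, 0],
      ![1, 0, 0, 0, 0, 0, 0, 0, 0, 0, 0, 0, 0, 3]]
  controls := ![{1, 2}, {4, 7}, {4, 7}, {5, 13}, {3, 5}, {10, 13}, {4, 7},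
    {0, 9}, {4, 7}, {5, 8}, {6, 8}, {4, 7}, {6, 13}, {4, 7}]
  baseColor := ![0, 0, 0, 1, 3, 2, 0, 3, 2, 1, 2, 2, 0, 0]

theorem fourColorScheme_isSeparating : fourColorScheme.IsSeparating where
  fixedColor_comm := by decide +kernel
  controls_asymm := by decide +kernel
  two_le_card_controls := by decide +kernel
  innerColor_ne_baseColor := by decide +kernel
  innerColor_notMem_palette := by decide +kernel
  separated := by decide +kernel

theorem regular_decomposable_four_locally_irregular_general {V : Type*}
    {G : SimpleGraph V} [G.LocallyFinite] {d : ℕ} (hd : 51744 ≤ d)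
    (hG : G.IsRegularOfDegree d) :
    ∃ C : Sym2 V → Fin 4, ∀ c, LocallyIrregular {e | e ∈ G.edgeSet ∧ C e = c} := by
  refine fourColorScheme_isSeparating.exists_locallyIrregular (by lia) hG ?_
  convert two_pow_sixteen_mul_sq_le_exp (d := d) (mod_cast hd) using 3 <;> norm_num

/-- Every `d`-regular finite simple graph with `d ≥ 54000` is decomposable into
4 locally irregular subgraphs. -/
theorem regular_decomposable_four_locally_irregular
    {V : Type*} [Fintype V] (G : SimpleGraph V) [DecidableRel G.Adj]
    (d : ℕ) (hd : 54000 ≤ d) (hreg : G.IsRegularOfDegree d) :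
    ∃ c : Sym2 V → Fin 4,
      ∀ i : Fin 4, LocallyIrregular {e | e ∈ G.edgeSet ∧ c e = i} :=
  regular_decomposable_four_locally_irregular_general (by lia) hreg
end

section
/- Every d-regular finite simple graph with d ≥ 10^7 is decomposable into 3 locally irregular subgraphs; that is, its edge set E can be partitioned into 3 sets E_1, E_2, E_3 such that each spanning subgraph (V, E_i) is locally irregular. -/
/-!
Label the vertices by a finite set `L` such that, in every neighbourhood, every subset of `L`
occurs almost as often as its density suggests; Hoeffding's inequality and the local lemma provide
such a labelling when the degree is large. The labels of its ends prescribe the treatment of an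
edge, following a scheme on `L` found by computer search. For most edges this already forces
the two ends to have distinct degrees in the colour of the edge. The exceptions are the `soft`
edges: their ends have the same home colour, which is also the colour of the edge. To separate
them, each vertex tunes its degree in its home colour by means of its `lead` edges `vw`, which
receive either the home colour of `v` or the third colour. Neither is the home colour of `w`, so
these choices do not interfere, and a greedy choice of the home degrees suffices.
-/

open Finset MeasureTheory ProbabilityTheory

section LocalLemma

variable {Ω V : Type*}

/-- The event that none of the events `A v` with `v ∈ T` occurs. -/
def avoiding (A : V → Set Ω) (T : Finset V) : Set Ω := ⋂ v ∈ T, (A v)ᶜ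

lemma avoiding_empty (A : V → Set Ω) : avoiding A ∅ = Set.univ := by simp [avoiding]

lemma mem_avoiding {A : V → Set Ω} {T : Finset V} {ω : Ω} :
    ω ∈ avoiding A T ↔ ∀ v ∈ T, ω ∉ A v := by
  simp [avoiding]

variable [MeasurableSpace Ω] {μ : Measure Ω} [IsProbabilityMeasure μ]

lemma measureReal_avoiding_le_add_sum [DecidableEq V] (A : V → Set Ω) (S T : Finset V) :
    μ.real (avoiding A T) ≤
      μ.real (avoiding A (S ∪ T)) + ∑ v ∈ S, μ.real (A v ∩ avoiding A T) := by
  have hcover : avoiding A T ⊆ avoiding A (S ∪ T) ∪ ⋃ v ∈ S, A v ∩ avoiding A T := by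
    intro ω hω
    simp only [Set.mem_union, Set.mem_iUnion, Set.mem_inter_iff, mem_avoiding, mem_union] at hω ⊢
    grind
  calc μ.real (avoiding A T)
      ≤ μ.real (avoiding A (S ∪ T) ∪ ⋃ v ∈ S, A v ∩ avoiding A T) := measureReal_mono hcover
    _ ≤ μ.real (avoiding A (S ∪ T)) + μ.real (⋃ v ∈ S, A v ∩ avoiding A T) :=
        measureReal_union_le _ _
    _ ≤ _ := by gcongr; exact measureReal_biUnion_finset_le _ _

variable {A : V → Set Ω} {Γ : V → Finset V} {D : ℕ} {p : ℝ}

lemma nonneg_of_measureReal_inter_avoiding_le [Nonempty V]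
    (hA : ∀ v T, Disjoint T (Γ v) → μ.real (A v ∩ avoiding A T) ≤ p * μ.real (avoiding A T)) :
    0 ≤ p := by
  obtain ⟨v⟩ := ‹Nonempty V›
  simpa [avoiding_empty] using measureReal_nonneg.trans (hA v ∅ (disjoint_empty_left _))

lemma measureReal_inter_avoiding_le_two_mul (hΓ : ∀ v, #(Γ v) ≤ D) (hpD : 4 * p * D ≤ 1)
    (hA : ∀ v T, Disjoint T (Γ v) → μ.real (A v ∩ avoiding A T) ≤ p * μ.real (avoiding A T))
    (T : Finset V) (v : V) : μ.real (A v ∩ avoiding A T) ≤ 2 * p * μ.real (avoiding A T) := by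
  classical
  have hp : 0 ≤ p := have : Nonempty V := ⟨v⟩; nonneg_of_measureReal_inter_avoiding_le hA
  induction T using Finset.strongInduction generalizing v with
  | H T ih =>
    have hsub : avoiding A T ⊆ avoiding A (T \ Γ v) :=
      Set.biInter_subset_biInter_left fun _ hw ↦ (mem_sdiff.1 hw).1
    have hfar : μ.real (A v ∩ avoiding A T) ≤ p * μ.real (avoiding A (T \ Γ v)) :=
      (measureReal_mono (Set.inter_subset_inter_right _ hsub)).trans (hA v _ sdiff_disjoint)
    have hhalf : μ.real (avoiding A (T \ Γ v)) ≤ 2 * μ.real (avoiding A T) := by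
      obtain hΓT | hΓT := (T ∩ Γ v).eq_empty_or_nonempty
      · rw [sdiff_eq_self_of_disjoint (disjoint_iff_inter_eq_empty.2 hΓT)]
        linarith [measureReal_nonneg (μ := μ) (s := avoiding A T)]
      have hlt : T \ Γ v ⊂ T := by
        rw [← sdiff_inter_self_left]
        exact sdiff_ssubset inter_subset_left hΓT
      have hsum : ∑ w ∈ T ∩ Γ v, μ.real (A w ∩ avoiding A (T \ Γ v)) ≤
          D * (2 * p * μ.real (avoiding A (T \ Γ v))) :=
        calc _ ≤ #(T ∩ Γ v) • (2 * p * μ.real (avoiding A (T \ Γ v))) :=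
              sum_le_card_nsmul _ _ _ fun w _ ↦ ih _ hlt w
          _ ≤ _ := by
              rw [nsmul_eq_mul]
              gcongr
              exact (card_le_card inter_subset_right).trans (hΓ v)
      have hunion := measureReal_avoiding_le_add_sum (μ := μ) A (T ∩ Γ v) (T \ Γ v)
      rw [union_comm, sdiff_union_inter] at hunion
      nlinarith [measureReal_nonneg (μ := μ) (s := avoiding A (T \ Γ v))]
    nlinarith

/-- The symmetric Lovász local lemma, lopsided form. -/
theorem measureReal_avoiding_pos (hD : 0 < D) (hΓ : ∀ v, #(Γ v) ≤ D) (hpD : 4 * p * D ≤ 1)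
    (hA : ∀ v T, Disjoint T (Γ v) → μ.real (A v ∩ avoiding A T) ≤ p * μ.real (avoiding A T))
    (T : Finset V) : 0 < μ.real (avoiding A T) := by
  classical
  induction T using Finset.induction_on with
  | empty => simp [avoiding_empty]
  | insert v T _ ih =>
    have hp : 0 ≤ p := have : Nonempty V := ⟨v⟩; nonneg_of_measureReal_inter_avoiding_le hA
    have hp4 : 4 * p ≤ 1 := (le_mul_of_one_le_right (by positivity) (mod_cast hD)).trans hpD
    have hunion := measureReal_avoiding_le_add_sum (μ := μ) A {v} T
    rw [sum_singleton, singleton_union] at hunion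
    have hv := measureReal_inter_avoiding_le_two_mul hΓ hpD hA T v
    nlinarith

/-- The symmetric Lovász local lemma, variable form. -/
theorem exists_forall_notMem_of_iIndep {ι : Type*} [Finite V] {m : ι → MeasurableSpace Ω}
    (hm : ∀ i, m i ≤ ‹MeasurableSpace Ω›) (hind : iIndep m μ) {S : V → Set ι}
    (hAm : ∀ v, MeasurableSet[⨆ i ∈ S v, m i] (A v)) (hAp : ∀ v, μ.real (A v) ≤ p) (hD : 0 < D)
    (hS : ∀ v, {w | ¬ Disjoint (S w) (S v)}.ncard ≤ D) (hpD : 4 * p * D ≤ 1) :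
    ∃ ω, ∀ v, ω ∉ A v := by
  classical
  have := Fintype.ofFinite V
  have hΓ (v : V) : #{w | ¬ Disjoint (S w) (S v)} ≤ D := by
    simpa only [Set.ncard_eq_toFinset_card', Set.toFinset_ofPred] using hS v
  have hlocal (v : V) (T : Finset V)
      (hT : Disjoint T ({w | ¬ Disjoint (S w) (S v)} : Finset V)) :
      μ.real (A v ∩ avoiding A T) ≤ p * μ.real (avoiding A T) := by
    have hTS : Disjoint (S v) (⋃ w ∈ T, S w) := by
      simpa [disjoint_left, disjoint_comm] using hT
    have hTm : MeasurableSet[⨆ i ∈ ⋃ w ∈ T, S w, m i] (avoiding A T) :=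
      T.measurableSet_biInter fun w hw ↦
        have hle : ⨆ i ∈ S w, m i ≤ ⨆ i ∈ ⋃ w ∈ T, S w, m i :=
          biSup_mono fun _ hi ↦ Set.mem_biUnion hw hi
        (hle _ (hAm w)).compl
    have hinter := (Indep_iff _ _ μ).1 (indep_iSup_of_disjoint hm hind hTS) _ _ (hAm v) hTm
    rw [measureReal_def, hinter, ENNReal.toReal_mul, ← measureReal_def, ← measureReal_def]
    gcongr
    exact hAp v
  have hpos := measureReal_avoiding_pos hD hΓ hpD hlocal univ
  obtain ⟨ω, hω⟩ := nonempty_of_measureReal_ne_zero hpos.ne'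
  exact ⟨ω, fun v ↦ mem_avoiding.1 hω v (mem_univ v)⟩

end LocalLemma

section Labelling

variable {ι Ω V L : Type*} [MeasurableSpace Ω] {μ : Measure Ω} [IsProbabilityMeasure μ]

lemma measureReal_le_abs_sum_sub_integral_le {X : ι → Ω → ℝ} (hind : iIndepFun X μ)
    {s : Finset ι} (hXm : ∀ i ∈ s, AEMeasurable (X i) μ) {a b : ℝ}
    (hX : ∀ i ∈ s, ∀ᵐ ω ∂μ, X i ω ∈ Set.Icc a b) {ε : ℝ} (hε : 0 ≤ ε) :
    μ.real {ω | ε ≤ |∑ i ∈ s, (X i ω - μ[X i])|} ≤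
      2 * Real.exp (-(2 * ε ^ 2 / (#s * (b - a) ^ 2))) := by
  set Y : ι → Ω → ℝ := fun i ω ↦ X i ω - μ[X i]
  have hYind : iIndepFun Y μ :=
    hind.comp (fun i x ↦ x - ∫ ω, X i ω ∂μ) fun _ ↦ measurable_id.sub_const _
  have hsub := HasSubgaussianMGF.sum_of_iIndepFun hYind fun i hi ↦
    hasSubgaussianMGF_of_mem_Icc (hXm i hi) (hX i hi)
  have hexp : -ε ^ 2 / (2 * ((∑ _i ∈ s, (‖b - a‖₊ / 2) ^ 2 : NNReal) : ℝ)) =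
      -(2 * ε ^ 2 / (#s * (b - a) ^ 2)) := by
    have hvar : (2 * ((∑ _i ∈ s, (‖b - a‖₊ / 2) ^ 2 : NNReal) : ℝ)) = #s * (b - a) ^ 2 / 2 := by
      simp only [sum_const, nsmul_eq_mul, NNReal.coe_mul, NNReal.coe_natCast, NNReal.coe_pow,
        NNReal.coe_div, coe_nnnorm, Real.norm_eq_abs, NNReal.coe_ofNat, div_pow, sq_abs]
      ring
    rw [hvar, neg_div, div_div_eq_mul_div, mul_comm]
  have hupper := hsub.measure_ge_le hε
  have hlower := hsub.neg.measure_ge_le hε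
  rw [hexp] at hupper hlower
  have hsplit : {ω | ε ≤ |∑ i ∈ s, Y i ω|} =
      {ω | ε ≤ ∑ i ∈ s, Y i ω} ∪ {ω | ε ≤ (-fun ω ↦ ∑ i ∈ s, Y i ω) ω} := by
    ext ω
    simp [le_abs]
  rw [hsplit]
  linarith [measureReal_union_le (μ := μ) {ω | ε ≤ ∑ i ∈ s, Y i ω}
    {ω | ε ≤ (-fun ω ↦ ∑ i ∈ s, Y i ω) ω}]

variable [MeasurableSpace L]

lemma measurable_card_filter_iSup_comap_eval {C : Set L} [DecidablePred (· ∈ C)]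
    (hC : MeasurableSet C) (s : Finset V) :
    Measurable[⨆ u ∈ (s : Set V), MeasurableSpace.comap (Function.eval u) ‹_›]
      fun ℓ : V → L ↦ (#{u ∈ s | ℓ u ∈ C} : ℝ) := by
  simp_rw [card_filter, Nat.cast_sum, Nat.cast_ite, Nat.cast_one, Nat.cast_zero]
  refine s.measurable_fun_sum fun u hu ↦ ?_
  have heval : Measurable[⨆ u ∈ (s : Set V), MeasurableSpace.comap (Function.eval u) ‹_›]
      (Function.eval u : (V → L) → L) :=
    (comap_measurable _).mono (le_iSup₂_of_le u hu le_rfl) le_rfl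
  exact .ite (heval hC) measurable_const measurable_const

variable [Fintype V]

lemma ncard_not_disjoint_neighborFinset_le {G : SimpleGraph V} [DecidableRel G.Adj] {d : ℕ}
    (hG : ∀ v, G.degree v ≤ d) (v : V) :
    {w | ¬ Disjoint (G.neighborFinset w : Set V) (G.neighborFinset v)}.ncard ≤ d ^ 2 := by
  classical
  have hsub : {w | ¬ Disjoint (G.neighborFinset w : Set V) (G.neighborFinset v)} ⊆
      ((G.neighborFinset v).biUnion fun u ↦ G.neighborFinset u : Finset V) := by
    intro w hw
    obtain ⟨u, huw, huv⟩ := Set.not_disjoint_iff.1 hw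
    simp only [mem_coe, SimpleGraph.mem_neighborFinset, mem_biUnion] at huw huv ⊢
    exact ⟨u, huv, huw.symm⟩
  calc _ ≤ #((G.neighborFinset v).biUnion fun u ↦ G.neighborFinset u) := by
        simpa only [Set.ncard_coe_finset] using Set.ncard_le_ncard hsub
    _ ≤ #(G.neighborFinset v) * d := card_biUnion_le_card_mul _ _ _ fun u _ ↦ hG u
    _ ≤ d ^ 2 := by rw [sq]; gcongr; exact hG v

variable (ν : Measure L) [IsProbabilityMeasure ν]

lemma measureReal_pi_le_abs_card_filter_sub_le {C : Set L} [DecidablePred (· ∈ C)]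
    (hC : MeasurableSet C) (s : Finset V) {t : ℝ} (ht : 0 ≤ t) :
    (Measure.pi fun _ : V ↦ ν).real {ℓ | t ≤ |#{u ∈ s | ℓ u ∈ C} - #s * ν.real C|} ≤
      2 * Real.exp (-(2 * t ^ 2 / #s)) := by
  set f : L → ℝ := C.indicator 1
  have hf : Measurable f := measurable_one.indicator hC
  have hint (u : V) : ∫ ℓ, f (ℓ u) ∂(Measure.pi fun _ : V ↦ ν) = ν.real C := by
    rw [integral_comp_eval (μ := fun _ ↦ ν) hf.aestronglyMeasurable, integral_indicator_one hC]
  have hHoeffding := measureReal_le_abs_sum_sub_integral_le (s := s) (a := 0) (b := 1)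
    (iIndepFun_pi (μ := fun _ : V ↦ ν) fun _ ↦ hf.aemeasurable)
    (fun u _ ↦ (hf.comp (measurable_pi_apply u)).aemeasurable)
    (fun u _ ↦ .of_forall fun ℓ ↦ ⟨Set.indicator_nonneg (by simp) _,
      Set.indicator_le_self' (by simp) _ |>.trans (by simp)⟩) ht
  have hcount (ℓ : V → L) : (#{u ∈ s | ℓ u ∈ C} : ℝ) = ∑ u ∈ s, f (ℓ u) := by
    simp [f, Set.indicator_apply]
  simpa [hint, hcount] using hHoeffding

theorem exists_forall_abs_card_filter_sub_lt {G : SimpleGraph V} [DecidableRel G.Adj] {d : ℕ}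
    (hreg : G.IsRegularOfDegree d) (hd : 0 < d) [Fintype ι] {C : ι → Set L}
    [∀ i, DecidablePred (· ∈ C i)] (hC : ∀ i, MeasurableSet (C i)) {t : ℝ} (ht : 0 ≤ t)
    (hdt : 8 * Fintype.card ι * d ^ 2 * Real.exp (-(2 * t ^ 2 / d)) ≤ 1) :
    ∃ ℓ : V → L, ∀ v i, |#{u ∈ G.neighborFinset v | ℓ u ∈ C i} - d * ν.real (C i)| < t := by
  classical
  let deviates (v : V) (i : ι) : Set (V → L) :=
    {ℓ | t ≤ |#{u ∈ G.neighborFinset v | ℓ u ∈ C i} - d * ν.real (C i)|}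
  have hprob (v : V) : (Measure.pi fun _ : V ↦ ν).real (⋃ i, deviates v i) ≤
      2 * Fintype.card ι * Real.exp (-(2 * t ^ 2 / d)) :=
    calc _ ≤ ∑ i, (Measure.pi fun _ : V ↦ ν).real (deviates v i) := measureReal_iUnion_fintype_le _
      _ ≤ ∑ _i : ι, 2 * Real.exp (-(2 * t ^ 2 / d)) := by
        gcongr with i
        simpa [hreg.degree_eq v] using
          measureReal_pi_le_abs_card_filter_sub_le ν (hC i) (G.neighborFinset v) ht
      _ = _ := by simp only [sum_const, card_univ, nsmul_eq_mul]; ring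
  have hind : iIndep (fun u : V ↦ MeasurableSpace.comap (Function.eval u) ‹MeasurableSpace L›)
      (Measure.pi fun _ : V ↦ ν) :=
    (iIndepFun_pi (X := fun _ x ↦ x) fun _ ↦ aemeasurable_id).iIndep
  obtain ⟨ℓ, hℓ⟩ := exists_forall_notMem_of_iIndep (A := fun v ↦ ⋃ i, deviates v i)
    (fun u ↦ (measurable_pi_apply u).comap_le) hind
    (fun v ↦ .iUnion fun i ↦ measurable_card_filter_iSup_comap_eval (hC i) _
      (measurableSet_le measurable_const (measurable_id.sub_const _).abs))
    hprob (by positivity)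
    (ncard_not_disjoint_neighborFinset_le fun v ↦ (hreg v).le) (by push_cast; linarith)
  exact ⟨ℓ, fun v i ↦ not_le.1 fun hle ↦ hℓ v (Set.mem_iUnion_of_mem i hle)⟩

end Labelling

section Coloring

variable {V α : Type*} [Fintype V]

theorem exists_listColoring_of_degree_lt {H : SimpleGraph V} [DecidableRel H.Adj]
    {A : V → Finset α} (hA : ∀ v, H.degree v < #(A v)) :
    ∃ f : V → α, (∀ v, f v ∈ A v) ∧ ∀ v w, H.Adj v w → f v ≠ f w := by
  classical
  suffices hpartial : ∀ s : Finset V, ∃ f : V → α,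
      (∀ v, f v ∈ A v) ∧ ∀ v ∈ s, ∀ w ∈ s, H.Adj v w → f v ≠ f w by
    simpa using hpartial univ
  intro s
  induction s using Finset.induction_on with
  | empty =>
    have hne (v : V) : (A v).Nonempty := card_pos.1 ((Nat.zero_le _).trans_lt (hA v))
    exact ⟨fun v ↦ (hne v).choose, fun v ↦ (hne v).choose_spec, by simp⟩
  | insert u s hu ih =>
    obtain ⟨f, hfA, hf⟩ := ih
    obtain ⟨x, hxA, hx⟩ : ∃ x ∈ A u, x ∉ (H.neighborFinset u).image f :=
      exists_mem_notMem_of_card_lt_card (card_image_le.trans_lt (hA u))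
    have hx' (w : V) (huw : H.Adj u w) : f w ≠ x := fun h ↦
      hx (mem_image.2 ⟨w, (H.mem_neighborFinset u w).2 huw, h⟩)
    refine ⟨Function.update f u x, fun v ↦ ?_, fun v hv w hw hvw ↦ ?_⟩
    · obtain rfl | hvu := eq_or_ne v u <;> simp [*]
    · grind [H.ne_of_adj hvw, hvw.symm]

lemma edgeDeg_eq_card (G : SimpleGraph V) [DecidableRel G.Adj] [DecidableEq α]
    (c : Sym2 V → α) (i : α) (v : V) :
    edgeDeg {e | e ∈ G.edgeSet ∧ c e = i} v = #{w ∈ G.neighborFinset v | c s(v, w) = i} := by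
  have himage : {e ∈ {e | e ∈ G.edgeSet ∧ c e = i} | v ∈ e} =
      Sym2.mkEmbedding v '' ({w ∈ G.neighborFinset v | c s(v, w) = i} : Finset V) := by
    ext e
    induction e with
    | h a b =>
      simp only [Set.mem_ofPred_eq, SimpleGraph.mem_edgeSet, Sym2.mem_iff, Set.mem_image, mem_coe,
        mem_filter, SimpleGraph.mem_neighborFinset, Sym2.mkEmbedding_apply]
      grind [SimpleGraph.adj_comm, Sym2.eq_swap]
  rw [edgeDeg, himage, Set.ncard_image_of_injective _ (Sym2.mkEmbedding v).injective,
    Set.ncard_coe_finset]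

end Coloring

/-- The role of an edge `uv` seen from `u`: it has a prescribed colour (`fixed`), it has the common
home colour of its ends (`soft`), or it is coloured with the home colour of `u` or else with the
colour that is home at neither end (`lead`), the choice being up to `u`. An edge that `v` leads is
a `follow` edge of `u`. -/
inductive Role
  | fixed (i : Fin 3)
  | soft
  | lead
  | follow
  deriving DecidableEq

/-- The role of an edge seen from its other end. -/
def Role.swap : Role → Role
  | fixed i => fixed i
  | soft => soft
  | lead => follow
  | follow => lead

/-- A home colour for each element of `L` together with a role for each pair of elements. -/
structure RoleScheme (L : Type*) where
  home : L → Fin 3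
  role : L → L → Role
  role_swap : ∀ a b, role b a = (role a b).swap
  home_eq_of_soft : ∀ a b, role a b = .soft → home a = home b
  home_ne_of_lead : ∀ a b, role a b = .lead → home a ≠ home b

namespace RoleScheme

variable {L : Type*} (S : RoleScheme L)

/-- The role scheme on `V` that assigns home colours and roles according to labels in `L`. -/
def comap {V : Type*} (ℓ : V → L) : RoleScheme V where
  home v := S.home (ℓ v)
  role u v := S.role (ℓ u) (ℓ v)
  role_swap _ _ := S.role_swap _ _
  home_eq_of_soft _ _ := S.home_eq_of_soft _ _
  home_ne_of_lead _ _ := S.home_ne_of_lead _ _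

/-- The colours that an edge `ab` may receive. -/
def palette (a b : L) : Finset (Fin 3) :=
  match S.role a b with
  | .fixed i => {i}
  | .soft => {S.home a}
  | .lead => {S.home b}ᶜ
  | .follow => {S.home a}ᶜ

/-- The elements `b` of `s` for which the edge `ab` may receive colour `i`. -/
def possible (s : Finset L) (a : L) (i : Fin 3) : Finset L := {b ∈ s | i ∈ S.palette a b}

/-- The elements `b` of `s` for which the edge `ab` is certain to receive colour `i`. -/
def sure (s : Finset L) (a : L) (i : Fin 3) : Finset L := {b ∈ s | S.palette a b = {i}}

/-- Robustness of a role scheme with respect to neighbourhoods `N`: however the `lead` edges are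
coloured, the ends of an edge that is not `soft` have distinct degrees in the colour of that edge,
and `lead` edges are numerous enough to separate the ends of `soft` edges. -/
structure IsRobust (N : L → Finset L) : Prop where
  soft_lt_lead : ∀ a, #{b ∈ N a | S.role a b = .soft} < #{b ∈ N a | S.role a b = .lead}
  separated : ∀ a, ∀ b ∈ N a, S.role a b ≠ .soft → ∀ i ∈ S.palette a b,
    #(S.possible (N a) a i) < #(S.sure (N b) b i) ∨ #(S.possible (N b) b i) < #(S.sure (N a) a i)

section Comap

variable {V : Type*} [Fintype L] [DecidableEq L]

lemma filter_role_comap (s : Finset V) (ℓ : V → L) (v : V) (r : Role) :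
    ({u ∈ s | (S.comap ℓ).role v u = r} : Finset V) =
      {u ∈ s | ℓ u ∈ ({b | S.role (ℓ v) b = r} : Finset L)} := by
  ext
  simp only [mem_filter, mem_univ, true_and]
  rfl

lemma possible_comap (s : Finset V) (ℓ : V → L) (v : V) (i : Fin 3) :
    (S.comap ℓ).possible s v i = {u ∈ s | ℓ u ∈ S.possible univ (ℓ v) i} := by
  ext
  simp only [possible, mem_filter, mem_univ, true_and]
  rfl

lemma sure_comap (s : Finset V) (ℓ : V → L) (v : V) (i : Fin 3) :
    (S.comap ℓ).sure s v i = {u ∈ s | ℓ u ∈ S.sure univ (ℓ v) i} := by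
  ext
  simp only [sure, mem_filter, mem_univ, true_and]
  rfl

/-- Each count in the definition of robustness is the number of elements of `N v` with label in a
set depending only on the label of `v`, and the comparisons of counts are strict. -/
theorem IsRobust.comap {S : RoleScheme L} (hS : S.IsRobust fun _ ↦ univ) {N : V → Finset V}
    {ℓ : V → L} (hℓ : ∀ (v w : V) (B B' : Finset L), #B < #B' →
      #{u ∈ N v | ℓ u ∈ B} < #{u ∈ N w | ℓ u ∈ B'}) : (S.comap ℓ).IsRobust N where
  soft_lt_lead v := by
    simpa only [filter_role_comap] using hℓ v v _ _ (hS.soft_lt_lead (ℓ v))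
  separated v w _ hr i hi := by
    simp only [possible_comap, sure_comap]
    exact (hS.separated _ _ (mem_univ _) hr i hi).imp (hℓ v w _ _) (hℓ w v _ _)

end Comap

lemma palette_ne_singleton_of_lead {a b : L} (h : S.role a b = .lead) (i : Fin 3) :
    S.palette a b ≠ {i} := by
  have hcompl : ∀ i j : Fin 3, ({j} : Finset (Fin 3))ᶜ ≠ {i} := by decide
  simpa only [palette, h] using hcompl i _

section EdgeColor

variable [DecidableEq L] (X : L → Finset L)

/-- The colour of the edge `ab` when each `a` decides to colour exactly those of its `lead` edges
that go to `X a` with its home colour. If `h` and `h'` are distinct, then `-(h + h')` is the third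
colour. -/
def edgeColor (a b : L) : Fin 3 :=
  match S.role a b with
  | .fixed i => i
  | .soft => S.home a
  | .lead => if b ∈ X a then S.home a else -(S.home a + S.home b)
  | .follow => if a ∈ X b then S.home b else -(S.home a + S.home b)

lemma neg_add_ne_of_ne {h h' : Fin 3} (hne : h ≠ h') : -(h + h') ≠ h ∧ -(h + h') ≠ h' := by
  decide +revert

lemma edgeColor_comm (a b : L) : S.edgeColor X a b = S.edgeColor X b a := by
  have hswap := S.role_swap a b
  unfold edgeColor
  cases hr : S.role a b <;> simp only [hr, Role.swap] at hswap <;> simp only [hswap]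
  · exact S.home_eq_of_soft a b hr
  · rw [add_comm]
  · rw [add_comm]

lemma edgeColor_mem_palette (a b : L) : S.edgeColor X a b ∈ S.palette a b := by
  have hswap := S.role_swap a b
  unfold edgeColor palette
  cases hr : S.role a b <;> simp only [hr, Role.swap] at hswap <;>
    simp only [mem_singleton, mem_compl]
  · have hne := S.home_ne_of_lead a b hr
    split_ifs
    exacts [hne, (neg_add_ne_of_ne hne).2]
  · have hne := S.home_ne_of_lead b a hswap
    split_ifs
    exacts [hne, (neg_add_ne_of_ne hne.symm).1]

variable {X}

lemma edgeColor_eq_home_iff {a b : L} (hX : b ∈ X a → S.role a b = .lead) :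
    S.edgeColor X a b = S.home a ↔ S.palette a b = {S.home a} ∨ b ∈ X a := by
  have hmem := S.edgeColor_mem_palette X a b
  have hlead := S.palette_ne_singleton_of_lead (a := a) (b := b)
  cases hr : S.role a b with
  | lead =>
    have hne := (neg_add_ne_of_ne (S.home_ne_of_lead a b hr)).1
    by_cases hb : b ∈ X a <;> simp [edgeColor, hr, hb, hne, hlead hr, -neg_add_rev]
  | fixed | soft | follow => simp_all [edgeColor, palette]

lemma card_sure_le (s : Finset L) (a : L) (i : Fin 3) :
    #(S.sure s a i) ≤ #{b ∈ s | S.edgeColor X a b = i} := by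
  refine card_le_card (monotone_filter_right s fun b _ hb ↦ ?_)
  simpa only [hb, mem_singleton] using S.edgeColor_mem_palette X a b

lemma card_le_possible (s : Finset L) (a : L) (i : Fin 3) :
    #{b ∈ s | S.edgeColor X a b = i} ≤ #(S.possible s a i) :=
  card_le_card (monotone_filter_right s fun b _ hb ↦ hb ▸ S.edgeColor_mem_palette X a b)

lemma card_edgeColor_eq_home {s : Finset L} {a : L}
    (hX : X a ⊆ {b ∈ s | S.role a b = .lead}) :
    #{b ∈ s | S.edgeColor X a b = S.home a} = #(S.sure s a (S.home a)) + #(X a) := by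
  have hlead {b : L} (hb : b ∈ X a) : S.role a b = .lead := (mem_filter.1 (hX hb)).2
  have hdisj : Disjoint (S.sure s a (S.home a)) (X a) := disjoint_left.2 fun b hb hbX ↦
    S.palette_ne_singleton_of_lead (hlead hbX) _ (mem_filter.1 hb).2
  rw [← card_union_of_disjoint hdisj]
  simp only [S.edgeColor_eq_home_iff hlead, filter_or, sure, filter_mem_eq_inter]
  rw [inter_eq_right.2 (hX.trans (filter_subset _ _))]

end EdgeColor

/-- The graph of the `soft` edges of `G`. -/
def softGraph {V : Type*} (S : RoleScheme V) (G : SimpleGraph V) : SimpleGraph V where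
  Adj v w := G.Adj v w ∧ S.role v w = .soft
  symm := ⟨fun v w h ↦ ⟨h.1.symm, by rw [S.role_swap, h.2, Role.swap]⟩⟩
  loopless := ⟨fun v h ↦ G.loopless.irrefl v h.1⟩

instance {V : Type*} (S : RoleScheme V) (G : SimpleGraph V) [DecidableRel G.Adj] :
    DecidableRel (S.softGraph G).Adj := fun _ _ ↦ instDecidableAnd

variable {V : Type*} [Fintype V] {G : SimpleGraph V} [DecidableRel G.Adj] {S : RoleScheme V}

lemma degree_softGraph (v : V) :
    (S.softGraph G).degree v = #{w ∈ G.neighborFinset v | S.role v w = .soft} := by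
  rw [← SimpleGraph.card_neighborFinset_eq_degree]
  congr 1
  ext
  simp only [SimpleGraph.mem_neighborFinset, mem_filter]
  rfl

theorem IsRobust.exists_forall_edgeColor_ne [DecidableEq V]
    (hS : S.IsRobust fun v ↦ G.neighborFinset v) :
    ∃ X : V → Finset V, ∀ v w, G.Adj v w →
      #{u ∈ G.neighborFinset v | S.edgeColor X v u = S.edgeColor X v w} ≠
        #{u ∈ G.neighborFinset w | S.edgeColor X w u = S.edgeColor X v w} := by
  let base (v : V) : ℕ := #(S.sure (G.neighborFinset v) v (S.home v))
  let leads (v : V) : Finset V := {w ∈ G.neighborFinset v | S.role v w = .lead}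
  obtain ⟨f, hfmem, hf⟩ := exists_listColoring_of_degree_lt (H := S.softGraph G)
    (A := fun v ↦ Ico (base v) (base v + #(leads v))) fun v ↦ by
      rw [degree_softGraph, Nat.card_Ico, add_tsub_cancel_left]
      exact hS.soft_lt_lead v
  have hX (v : V) : ∃ Y ⊆ leads v, #Y = f v - base v :=
    exists_subset_card_eq (by have := mem_Ico.1 (hfmem v); lia)
  choose X hXsub hXcard using hX
  have hhome (v : V) : #{u ∈ G.neighborFinset v | S.edgeColor X v u = S.home v} = f v := by
    rw [S.card_edgeColor_eq_home (hXsub v), hXcard]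
    exact Nat.add_sub_cancel' (mem_Ico.1 (hfmem v)).1
  refine ⟨X, fun v w hvw ↦ ?_⟩
  by_cases hr : S.role v w = .soft
  · have hcolor : S.edgeColor X v w = S.home v := by simp only [edgeColor, hr]
    rw [hcolor, hhome, S.home_eq_of_soft v w hr, hhome]
    exact hf v w ⟨hvw, hr⟩
  · have hsep := hS.separated v w (by simpa using hvw) hr _ (S.edgeColor_mem_palette X v w)
    have hbounds (u : V) := And.intro
      (S.card_sure_le (X := X) (G.neighborFinset u) u (S.edgeColor X v w))
      (S.card_le_possible (X := X) (G.neighborFinset u) u (S.edgeColor X v w))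
    obtain ⟨hsure_v, hpossible_v⟩ := hbounds v
    obtain ⟨hsure_w, hpossible_w⟩ := hbounds w
    lia

theorem IsRobust.exists_locallyIrregular (hS : S.IsRobust fun v ↦ G.neighborFinset v) :
    ∃ c : Sym2 V → Fin 3, ∀ i : Fin 3, LocallyIrregular {e | e ∈ G.edgeSet ∧ c e = i} := by
  classical
  obtain ⟨X, hX⟩ := hS.exists_forall_edgeColor_ne
  refine ⟨Sym2.lift ⟨S.edgeColor X, S.edgeColor_comm X⟩, fun i v w ⟨hvw, hi⟩ ↦ ?_⟩
  rw [edgeDeg_eq_card, edgeDeg_eq_card, ← hi]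
  exact hX v w hvw

end RoleScheme

section RegularGraph

variable {V L : Type*} [Fintype V] {G : SimpleGraph V} [DecidableRel G.Adj] {d : ℕ}
  [Fintype L] [DecidableEq L]

lemma exists_forall_card_filter_lt_card_filter [Nonempty L] (hreg : G.IsRegularOfDegree d)
    (hd : 0 < d) (hdL : 8 * 2 ^ Fintype.card L * d ^ 2 *
      Real.exp (-(d / (2 * Fintype.card L ^ 2))) ≤ 1) :
    ∃ ℓ : V → L, ∀ (v w : V) (B B' : Finset L), #B < #B' →
      #{u ∈ G.neighborFinset v | ℓ u ∈ B} < #{u ∈ G.neighborFinset w | ℓ u ∈ B'} := by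
  let _ : MeasurableSpace L := ⊤
  have huniform (B : Finset L) :
      (uniformOn (Set.univ : Set L)).real B = #B / Fintype.card L := by
    simp [measureReal_def, uniformOn_univ]
  obtain ⟨ℓ, hℓ⟩ := exists_forall_abs_card_filter_sub_lt (uniformOn (Set.univ : Set L)) hreg hd
    (C := fun B : Finset L ↦ (B : Set L)) (fun B ↦ B.measurableSet)
    (t := d / (2 * Fintype.card L)) (by positivity) (by
      have hexp : 2 * ((d : ℝ) / (2 * Fintype.card L)) ^ 2 / d = d / (2 * Fintype.card L ^ 2) := by
        field_simp
      simpa [hexp, Fintype.card_finset] using hdL)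
  simp only [huniform, mem_coe, abs_lt] at hℓ
  refine ⟨ℓ, fun v w B B' hBB' ↦ ?_⟩
  have hgap : (d : ℝ) * (#B / Fintype.card L) + 2 * (d / (2 * Fintype.card L)) ≤
      d * (#B' / Fintype.card L) := by
    have hsucc : (#B : ℝ) + 1 ≤ #B' := mod_cast hBB'
    calc _ = (d : ℝ) * ((#B + 1) / Fintype.card L) := by field_simp
      _ ≤ _ := by gcongr
  have hlt : (#{u ∈ G.neighborFinset v | ℓ u ∈ B} : ℝ) < #{u ∈ G.neighborFinset w | ℓ u ∈ B'} := by
    linarith [(hℓ v B).2, (hℓ w B').1]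
  exact_mod_cast hlt

end RegularGraph

/-- The table of roles of `searchedScheme`: the decimal digit of the `a`-th number at the place
`10 ^ b` encodes the role of the pair `ab`. -/
def searchedDigits : Fin 42 → ℕ :=
  ![
    420221020211120111112021211021211011021423,
    220024221022011201410201221120012111032,
    22010022051020224210020211220204012012305,
    421101010111500100200011111221111041213211,
    25122412121122022011221011222211011431112,
    20020252252222004000202050224200001352010,
    1122040210020111000010041121221013111221,
    22221121210111121225015121211421431015111,
    240022020020000055050220055040000350000000,
    421220020220020111012010101240223011011501,
    201012024202201014220020210221032022011021,
    220202210021020014220251124021302052221212,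
    141541110511110000120111110113110011521011,
    12222525225221224515222124231225512222222,
    222005210022052204200050104321022021222220,
    51511511111011210011511413550501411011111,
    21122120222220211210021231021210425411101,
    40111140121121011210020325111121010001222,
    40212100220243011001123011021100040211001,
    20121020112010111212132221421421211021212,
    20211220000022054200311004021200200220050,
    20051021010001201013021001040002040010012,
    21121110114121221031010111012221420010101,
    24212212202200221300220220241220020002221,
    411151151111511513111511110550551411520511,
    21111020221121131220411111020111421020211,
    41220010201021314222010022220001011001201,
    451020140001243111011203101210010010220020,
    411212212221235221020215221421202012220222,
    20215220000322014210002120021020010214001,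
    22142020123011111250020121241120000211111,
    20021022232020021011012221221202211421421,
    121012204321020221210012121024022022211022,
    21021043520020001201000001040050010220250,
    421232135022215124112220521121122225411222,
    20050310200221001210201114241200010250000,
    21023021212420011211112121421220212021001,
    521232432125112214124121121025012222220122,
    21320020001220211210212114024202021011022,
    43111011102011111510000011221011021041200,
    535222222222214521222225524215202520222202,
    340040050100055005000000000201225200005005]

/-- The role of a pair of labels in `searchedScheme`. The digits 0, 1 and 2 prescribe a colour. -/
def searchedRole (a b : Fin 42) : Role :=
  match searchedDigits a / 10 ^ (b : ℕ) % 10 with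
  | 0 => .fixed 0
  | 1 => .fixed 1
  | 2 => .fixed 2
  | 3 => .soft
  | 4 => .lead
  | _ => .follow

/-- A robust role scheme on 42 labels, found by computer search. -/
def searchedScheme : RoleScheme (Fin 42) where
  home a := Fin.ofNat 3 a
  role := searchedRole
  role_swap := by decide +kernel
  home_eq_of_soft := by decide +kernel
  home_ne_of_lead := by decide +kernel

theorem isRobust_searchedScheme : searchedScheme.IsRobust fun _ ↦ univ where
  soft_lt_lead := by decide +kernel
  separated := by decide +kernel

lemma mul_sq_mul_exp_neg_le_one {d : ℕ} (hd : 2 * 10 ^ 5 ≤ d) :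
    8 * 2 ^ 42 * (d : ℝ) ^ 2 * Real.exp (-(d / (2 * 42 ^ 2))) ≤ 1 := by
  have hy : (1 : ℝ) ≤ d / (2 * 10 ^ 5) := by
    rw [one_le_div (by norm_num)]
    exact_mod_cast hd
  set y : ℝ := d / (2 * 10 ^ 5) with hdy
  have hd' : (d : ℝ) = 2 * 10 ^ 5 * y := by rw [hdy]; ring
  have hy' : y ≤ Real.exp (y - 1) := by linarith [Real.add_one_le_exp (y - 1)]
  have hconst : (8 * 2 ^ 42 * (2 * 10 ^ 5) ^ 2 : ℝ) ≤ Real.exp 56 :=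
    calc (8 * 2 ^ 42 * (2 * 10 ^ 5) ^ 2 : ℝ) ≤ 2.7182818283 ^ 56 := by norm_num
      _ ≤ Real.exp 1 ^ 56 := by gcongr; exact Real.exp_one_gt_d9.le
      _ = Real.exp 56 := by rw [← Real.exp_nat_mul]; norm_num
  calc 8 * 2 ^ 42 * (d : ℝ) ^ 2 * Real.exp (-(d / (2 * 42 ^ 2)))
      = 8 * 2 ^ 42 * (2 * 10 ^ 5) ^ 2 * y ^ 2 * Real.exp (-(d / (2 * 42 ^ 2))) := by
        rw [hd']; ring
    _ ≤ Real.exp 56 * Real.exp (y - 1) ^ 2 * Real.exp (-(d / (2 * 42 ^ 2))) := by gcongr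
    _ = Real.exp (56 + 2 * (y - 1) - d / (2 * 42 ^ 2)) := by
        rw [← Real.exp_nat_mul, ← Real.exp_add, ← Real.exp_add]
        push_cast
        ring_nf
    _ ≤ 1 := Real.exp_le_one_iff.2 (by rw [hd']; linarith)

theorem regular_decomposable_three_locally_irregular_general
    {V : Type*} [Fintype V] (G : SimpleGraph V) [DecidableRel G.Adj]
    (d : ℕ) (hd : 2 * 10 ^ 5 ≤ d) (hreg : G.IsRegularOfDegree d) :
    ∃ c : Sym2 V → Fin 3,
      ∀ i : Fin 3, LocallyIrregular {e | e ∈ G.edgeSet ∧ c e = i} := by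
  obtain ⟨ℓ, hℓ⟩ := exists_forall_card_filter_lt_card_filter (L := Fin 42) hreg (by lia)
    (by simpa using mul_sq_mul_exp_neg_le_one hd)
  exact (isRobust_searchedScheme.comap hℓ).exists_locallyIrregular

/-- Every `d`-regular finite simple graph with `d ≥ 10^7` is decomposable into
3 locally irregular subgraphs. -/
theorem regular_decomposable_three_locally_irregular
    {V : Type*} [Fintype V] (G : SimpleGraph V) [DecidableRel G.Adj]
    (d : ℕ) (hd : 10^7 ≤ d) (hreg : G.IsRegularOfDegree d) :
    ∃ c : Sym2 V → Fin 3,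
      ∀ i : Fin 3, LocallyIrregular {e | e ∈ G.edgeSet ∧ c e = i} :=
  regular_decomposable_three_locally_irregular_general G d (hd.trans' (by norm_num)) hreg
end

section
/- Let G=(V,E) be a finite simple graph with minimum degree at least 12, and suppose that for every vertex v an integer λ_v ≥ 2 with 6·λ_v ≤ d(v) has been chosen, where d(v) denotes the degree of v in G. Then for every assignment t : V → ℤ there exists a spanning subgraph H of G such that for every vertex v: d_H(v) ∈ [d(v)/3, 2·d(v)/3], and d_H(v) ≡ t(v) (mod λ_v) or d_H(v) ≡ t(v)+1 (mod λ_v). -/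
/-!
Allow two targets `m v` and `p v` at every vertex and ask for a subgraph in which each degree is
`a v` or `a v + 1` for some `a v ∈ {m v, p v}`. Among the pairs `(E, a)` with `d_E ≤ a + 1`, take
one of least total deficiency `∑ v, (a v - d_E v)⁺`. If some vertex is deficient, grow from the
deficient vertices a maximal pair `(A, B)` by alternating walks that use edges outside `E` from `A`
to `B` and edges of `E` from `B` to `A`. Switching along such a walk repairs a deficient vertex at
the expense of `-1` at a vertex of `A`, or `+1` at a vertex of `B`, so optimality forces `d_E ≤ a`
on `A` and `d_E = a + 1` on `B`. A vertex with too many neighbours across the pair could moreover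
exchange its target for the other one and restore its degree with edges between `A` and `B`, again
a gain. Hence, of the edges of `G` between `A` and `B` at a vertex of `A`, at least half lie outside
`E`, and more than half if the vertex is deficient; at a vertex of `B` at least half lie in `E`.
Summing over `A` and over `B` gives a contradiction. For the congruences, take `m v ≡ t v` closest
below `d v / 2` and `p v` equal to `m v` or to the next element `m v + λ_v` of the residue class.
-/

section EdgeDeg

variable {V : Type*} [Finite V] {E F : Set (Sym2 V)}

lemma edgeDeg_congr {V : Type*} {E F : Set (Sym2 V)} {v : V}
    (h : ∀ e, v ∈ e → (e ∈ E ↔ e ∈ F)) : edgeDeg E v = edgeDeg F v := by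
  unfold edgeDeg
  congr 1
  ext e
  exact and_congr_left (h e)

lemma edgeDeg_mono (h : E ⊆ F) (v : V) : edgeDeg E v ≤ edgeDeg F v :=
  Set.ncard_le_ncard fun _ he => ⟨h he.1, he.2⟩

lemma edgeDeg_union_of_disjoint (h : Disjoint E F) (v : V) :
    edgeDeg (E ∪ F) v = edgeDeg E v + edgeDeg F v := by
  rw [edgeDeg, edgeDeg, edgeDeg, ← Set.ncard_union_eq
    (h.mono (Set.sep_subset _ _) (Set.sep_subset _ _))]
  congr 1
  ext e
  simp [or_and_right]

lemma edgeDeg_inter_add_diff (E F : Set (Sym2 V)) (v : V) :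
    edgeDeg (E ∩ F) v + edgeDeg (E \ F) v = edgeDeg E v := by
  rw [← edgeDeg_union_of_disjoint Set.disjoint_sdiff_inter.symm, Set.inter_union_sdiff]

lemma edgeDeg_diff_add (h : F ⊆ E) (v : V) : edgeDeg (E \ F) v + edgeDeg F v = edgeDeg E v := by
  rw [add_comm, ← edgeDeg_inter_add_diff E F, Set.inter_eq_right.2 h]

lemma edgeDeg_empty {V : Type*} (v : V) : edgeDeg ∅ v = 0 := by
  simp [edgeDeg]

lemma edgeDeg_eq_ncard {V : Type*} {E : Set (Sym2 V)} {v : V} (h : ∀ e ∈ E, v ∈ e) :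
    edgeDeg E v = E.ncard := by
  rw [edgeDeg, Set.sep_eq_self_iff_mem_true.2 h]

lemma edgeDeg_singleton {V : Type*} [DecidableEq V] {u v : V} (h : u ≠ v) (x : V) :
    edgeDeg {s(u, v)} x = (if x = u then 1 else 0) + if x = v then 1 else 0 := by
  by_cases hx : x ∈ s(u, v)
  · rw [edgeDeg_eq_ncard (by simpa using hx), Set.ncard_singleton]
    grind
  · rw [edgeDeg_congr (F := ∅) (by grind), edgeDeg_empty]
    grind

lemma edgeDeg_edgeSet {V : Type*} [Fintype V] (G : SimpleGraph V) [DecidableRel G.Adj] (v : V) :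
    edgeDeg G.edgeSet v = G.degree v := by
  classical
  rw [← G.card_incidenceSet_eq_degree, ← Nat.card_eq_fintype_card]
  rfl

lemma exists_subset_edgeDeg_eq {v : V} {k : ℕ} (hk : k ≤ edgeDeg F v) :
    ∃ T ⊆ F, edgeDeg T v = k ∧
      ∀ x ≠ v, edgeDeg T x ≤ 1 ∧ (edgeDeg T x ≠ 0 → s(v, x) ∈ F) := by
  obtain ⟨T, hTF, hTk⟩ := Set.exists_subset_card_eq hk
  have heq {x : V} (hx : x ≠ v) {e : Sym2 V} (he : e ∈ T) (hxe : x ∈ e) : e = s(v, x) :=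
    (Sym2.mem_and_mem_iff hx.symm).1 ⟨(hTF he).2, hxe⟩
  refine ⟨T, fun e he => (hTF he).1, ?_, fun x hx => ⟨?_, fun hne => ?_⟩⟩
  · rw [edgeDeg_eq_ncard fun e he => (hTF he).2, hTk]
  · refine (Set.ncard_le_one_iff (Set.toFinite _)).2 fun he hf => ?_
    rw [heq hx he.1 he.2, heq hx hf.1 hf.2]
  · obtain ⟨e, he, hxe⟩ := Set.nonempty_of_ncard_ne_zero hne
    exact heq hx he hxe ▸ (hTF he).1

lemma sum_edgeDeg_eq_ncard {A : Finset V} (h : ∀ e ∈ F, ∃! v, v ∈ A ∧ v ∈ e) :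
    ∑ v ∈ A, edgeDeg F v = F.ncard := by
  classical
  lift F to Finset (Sym2 V) using F.toFinite
  have hdeg (v : V) : edgeDeg (F : Set (Sym2 V)) v = (F.bipartiteAbove (· ∈ ·) v).card := by
    rw [← Set.ncard_coe_finset, Finset.bipartiteAbove, Finset.coe_filter]
    rfl
  have hone : ∀ e ∈ F, (A.bipartiteBelow (· ∈ ·) e).card = 1 := fun e he =>
    Finset.card_eq_one.2 <| by
      obtain ⟨v, hv, huniq⟩ := h e he
      exact ⟨v, by ext x; simpa [Finset.bipartiteBelow] using ⟨huniq x, fun hx => hx ▸ hv⟩⟩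
  simp_rw [hdeg, Finset.sum_card_bipartiteAbove_eq_sum_card_bipartiteBelow, Set.ncard_coe_finset]
  rw [Finset.sum_congr rfl hone, Finset.card_eq_sum_ones]

end EdgeDeg

section EdgesBetween

variable {V : Type*} {A A' B B' : Set V}

/-- The set of all potential edges with one end in `A` and the other in `B`. -/
def edgesBetween (A B : Set V) : Set (Sym2 V) :=
  Set.image2 (s(·, ·)) A B

lemma edgesBetween_comm (A B : Set V) : edgesBetween A B = edgesBetween B A :=
  Set.image2_comm fun _ _ => Sym2.eq_swap

lemma edgesBetween_mono (hA : A ⊆ A') (hB : B ⊆ B') : edgesBetween A B ⊆ edgesBetween A' B' :=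
  Set.image2_subset hA hB

lemma mk_mem_edgesBetween {x y : V} :
    s(x, y) ∈ edgesBetween A B ↔ x ∈ A ∧ y ∈ B ∨ y ∈ A ∧ x ∈ B := by
  simp only [edgesBetween, Set.mem_image2, Sym2.eq_iff]
  grind

lemma existsUnique_mem_of_mem_edgesBetween (h : Disjoint A B) {e : Sym2 V}
    (he : e ∈ edgesBetween A B) : ∃! v, v ∈ A ∧ v ∈ e := by
  obtain ⟨x, hx, y, hy, rfl⟩ := he
  have hyA : y ∉ A := h.notMem_of_mem_right hy
  exact ⟨x, ⟨hx, Sym2.mem_mk_left x y⟩, by grind⟩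

end EdgesBetween

section Configuration

variable {V : Type*} [Fintype V] {G : SimpleGraph V} {m p : V → ℕ} {E : Set (Sym2 V)} {a : V → ℕ}

/-- A feasible choice of an edge set `E` of `G` and of a target `a v ∈ {m v, p v}` at each vertex:
the degrees exceed the targets by at most one, but may fall short of them. -/
structure IsConfiguration {V : Type*} (G : SimpleGraph V) (m p : V → ℕ) (E : Set (Sym2 V))
    (a : V → ℕ) : Prop where
  subset_edgeSet : E ⊆ G.edgeSet
  target_eq (v : V) : a v = m v ∨ a v = p v
  edgeDeg_le (v : V) : edgeDeg E v ≤ a v + 1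

/-- A configuration of least total deficiency. The truncated difference `a v - edgeDeg E v` makes
a vertex of degree `a v + 1` count as not deficient. -/
def IsOptimal (G : SimpleGraph V) (m p : V → ℕ) (E : Set (Sym2 V)) (a : V → ℕ) : Prop :=
  MinimalFor (fun c : Set (Sym2 V) × (V → ℕ) => IsConfiguration G m p c.1 c.2)
    (fun c => ∑ v, (c.2 v - edgeDeg c.1 v)) (E, a)

lemma exists_isOptimal (G : SimpleGraph V) (m p : V → ℕ) : ∃ E a, IsOptimal G m p E a := by
  obtain ⟨⟨E, a⟩, h⟩ := exists_minimalFor_of_wellFoundedLT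
    (fun c : Set (Sym2 V) × (V → ℕ) => IsConfiguration G m p c.1 c.2)
    (fun c => ∑ v, (c.2 v - edgeDeg c.1 v))
    ⟨(∅, m), Set.empty_subset _, fun _ => Or.inl rfl, fun v => by simp [edgeDeg_empty]⟩
  exact ⟨E, a, h⟩

namespace IsOptimal

lemma isConfiguration (h : IsOptimal G m p E a) : IsConfiguration G m p E a :=
  h.prop

lemma deficiency_le (h : IsOptimal G m p E a) {E' : Set (Sym2 V)} {a' : V → ℕ}
    (h' : IsConfiguration G m p E' a')
    (hle : ∀ v, a' v - edgeDeg E' v ≤ a v - edgeDeg E v) (w : V) :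
    a w - edgeDeg E w ≤ a' w - edgeDeg E' w := by
  by_contra! hlt
  exact MinimalFor.not_lt h (j := (E', a')) h'
    (Finset.sum_lt_sum (fun v _ => hle v) ⟨w, Finset.mem_univ w, hlt⟩)

end IsOptimal

end Configuration

section Switching

variable {V : Type*} [DecidableEq V] {G : SimpleGraph V} {E : Set (Sym2 V)} {a : V → ℕ}
  {X Y : Set (Sym2 V)} {u v : V}

/-- Switching edges in `X` can raise the degree of a deficient vertex `w` by one at the expense of
lowering that of `v` by one. For `w = v` this leaves all degrees unchanged. -/
def IsLowerable (G : SimpleGraph V) (E : Set (Sym2 V)) (a : V → ℕ) (X : Set (Sym2 V)) (v : V) :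
    Prop :=
  ∃ E' ⊆ G.edgeSet, (∀ e ∉ X, e ∈ E' ↔ e ∈ E) ∧ ∃ w, edgeDeg E w < a w ∧
    ∀ x, edgeDeg E' x + (if x = v then 1 else 0) = edgeDeg E x + if x = w then 1 else 0

/-- Switching edges in `X` can raise the degree of a deficient vertex `w` by one at the expense of
raising also that of `u` by one. For `w = u` the degree of `u` is raised by two. -/
def IsRaisable (G : SimpleGraph V) (E : Set (Sym2 V)) (a : V → ℕ) (X : Set (Sym2 V)) (u : V) :
    Prop :=
  ∃ E' ⊆ G.edgeSet, (∀ e ∉ X, e ∈ E' ↔ e ∈ E) ∧ ∃ w, edgeDeg E w < a w ∧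
    ∀ x, edgeDeg E' x = edgeDeg E x + (if x = w then 1 else 0) + if x = u then 1 else 0

lemma IsLowerable.mono (h : IsLowerable G E a X v) (hXY : X ⊆ Y) : IsLowerable G E a Y v := by
  obtain ⟨E', hE', hX, hw⟩ := h
  exact ⟨E', hE', fun e he => hX e (he <| hXY ·), hw⟩

lemma IsRaisable.mono (h : IsRaisable G E a X u) (hXY : X ⊆ Y) : IsRaisable G E a Y u := by
  obtain ⟨E', hE', hX, hw⟩ := h
  exact ⟨E', hE', fun e he => hX e (he <| hXY ·), hw⟩

lemma isLowerable_of_deficient (hE : E ⊆ G.edgeSet) (hv : edgeDeg E v < a v) :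
    IsLowerable G E a X v :=
  ⟨E, hE, fun _ _ => Iff.rfl, v, hv, fun _ => rfl⟩

lemma IsLowerable.isRaisable_insert [Finite V] (h : IsLowerable G E a X v)
    (hG : s(v, u) ∈ G.edgeSet) (hE : s(v, u) ∉ E) (hX : s(v, u) ∉ X) :
    IsRaisable G E a (insert s(v, u) X) u := by
  obtain ⟨E', hE', hEX, w, hw, hdeg⟩ := h
  have hvu : v ≠ u := G.ne_of_adj hG
  have hdisj : Disjoint E' {s(v, u)} := Set.disjoint_singleton_right.2 (by grind)
  refine ⟨E' ∪ {s(v, u)}, Set.union_subset hE' (Set.singleton_subset_iff.2 hG), by grind,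
    w, hw, fun x => ?_⟩
  rw [edgeDeg_union_of_disjoint hdisj, edgeDeg_singleton hvu, ← add_assoc, hdeg]

lemma IsRaisable.isLowerable_insert [Finite V] (h : IsRaisable G E a X u)
    (hG : s(u, v) ∈ G.edgeSet) (hE : s(u, v) ∈ E) (hX : s(u, v) ∉ X) :
    IsLowerable G E a (insert s(u, v) X) v := by
  obtain ⟨E', hE', hEX, w, hw, hdeg⟩ := h
  have huv : u ≠ v := G.ne_of_adj hG
  have hsub : {s(u, v)} ⊆ E' := Set.singleton_subset_iff.2 (by grind)
  refine ⟨E' \ {s(u, v)}, Set.sdiff_subset.trans hE', by grind, w, hw, fun x => ?_⟩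
  have hdiff := edgeDeg_diff_add hsub x
  rw [edgeDeg_singleton huv, hdeg] at hdiff
  omega

end Switching

section Exchange

variable {V : Type*} [Fintype V] [DecidableEq V] {G : SimpleGraph V} {m p : V → ℕ}
  {E : Set (Sym2 V)} {a : V → ℕ} {X : Set (Sym2 V)} {u v : V}

namespace IsOptimal

lemma edgeDeg_le_of_isLowerable (h : IsOptimal G m p E a) (hv : IsLowerable G E a X v) :
    edgeDeg E v ≤ a v := by
  obtain ⟨E', hE', -, w, hw, hdeg⟩ := hv
  by_contra! hlt
  have hconf : IsConfiguration G m p E' a :=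
    ⟨hE', h.isConfiguration.target_eq, fun x => by grind [h.isConfiguration.edgeDeg_le x]⟩
  have hgain : a w - edgeDeg E w ≤ a w - edgeDeg E' w :=
    h.deficiency_le hconf (fun x => by grind) w
  grind

lemma edgeDeg_eq_of_isRaisable (h : IsOptimal G m p E a) (hu : IsRaisable G E a X u) :
    edgeDeg E u = a u + 1 := by
  obtain ⟨E', hE', -, w, hw, hdeg⟩ := hu
  by_contra hne
  have hle : edgeDeg E u ≤ a u := by grind [h.isConfiguration.edgeDeg_le u]
  have hconf : IsConfiguration G m p E' a :=
    ⟨hE', h.isConfiguration.target_eq, fun x => by grind [h.isConfiguration.edgeDeg_le x]⟩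
  have hgain : a w - edgeDeg E w ≤ a w - edgeDeg E' w :=
    h.deficiency_le hconf (fun x => by grind) w
  grind

lemma add_two_le_edgeDeg_diff_of_isLowerable (h : IsOptimal G m p E a)
    (hv : IsLowerable G E a X v) (hX : ∀ x, s(v, x) ∈ X → edgeDeg E x = a x + 1)
    (hlt : m v < a v) : m v + 2 ≤ edgeDeg (G.edgeSet \ X) v := by
  have hle := h.edgeDeg_le_of_isLowerable hv
  obtain ⟨E', hE', -, w, hw, hdeg⟩ := hv
  by_contra! hfew
  -- Lower the target of `v` to `m v` and delete edges in `X` until its degree is at most `m v + 1`.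
  -- The neighbours losing an edge are at `a + 1`, so none of them becomes deficient.
  have hk : edgeDeg E' v - (m v + 1) ≤ edgeDeg (E' ∩ X) v := by
    have hinter := edgeDeg_inter_add_diff E' X v
    have hdiff := edgeDeg_mono (Set.sdiff_subset_sdiff_left (t := X) hE') v
    omega
  obtain ⟨T, hT, hTv, hTx⟩ := exists_subset_edgeDeg_eq hk
  have hdegT := edgeDeg_diff_add (hT.trans Set.inter_subset_left)
  have hmin : edgeDeg (E' \ T) v = min (edgeDeg E' v) (m v + 1) := by grind
  have hsat {x : V} (hxv : x ≠ v) (hx : edgeDeg T x ≠ 0) : edgeDeg E x = a x + 1 :=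
    hX x ((hTx x hxv).2 hx).2
  have hconf : IsConfiguration G m p (E' \ T) (Function.update a v (m v)) := by
    refine ⟨Set.sdiff_subset.trans hE', fun x => ?_, fun x => ?_⟩
    · grind [h.isConfiguration.target_eq x]
    · grind [h.isConfiguration.edgeDeg_le x]
  have hgain := h.deficiency_le hconf (fun x => by by_cases x = v <;> grind) w
  grind

lemma edgeDeg_inter_lt_of_isRaisable (h : IsOptimal G m p E a) (hu : IsRaisable G E a X u)
    (hX : ∀ x, s(u, x) ∈ X → edgeDeg E x ≤ a x) (hlt : a u < p u) :
    edgeDeg (G.edgeSet ∩ X) u < p u := by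
  have heq := h.edgeDeg_eq_of_isRaisable hu
  obtain ⟨E', hE', -, w, hw, hdeg⟩ := hu
  by_contra! hmany
  -- Raise the target of `u` to `p u` and add edges in `X` until its degree is at least `p u`.
  -- The neighbours gaining an edge are at most at `a`, so none of them exceeds `a + 1`.
  have hk : p u - (a u + 2) ≤ edgeDeg ((G.edgeSet ∩ X) \ E') u := by
    have hinter := edgeDeg_inter_add_diff (G.edgeSet ∩ X) E' u
    have hmono := edgeDeg_mono (Set.inter_subset_right (s := G.edgeSet ∩ X) (t := E')) u
    grind
  obtain ⟨T, hT, hTu, hTx⟩ := exists_subset_edgeDeg_eq hk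
  have hdegT := edgeDeg_union_of_disjoint (Set.disjoint_sdiff_right.mono_right hT)
  have hmax : edgeDeg (E' ∪ T) u = max (edgeDeg E' u) (p u) := by grind
  have hunsat {x : V} (hxu : x ≠ u) (hx : edgeDeg T x ≠ 0) : edgeDeg E x ≤ a x :=
    hX x ((hTx x hxu).2 hx).1.2
  have hconf : IsConfiguration G m p (E' ∪ T) (Function.update a u (p u)) := by
    refine ⟨Set.union_subset hE' fun e he => (hT he).1.1, fun x => ?_, fun x => ?_⟩
    · grind [h.isConfiguration.target_eq x]
    · grind [h.isConfiguration.edgeDeg_le x]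
  have hgain := h.deficiency_le hconf (fun x => by by_cases x = u <;> grind) w
  grind

end IsOptimal

end Exchange

section Alternating

variable {V : Type*} [DecidableEq V] {G : SimpleGraph V} {m p : V → ℕ} {E : Set (Sym2 V)}
  {a : V → ℕ} {A B : Set V} {u v : V}

/-- A pair of vertex sets reached from the deficient vertices by alternating walks between `A` and
`B`. The walks are recorded only through their effect: switching edges between `A` and `B` can lower
the degree at any vertex of `A` and raise it at any vertex of `B` while repairing a deficiency. -/
structure IsAlternating (G : SimpleGraph V) (E : Set (Sym2 V)) (a : V → ℕ) (A B : Set V) :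
    Prop where
  mem_of_deficient (w : V) : edgeDeg E w < a w → w ∈ A
  isLowerable (v : V) : v ∈ A → IsLowerable G E a (edgesBetween A B) v
  isRaisable (u : V) : u ∈ B → IsRaisable G E a (edgesBetween A B) u

lemma isAlternating_deficient (hE : E ⊆ G.edgeSet) :
    IsAlternating G E a {w | edgeDeg E w < a w} ∅ where
  mem_of_deficient _ hw := hw
  isLowerable _ hv := isLowerable_of_deficient hE hv
  isRaisable _ hu := hu.elim

namespace IsAlternating

lemma insert_right [Finite V] (h : IsAlternating G E a A B) (hAB : Disjoint A B) (hv : v ∈ A)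
    (huB : u ∉ B) (hG : s(v, u) ∈ G.edgeSet) (hE : s(v, u) ∉ E) :
    IsAlternating G E a A (insert u B) := by
  have hmono : edgesBetween A B ⊆ edgesBetween A (insert u B) :=
    edgesBetween_mono subset_rfl (Set.subset_insert u B)
  have hX : s(v, u) ∉ edgesBetween A B := by
    have := hAB.notMem_of_mem_left hv
    grind [mk_mem_edgesBetween]
  refine ⟨h.mem_of_deficient, fun x hx => (h.isLowerable x hx).mono hmono, fun x hx => ?_⟩
  rcases hx with rfl | hx
  · exact ((h.isLowerable v hv).isRaisable_insert hG hE hX).mono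
      (Set.insert_subset (mk_mem_edgesBetween.2 (.inl ⟨hv, Set.mem_insert x B⟩)) hmono)
  · exact (h.isRaisable x hx).mono hmono

lemma insert_left [Finite V] (h : IsAlternating G E a A B) (hAB : Disjoint A B) (hu : u ∈ B)
    (hvA : v ∉ A) (hG : s(u, v) ∈ G.edgeSet) (hE : s(u, v) ∈ E) :
    IsAlternating G E a (insert v A) B := by
  have hmono : edgesBetween A B ⊆ edgesBetween (insert v A) B :=
    edgesBetween_mono (Set.subset_insert v A) subset_rfl
  have hX : s(u, v) ∉ edgesBetween A B := by
    have := hAB.notMem_of_mem_right hu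
    grind [mk_mem_edgesBetween]
  refine ⟨fun w hw => .inr (h.mem_of_deficient w hw), fun x hx => ?_,
    fun x hx => (h.isRaisable x hx).mono hmono⟩
  rcases hx with rfl | hx
  · exact ((h.isRaisable u hu).isLowerable_insert hG hE hX).mono
      (Set.insert_subset (mk_mem_edgesBetween.2 (.inr ⟨Set.mem_insert x A, hu⟩)) hmono)
  · exact (h.isLowerable x hx).mono hmono

lemma disjoint [Fintype V] (h : IsAlternating G E a A B) (hopt : IsOptimal G m p E a) :
    Disjoint A B := by
  refine Set.disjoint_left.2 fun x hA hB => ?_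
  have hle := hopt.edgeDeg_le_of_isLowerable (h.isLowerable x hA)
  have heq := hopt.edgeDeg_eq_of_isRaisable (h.isRaisable x hB)
  omega

end IsAlternating

lemma IsOptimal.exists_isAlternating_closed [Fintype V] (hopt : IsOptimal G m p E a) :
    ∃ A B, IsAlternating G E a A B ∧ (∀ v ∈ A, ∀ u, s(v, u) ∈ G.edgeSet \ E → u ∈ B) ∧
      ∀ u ∈ B, ∀ v, s(u, v) ∈ E → v ∈ A := by
  have hE := hopt.isConfiguration.subset_edgeSet
  obtain ⟨⟨A, B⟩, h, hmax⟩ :=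
    (Set.toFinite {c : Set V × Set V | IsAlternating G E a c.1 c.2}).exists_maximal
      ⟨(_, _), isAlternating_deficient hE⟩
  have hAB : Disjoint A B := h.disjoint hopt
  refine ⟨A, B, h, fun v hv u hvu => ?_, fun u hu v huv => ?_⟩
  · by_contra huB
    exact huB <| (hmax (y := (A, insert u B)) (h.insert_right hAB hv huB hvu.1 hvu.2)
      ⟨subset_rfl, Set.subset_insert u B⟩).2 (Set.mem_insert u B)
  · by_contra hvA
    exact hvA <| (hmax (y := (insert v A, B)) (h.insert_left hAB hu hvA (hE huv) huv)
      ⟨Set.subset_insert v A, subset_rfl⟩).1 (Set.mem_insert v A)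

end Alternating

section TargetPair

/-- Two degree targets `m` and `p` at a vertex of degree `d` which are close enough to `d / 2` and
to each other: either target yields the bounds of the counting argument, or it can be exchanged for
the other one. -/
structure IsTargetPair (d m p : ℕ) : Prop where
  two_mul_le : 2 * m ≤ d
  le_two_mul_add_two : d ≤ 2 * p + 2
  two_mul_le_add_two : 2 * p ≤ d + m + 2
  le_two_mul_add_three : p ≤ 2 * m + 3

variable {V : Type*} [Fintype V] [DecidableEq V] {G : SimpleGraph V} {m p : V → ℕ}
  {E : Set (Sym2 V)} {a : V → ℕ} {X : Set (Sym2 V)} {u v : V}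

namespace IsOptimal

lemma edgeDeg_inter_add_le_of_isLowerable (h : IsOptimal G m p E a)
    (hd : IsTargetPair (edgeDeg G.edgeSet v) (m v) (p v)) (hv : IsLowerable G E a X v)
    (hX : ∀ x, s(v, x) ∈ X → edgeDeg E x = a x + 1) :
    edgeDeg (G.edgeSet ∩ X) v + 2 * a v ≤ 2 * edgeDeg G.edgeSet v := by
  have hexch := h.add_two_le_edgeDeg_diff_of_isLowerable hv hX
  have hinter := edgeDeg_inter_add_diff G.edgeSet X v
  have htarget := h.isConfiguration.target_eq v
  have hm := hd.two_mul_le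
  have hp := hd.two_mul_le_add_two
  omega

lemma edgeDeg_inter_le_of_isRaisable (h : IsOptimal G m p E a)
    (hd : IsTargetPair (edgeDeg G.edgeSet u) (m u) (p u)) (hu : IsRaisable G E a X u)
    (hX : ∀ x, s(u, x) ∈ X → edgeDeg E x ≤ a x) :
    edgeDeg (G.edgeSet ∩ X) u ≤ 2 * (a u + 1) := by
  have hexch := h.edgeDeg_inter_lt_of_isRaisable hu hX
  have hinter := edgeDeg_mono (Set.inter_subset_left (s := G.edgeSet) (t := X)) u
  have htarget := h.isConfiguration.target_eq u
  have hp := hd.le_two_mul_add_two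
  have hpm := hd.le_two_mul_add_three
  omega

end IsOptimal

end TargetPair

section Counting

variable {V : Type*} [Fintype V] [DecidableEq V] {G : SimpleGraph V} {m p : V → ℕ}
  {E : Set (Sym2 V)} {a : V → ℕ} {A B : Set V} {u v : V}

lemma IsAlternating.edgeDeg_inter_edgesBetween_add_le (h : IsAlternating G E a A B)
    (hopt : IsOptimal G m p E a)
    (hd : IsTargetPair (edgeDeg G.edgeSet v) (m v) (p v))
    (hclosed : ∀ v ∈ A, ∀ u, s(v, u) ∈ G.edgeSet \ E → u ∈ B) (hv : v ∈ A) :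
    edgeDeg (G.edgeSet ∩ edgesBetween A B) v + 2 * (a v - edgeDeg E v) ≤
      2 * edgeDeg ((G.edgeSet ∩ edgesBetween A B) \ E) v := by
  have hvB : v ∉ B := (h.disjoint hopt).notMem_of_mem_left hv
  have hbound := hopt.edgeDeg_inter_add_le_of_isLowerable hd (h.isLowerable v hv)
    fun x hx => hopt.edgeDeg_eq_of_isRaisable (h.isRaisable x (by grind [mk_mem_edgesBetween]))
  have hle := hopt.edgeDeg_le_of_isLowerable (h.isLowerable v hv)
  have hdiff := edgeDeg_diff_add hopt.isConfiguration.subset_edgeSet v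
  have hcongr : edgeDeg ((G.edgeSet ∩ edgesBetween A B) \ E) v = edgeDeg (G.edgeSet \ E) v :=
    edgeDeg_congr fun e he => by
      obtain ⟨u, rfl⟩ := Sym2.mem_iff_exists.1 he
      grind [mk_mem_edgesBetween]
  omega

lemma IsAlternating.edgeDeg_inter_edgesBetween_le (h : IsAlternating G E a A B)
    (hopt : IsOptimal G m p E a)
    (hd : IsTargetPair (edgeDeg G.edgeSet u) (m u) (p u))
    (hclosed : ∀ u ∈ B, ∀ v, s(u, v) ∈ E → v ∈ A) (hu : u ∈ B) :
    edgeDeg (G.edgeSet ∩ edgesBetween A B) u ≤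
      2 * edgeDeg (G.edgeSet ∩ edgesBetween A B ∩ E) u := by
  have huA : u ∉ A := (h.disjoint hopt).notMem_of_mem_right hu
  have hbound := hopt.edgeDeg_inter_le_of_isRaisable hd (h.isRaisable u hu)
    fun x hx => hopt.edgeDeg_le_of_isLowerable (h.isLowerable x (by grind [mk_mem_edgesBetween]))
  have hE := hopt.isConfiguration.subset_edgeSet
  have hcongr : edgeDeg (G.edgeSet ∩ edgesBetween A B ∩ E) u = edgeDeg E u :=
    edgeDeg_congr fun e he => by
      obtain ⟨v, rfl⟩ := Sym2.mem_iff_exists.1 he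
      grind [mk_mem_edgesBetween]
  rwa [hcongr, hopt.edgeDeg_eq_of_isRaisable (h.isRaisable u hu)]

end Counting

section FourDegrees

variable {V : Type*} {G : SimpleGraph V} {m p : V → ℕ} {E : Set (Sym2 V)} {a : V → ℕ}

lemma IsOptimal.le_edgeDeg [Fintype V] (hopt : IsOptimal G m p E a)
    (hd : ∀ v, IsTargetPair (edgeDeg G.edgeSet v) (m v) (p v)) (w : V) : a w ≤ edgeDeg E w := by
  classical
  by_contra! hw
  obtain ⟨A, B, h, hA, hB⟩ := hopt.exists_isAlternating_closed
  have hAB : Disjoint A B := h.disjoint hopt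
  have hwA : w ∈ A := h.mem_of_deficient w hw
  lift A to Finset V using A.toFinite
  lift B to Finset V using B.toFinite
  set F := G.edgeSet ∩ edgesBetween (A : Set V) B
  have sum_A {F' : Set (Sym2 V)} (hF' : F' ⊆ F) : ∑ v ∈ A, edgeDeg F' v = F'.ncard :=
    sum_edgeDeg_eq_ncard fun _ he => existsUnique_mem_of_mem_edgesBetween hAB (hF' he).2
  have sum_B {F' : Set (Sym2 V)} (hF' : F' ⊆ F) : ∑ u ∈ B, edgeDeg F' u = F'.ncard :=
    sum_edgeDeg_eq_ncard fun _ he => existsUnique_mem_of_mem_edgesBetween hAB.symm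
      (edgesBetween_comm (A : Set V) B ▸ (hF' he).2)
  have hlt : F.ncard < 2 * (F \ E).ncard := by
    rw [← sum_A subset_rfl, ← sum_A Set.sdiff_subset, Finset.mul_sum]
    have hbound (v : V) (hv : v ∈ A) :
        edgeDeg F v + 2 * (a v - edgeDeg E v) ≤ 2 * edgeDeg (F \ E) v :=
      h.edgeDeg_inter_edgesBetween_add_le hopt (hd v) hA hv
    exact Finset.sum_lt_sum (fun v hv => le_of_add_le_left (hbound v hv))
      ⟨w, hwA, by have := hbound w hwA; omega⟩
  have hle : F.ncard ≤ 2 * (F ∩ E).ncard := by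
    rw [← sum_B subset_rfl, ← sum_B Set.inter_subset_left, Finset.mul_sum]
    exact Finset.sum_le_sum fun u hu => h.edgeDeg_inter_edgesBetween_le hopt (hd u) hB hu
  have hsplit := Set.ncard_inter_add_ncard_sdiff_eq_ncard F E
  omega

theorem exists_edgeDeg_mem_of_isTargetPair [Finite V]
    (hd : ∀ v, IsTargetPair (edgeDeg G.edgeSet v) (m v) (p v)) :
    ∃ E ⊆ G.edgeSet, ∀ v, edgeDeg E v ∈ ({m v, m v + 1, p v, p v + 1} : Set ℕ) := by
  cases nonempty_fintype V
  obtain ⟨E, a, hopt⟩ := exists_isOptimal G m p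
  refine ⟨E, hopt.isConfiguration.subset_edgeSet, fun v => ?_⟩
  have hge := hopt.le_edgeDeg hd v
  have hle := hopt.isConfiguration.edgeDeg_le v
  have ha := hopt.isConfiguration.target_eq v
  simp only [Set.mem_insert_iff, Set.mem_singleton_iff]
  omega

end FourDegrees

lemma exists_isTargetPair_modEq {d : ℕ} {l : ℤ} (hl : 0 < l) (hd : 6 * l ≤ d) (t : ℤ) :
    ∃ m p : ℕ, IsTargetPair d m p ∧ ∀ k ∈ ({m, m + 1, p, p + 1} : Set ℕ),
      d ≤ 3 * k ∧ 3 * k ≤ 2 * d ∧ (k ≡ t [ZMOD l] ∨ k ≡ t + 1 [ZMOD l]) := by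
  lift l to ℕ using hl.le
  obtain ⟨z, hz, hzl, hzt⟩ := Int.existsUnique_equiv (d / 2 - t) hl
  obtain ⟨m, hm⟩ : ∃ m : ℕ, (m : ℤ) = d / 2 - z := ⟨(d / 2 - z).toNat, by omega⟩
  have hmt : m ≡ t [ZMOD l] := by
    simpa [hm] using (Int.ModEq.refl (d / 2 : ℤ)).sub hzt
  -- For `d ≤ 2 * m + 2` the value `m + l + 1` may exceed `2 * d / 3`.
  obtain ⟨p, hpt, hp⟩ : ∃ p : ℕ, p ≡ t [ZMOD l] ∧
      (p = m ∧ d ≤ 2 * m + 2 ∨ p = m + l ∧ 2 * m + 2 < d) := by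
    rcases le_or_gt d (2 * m + 2) with hdm | hdm
    · exact ⟨m, hmt, .inl ⟨rfl, hdm⟩⟩
    · exact ⟨m + l, by simpa using hmt, .inr ⟨rfl, hdm⟩⟩
  refine ⟨m, p, by constructor <;> omega, ?_⟩
  rintro k (rfl | rfl | rfl | rfl)
  · exact ⟨by omega, by omega, .inl hmt⟩
  · exact ⟨by omega, by omega, .inr <| mod_cast hmt.add_right 1⟩
  · exact ⟨by omega, by omega, .inl hpt⟩
  · exact ⟨by omega, by omega, .inr <| mod_cast hpt.add_right 1⟩

/-- Degree-constrained subgraph lemma (Addario-Berry, Dalal, McDiarmid, Reed, Thomason):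
if `G` has minimum degree at least `12` and `λ_v ≥ 2` with `6λ_v ≤ d(v)` for every `v`,
then for every `t : V → ℤ` there is a spanning subgraph `H` of `G` with
`d_H(v) ∈ [d(v)/3, 2d(v)/3]` and `d_H(v) ≡ t(v)` or `t(v)+1 (mod λ_v)` for each `v`. -/
theorem degree_constrained_subgraph
    {V : Type*} [Fintype V] (G : SimpleGraph V) [DecidableRel G.Adj]
    (hmin : ∀ v : V, 12 ≤ G.degree v)
    (lam : V → ℤ) (hlam2 : ∀ v, 2 ≤ lam v)
    (hlam6 : ∀ v, 6 * lam v ≤ (G.degree v : ℤ))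
    (t : V → ℤ) :
    ∃ E' ⊆ G.edgeSet, ∀ v : V,
      ((G.degree v : ℝ) / 3 ≤ (edgeDeg E' v : ℝ) ∧
        (edgeDeg E' v : ℝ) ≤ 2 * (G.degree v : ℝ) / 3) ∧
      (Int.ModEq (lam v) (edgeDeg E' v : ℤ) (t v) ∨
        Int.ModEq (lam v) (edgeDeg E' v : ℤ) (t v + 1)) := by
  choose m p hmp hmod using fun v =>
    exists_isTargetPair_modEq (zero_lt_two.trans_le (hlam2 v)) (hlam6 v) (t v)
  simp only [← edgeDeg_edgeSet] at hmp
  obtain ⟨E, hEG, hE⟩ := exists_edgeDeg_mem_of_isTargetPair hmp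
  refine ⟨E, hEG, fun v => ?_⟩
  obtain ⟨hlow, hhigh, hcong⟩ := hmod v _ (hE v)
  have hlow' : (G.degree v : ℝ) ≤ 3 * edgeDeg E v := mod_cast hlow
  have hhigh' : (3 * edgeDeg E v : ℝ) ≤ 2 * G.degree v := mod_cast hhigh
  exact ⟨⟨by linarith, by linarith⟩, hcong⟩
end

section
/- Let G=(V,E) be a d-regular finite simple graph with d ≥ 54000, let k = 0.025, s = 0.0031, r = 0.26, u = 0.131, and let K = ⌈kd⌉. Then there exists an assignment of colours C_v = (O_v, I_v) ∈ [K]² to the vertices v ∈ V such that, with U = {v ∈ V : ∃ w adjacent to v with C_w = C_v}, T = {vw ∈ E : v ∈ U or w ∈ U}, S = {vw ∈ E \ T : O_v = O_w or I_v = I_w}, and R = {vw ∈ E \ T : 1 ≤ |O_v − O_w|_K ≤ (sd+7)/2 or 1 ≤ |I_v − I_w|_K ≤ (sd+7)/2}, every vertex v ∈ V satisfies: (i) the number of edges of S incident with v is less than sd; (ii) the number of edges of R incident with v is less than rd; (iii) the number of neighbours of v lying in U is less than ud. -/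
/-- The distance modulo `K` between two integers:
`|m − n|_K = min(m − n mod K, n − m mod K)`. -/
def modDist (K : ℕ) (m n : ℤ) : ℤ :=
  min ((m - n) % (K : ℤ)) ((n - m) % (K : ℤ))

/-- The set `U` of vertices to be uncoloured: vertices having a neighbour
with the same colour. -/
def uncolSet {V : Type*} (G : SimpleGraph V) (C : V → ℕ × ℕ) : Set V :=
  {v | ∃ w, G.Adj v w ∧ C w = C v}

/-- The set `T` of edges touching `U`. -/
def touchSet {V : Type*} (G : SimpleGraph V) (C : V → ℕ × ℕ) : Set (Sym2 V) :=
  {e | e ∈ G.edgeSet ∧ ∃ v w : V, e = s(v, w) ∧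
    (v ∈ uncolSet G C ∨ w ∈ uncolSet G C)}

/-- The set `S` of special edges: edges outside `T` whose ends agree
on one of the two coordinates of their colours. -/
def specialSet {V : Type*} (G : SimpleGraph V) (C : V → ℕ × ℕ) : Set (Sym2 V) :=
  {e | e ∈ G.edgeSet \ touchSet G C ∧ ∃ v w : V, e = s(v, w) ∧
    ((C v).1 = (C w).1 ∨ (C v).2 = (C w).2)}

/-- The set `R` of risky edges: edges outside `T` whose ends have, in one of the two
coordinates, colours at distance modulo `K` between `1` and the bound `b`. -/
def riskySet {V : Type*} (G : SimpleGraph V) (C : V → ℕ × ℕ) (K : ℕ) (b : ℝ) :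
    Set (Sym2 V) :=
  {e | e ∈ G.edgeSet \ touchSet G C ∧ ∃ v w : V, e = s(v, w) ∧
    ((1 ≤ modDist K ((C v).1) ((C w).1) ∧ (modDist K ((C v).1) ((C w).1) : ℝ) ≤ b) ∨
     (1 ≤ modDist K ((C v).2) ((C w).2) ∧ (modDist K ((C v).2) ((C w).2) : ℝ) ≤ b))}

/-!
Give the vertices independent uniform colours in `[K]²`. A neighbour of `v` shares a coordinate
with `v` with probability at most `2 / K`, and is near `v` in a coordinate with probability at most
`1 - (1 - (sd + 7) / K) ^ 2`, whatever the colour of `v`. Chernoff's bound therefore makes each of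
(i) and (ii) fail with probability at most `exp (-d / 1500)`.

For (iii), reveal the colours outside `N(v)` first and then those in `N(v)` one vertex at a time.
Let `X` be the number of vertices of `N(v)` that repeat the colour of a neighbour outside `N(v)`,
and `Y` the number of those that repeat an earlier colour of `N(v)`. A vertex of `U ∩ N(v)` counted
in neither is the first of its colour in `N(v)` and is followed by another vertex of this colour,
which is counted in `Y`. Hence `|U ∩ N(v)| ≤ X + 2Y`. Each revealed vertex is counted in `X` and
in `Y` with conditional probability at most `d / K ^ 2` each, so the exponential moment method
bounds the failure probability by `exp (-d / 1000)`.

The first two failures at `v` depend on the colours in a ball of radius one around `v`, the third on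
those in a ball of radius two. The local lemma with these two kinds of events gives the colouring.
-/

section LocalLemma

open MeasureTheory

variable {Ω ι : Type*} {A : ι → Set Ω}

/-- The event that none of the events `A i` with `i ∈ S` occurs. -/
def avoidSet (A : ι → Set Ω) (S : Finset ι) : Set Ω :=
  ⋂ i ∈ S, (A i)ᶜ

lemma mem_avoidSet {S : Finset ι} {ω : Ω} : ω ∈ avoidSet A S ↔ ∀ i ∈ S, ω ∉ A i := by
  simp [avoidSet]

lemma avoidSet_anti {S T : Finset ι} (h : S ⊆ T) : avoidSet A T ⊆ avoidSet A S :=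
  Set.biInter_subset_biInter_left h

variable [MeasurableSpace Ω] {μ : Measure Ω}

lemma measurableSet_avoidSet (hA : ∀ i, MeasurableSet (A i)) (S : Finset ι) :
    MeasurableSet (avoidSet A S) :=
  S.measurableSet_biInter fun i _ => (hA i).compl

variable {x : ι → ℝ}

lemma prod_one_sub_mul_measureReal_avoidSet_le [IsFiniteMeasure μ] [DecidableEq ι]
    (hA : ∀ i, MeasurableSet (A i)) (hx : ∀ i, x i ≤ 1) {S T : Finset ι} (hST : Disjoint S T)
    (h : ∀ R ⊂ S ∪ T, ∀ i, μ.real (A i ∩ avoidSet A R) ≤ x i * μ.real (avoidSet A R)) :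
    (∏ i ∈ T, (1 - x i)) * μ.real (avoidSet A S) ≤ μ.real (avoidSet A (S ∪ T)) := by
  induction T using Finset.induction_on with
  | empty => simp
  | insert a T ha ih =>
    rw [Finset.disjoint_insert_right] at hST
    rw [Finset.union_insert] at h ⊢
    have hssub : S ∪ T ⊂ insert a (S ∪ T) :=
      Finset.ssubset_insert (by simp [hST.1, ha])
    have hinsert : avoidSet A (insert a (S ∪ T)) = avoidSet A (S ∪ T) \ A a := by
      ext; simp [mem_avoidSet, and_comm]
    have hsplit := measureReal_inter_add_sdiff (μ := μ) (s := avoidSet A (S ∪ T)) (hA a)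
    rw [Set.inter_comm, ← hinsert] at hsplit
    calc (∏ i ∈ insert a T, (1 - x i)) * μ.real (avoidSet A S)
        = (1 - x a) * ((∏ i ∈ T, (1 - x i)) * μ.real (avoidSet A S)) := by
          rw [Finset.prod_insert ha, mul_assoc]
      _ ≤ (1 - x a) * μ.real (avoidSet A (S ∪ T)) :=
          mul_le_mul_of_nonneg_left (ih hST.2 fun R hR => h R (hR.trans hssub))
            (sub_nonneg.2 (hx a))
      _ ≤ μ.real (avoidSet A (insert a (S ∪ T))) := by
          linarith [h _ hssub a]

variable {Γ : ι → Finset ι}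

lemma measureReal_inter_avoidSet_le [IsFiniteMeasure μ] (hA : ∀ i, MeasurableSet (A i))
    (hx₀ : ∀ i, 0 ≤ x i) (hx₁ : ∀ i, x i ≤ 1)
    (hΓ : ∀ i S, Disjoint S (Γ i) →
      μ.real (A i ∩ avoidSet A S) ≤ μ.real (A i) * μ.real (avoidSet A S))
    (hμ : ∀ i, μ.real (A i) ≤ x i * ∏ j ∈ Γ i, (1 - x j)) (S : Finset ι) (i : ι) :
    μ.real (A i ∩ avoidSet A S) ≤ x i * μ.real (avoidSet A S) := by
  classical
  induction S using Finset.strongInduction generalizing i with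
  | H S ih =>
  have hsplit : S \ Γ i ∪ S ∩ Γ i = S := Finset.sdiff_union_inter S (Γ i)
  have hcond : (∏ j ∈ S ∩ Γ i, (1 - x j)) * μ.real (avoidSet A (S \ Γ i)) ≤
      μ.real (avoidSet A S) := by
    have := prod_one_sub_mul_measureReal_avoidSet_le (μ := μ) hA hx₁
      (Finset.disjoint_sdiff_inter S (Γ i)) (by rwa [hsplit])
    rwa [hsplit] at this
  have hprod : ∏ j ∈ Γ i, (1 - x j) ≤ ∏ j ∈ S ∩ Γ i, (1 - x j) :=
    Finset.prod_le_prod_of_subset_of_le_one Finset.inter_subset_right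
      (fun j _ => sub_nonneg.2 (hx₁ j)) fun j _ _ => by linarith [hx₀ j]
  calc μ.real (A i ∩ avoidSet A S)
      ≤ μ.real (A i ∩ avoidSet A (S \ Γ i)) :=
        measureReal_mono (Set.inter_subset_inter_right _ (avoidSet_anti Finset.sdiff_subset))
    _ ≤ μ.real (A i) * μ.real (avoidSet A (S \ Γ i)) := hΓ i _ Finset.sdiff_disjoint
    _ ≤ x i * (∏ j ∈ S ∩ Γ i, (1 - x j)) * μ.real (avoidSet A (S \ Γ i)) := by
        gcongr
        exact (hμ i).trans (mul_le_mul_of_nonneg_left hprod (hx₀ i))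
    _ ≤ x i * μ.real (avoidSet A S) := by
        rw [mul_assoc]
        exact mul_le_mul_of_nonneg_left hcond (hx₀ i)

variable [IsProbabilityMeasure μ]

/-- The Lovász local lemma, in its asymmetric lopsided form. -/
theorem prod_one_sub_le_measureReal_avoidSet (hA : ∀ i, MeasurableSet (A i))
    (hx₀ : ∀ i, 0 ≤ x i) (hx₁ : ∀ i, x i ≤ 1)
    (hΓ : ∀ i S, Disjoint S (Γ i) →
      μ.real (A i ∩ avoidSet A S) ≤ μ.real (A i) * μ.real (avoidSet A S))
    (hμ : ∀ i, μ.real (A i) ≤ x i * ∏ j ∈ Γ i, (1 - x j)) (S : Finset ι) :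
    ∏ i ∈ S, (1 - x i) ≤ μ.real (avoidSet A S) := by
  classical
  simpa [avoidSet] using prod_one_sub_mul_measureReal_avoidSet_le (μ := μ) hA hx₁
    (Finset.disjoint_empty_left S)
    fun R _ => measureReal_inter_avoidSet_le hA hx₀ hx₁ hΓ hμ R

lemma one_sub_sum_le_prod_one_sub {s : Finset ι} (hx₀ : ∀ i ∈ s, 0 ≤ x i)
    (hx₁ : ∀ i ∈ s, x i ≤ 1) : 1 - ∑ i ∈ s, x i ≤ ∏ i ∈ s, (1 - x i) := by
  classical
  induction s using Finset.induction_on with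
  | empty => simp
  | insert a s ha ih =>
    rw [Finset.forall_mem_insert] at hx₀ hx₁
    rw [Finset.sum_insert ha, Finset.prod_insert ha]
    nlinarith [ih hx₀.2 hx₁.2, hx₀.1, hx₁.1, Finset.sum_nonneg hx₀.2]

theorem measureReal_avoidSet_pos_of_sum_le (hA : ∀ i, MeasurableSet (A i))
    (hΓ : ∀ i S, Disjoint S (Γ i) →
      μ.real (A i ∩ avoidSet A S) ≤ μ.real (A i) * μ.real (avoidSet A S))
    {p : ι → ℝ} (hμ : ∀ i, μ.real (A i) ≤ p i) (hp : ∀ i, p i ≤ 1 / 4)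
    (hsum : ∀ i, ∑ j ∈ Γ i, p j ≤ 1 / 4) (S : Finset ι) :
    0 < μ.real (avoidSet A S) := by
  have hp₀ : ∀ i, 0 ≤ p i := fun i => measureReal_nonneg.trans (hμ i)
  refine lt_of_lt_of_le (Finset.prod_pos fun i _ => ?_)
    (prod_one_sub_le_measureReal_avoidSet (x := fun i => 2 * p i) hA
      (fun i => by linarith [hp₀ i]) (fun i => by linarith [hp i]) hΓ (fun i => ?_) S)
  · linarith [hp i]
  · have hprod := one_sub_sum_le_prod_one_sub (s := Γ i) (x := fun j => 2 * p j)
      (fun j _ => by linarith [hp₀ j]) (fun j _ => by linarith [hp j])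
    rw [← Finset.mul_sum] at hprod
    nlinarith [hμ i, hsum i, hp₀ i]

end LocalLemma

section ProductSpace

open MeasureTheory ProbabilityTheory

variable {ι : Type*} {X : ι → Type*} [∀ i, MeasurableSpace (X i)]

/-- The set is the slice of `A` obtained by freezing the coordinates outside `s`. -/
lemma exists_measurableSet_preimage_restrict {A : Set (∀ i, X i)} (hA : MeasurableSet A)
    {s : Finset ι} (hs : DependsOn (· ∈ A) (s : Set ι)) :
    ∃ B : Set (∀ i : s, X i), MeasurableSet B ∧ s.restrict ⁻¹' B = A := by
  classical
  rcases isEmpty_or_nonempty (∀ i, X i) with _ | ⟨⟨z⟩⟩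
  · exact ⟨∅, .empty, Subsingleton.elim _ _⟩
  refine ⟨(fun y => Function.updateFinset z s y) ⁻¹' A, measurable_updateFinset hA, ?_⟩
  ext x
  refine iff_of_eq (hs fun i hi => ?_)
  simp [Function.updateFinset, Finset.mem_coe.1 hi]

lemma dependsOn_mem_avoidSet {X : ι → Type*} {κ : Type*} [DecidableEq ι]
    {A : κ → Set (∀ i, X i)} {D : κ → Finset ι}
    (hD : ∀ k, DependsOn (· ∈ A k) (D k : Set ι)) (S : Finset κ) :
    DependsOn (· ∈ avoidSet A S) (S.biUnion D : Set ι) := by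
  intro x y hxy
  simp only [mem_avoidSet, eq_iff_iff]
  refine forall₂_congr fun k hk => not_congr (iff_of_eq (hD k fun i hi => hxy i ?_))
  exact Finset.mem_biUnion.2 ⟨k, hk, hi⟩

variable [Fintype ι] {μ : ∀ i, Measure (X i)} [∀ i, IsProbabilityMeasure (μ i)]

lemma measureReal_pi_inter_of_dependsOn_disjoint {A B : Set (∀ i, X i)} (hA : MeasurableSet A)
    (hB : MeasurableSet B) {s t : Finset ι} (hs : DependsOn (· ∈ A) (s : Set ι))
    (ht : DependsOn (· ∈ B) (t : Set ι)) (hst : Disjoint s t) :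
    (Measure.pi μ).real (A ∩ B) = (Measure.pi μ).real A * (Measure.pi μ).real B := by
  obtain ⟨A', hA', rfl⟩ := exists_measurableSet_preimage_restrict hA hs
  obtain ⟨B', hB', rfl⟩ := exists_measurableSet_preimage_restrict hB ht
  have hindep : iIndepFun (fun i (x : ∀ i, X i) => x i) (Measure.pi μ) :=
    iIndepFun_pi fun i => aemeasurable_id
  have hmul := (hindep.indepFun_finset s t hst measurable_pi_apply).measure_inter_preimage_eq_mul
    A' B' hA' hB'
  rw [Measure.real, Measure.real, Measure.real, ← ENNReal.toReal_mul]
  exact congrArg ENNReal.toReal hmul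

variable {κ : Type*} {A : κ → Set (∀ i, X i)} {D : κ → Finset ι}

lemma exists_frequently_forall_notMem [Fintype κ] [DecidableEq ι] (hA : ∀ k, MeasurableSet (A k))
    (hD : ∀ k, DependsOn (· ∈ A k) (D k : Set ι)) {p : κ → ℝ}
    (hμ : ∀ k, (Measure.pi μ).real (A k) ≤ p k) (hp : ∀ k, p k ≤ 1 / 4)
    (hsum : ∀ k, ∑ l with ¬Disjoint (D k) (D l), p l ≤ 1 / 4) :
    ∃ᵐ x ∂Measure.pi μ, ∀ k, x ∉ A k := by
  classical
  have hΓ (k) (S : Finset κ) (hS : Disjoint S ({l | ¬Disjoint (D k) (D l)} : Finset κ)) :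
      (Measure.pi μ).real (A k ∩ avoidSet A S) ≤
        (Measure.pi μ).real (A k) * (Measure.pi μ).real (avoidSet A S) := by
    refine (measureReal_pi_inter_of_dependsOn_disjoint (hA k) (measurableSet_avoidSet hA S) (hD k)
      (dependsOn_mem_avoidSet hD S) ?_).le
    refine (Finset.disjoint_biUnion_right _ _ _).2 fun l hl => ?_
    simpa using Finset.disjoint_left.1 hS hl
  have hpos := measureReal_avoidSet_pos_of_sum_le hA hΓ hμ hp hsum Finset.univ
  rw [frequently_ae_iff]
  simpa [avoidSet, Set.ofPred_forall, Set.compl_def] using (measureReal_ne_zero_iff).1 hpos.ne'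

end ProductSpace

lemma sum_not_disjoint_le {ι κ : Type*} [Fintype κ] [DecidableEq ι] {D : κ → Finset ι} {p : κ → ℝ}
    (hp : ∀ k, 0 ≤ p k) (s : Finset ι) :
    ∑ l with ¬Disjoint s (D l), p l ≤ ∑ i ∈ s, ∑ l with i ∈ D l, p l := by
  simp_rw [Finset.sum_filter]
  rw [Finset.sum_comm]
  refine Finset.sum_le_sum fun l _ => ?_
  have hterm (i) : 0 ≤ if i ∈ D l then p l else 0 := by split_ifs <;> simp [hp l]
  split_ifs with hl
  · exact Finset.sum_nonneg fun i _ => hterm i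
  · obtain ⟨i, his, hil⟩ := Finset.not_disjoint_iff.1 hl
    simpa only [hil, if_true] using Finset.single_le_sum (fun i _ => hterm i) his

section AdaptiveChernoff

open MeasureTheory ProbabilityTheory
open scoped ENNReal

lemma mgf_le_exp_of_mem_Icc {Ω : Type*} [MeasurableSpace Ω] {μ : Measure Ω} [IsProbabilityMeasure μ]
    {Y : Ω → ℝ} (hY : Measurable Y) (hY₀₁ : ∀ ω, Y ω ∈ Set.Icc 0 1) {m t : ℝ}
    (hm : ∫ ω, Y ω ∂μ ≤ m) (ht : 0 ≤ t) :
    mgf Y μ t ≤ Real.exp (m * (Real.exp t - 1)) := by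
  have hchord (ω) : Real.exp (t * Y ω) ≤ 1 + Y ω * (Real.exp t - 1) := by
    have := convexOn_exp.2 (Set.mem_univ 0) (Set.mem_univ t) (sub_nonneg.2 (hY₀₁ ω).2) (hY₀₁ ω).1
      (by ring)
    simp only [smul_eq_mul, mul_zero, Real.exp_zero, zero_add] at this
    rw [mul_comm t]
    linarith
  have hint : Integrable Y μ :=
    .of_mem_Icc 0 1 hY.aemeasurable (.of_forall hY₀₁)
  calc mgf Y μ t
      ≤ ∫ ω, (1 + Y ω * (Real.exp t - 1)) ∂μ :=
        integral_mono (integrable_exp_mul_of_mem_Icc hY.aemeasurable (.of_forall hY₀₁))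
          (by fun_prop) hchord
    _ = (∫ ω, Y ω ∂μ) * (Real.exp t - 1) + 1 := by
        rw [integral_add (by fun_prop) (by fun_prop), integral_mul_const]
        simp [add_comm]
    _ ≤ m * (Real.exp t - 1) + 1 := by
        gcongr
        linarith [Real.add_one_le_exp t]
    _ ≤ Real.exp (m * (Real.exp t - 1)) := Real.add_one_le_exp _

variable {ι : Type*} [LinearOrder ι] [Fintype ι] {X : ι → Type*} [∀ i, MeasurableSpace (X i)]
  {μ : ∀ i, Measure (X i)} [∀ i, IsProbabilityMeasure (μ i)] {W : Finset ι}

lemma lintegral_prod_le_pow_card {f : ι → (∀ i, X i) → ℝ≥0∞} (hf : ∀ w, Measurable (f w))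
    (hdep : ∀ w ∈ W, DependsOn (f w) {i | i ∈ W → i ≤ w}) {M : ℝ≥0∞}
    (hM : ∀ w ∈ W, ∀ x, ∫⁻ a, f w (Function.update x w a) ∂μ w ≤ M) :
    ∫⁻ x, ∏ w ∈ W, f w x ∂Measure.pi μ ≤ M ^ W.card := by
  induction W using Finset.induction_on_max with
  | empty => simp
  | insert a s has ih =>
    have ha : a ∉ s := fun h => (has a h).false
    rw [Finset.forall_mem_insert] at hM
    have hs (w) (hw : w ∈ s) (x) (b) : f w (Function.update x a b) = f w x :=
      hdep w (Finset.mem_insert_of_mem hw) fun i hi =>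
        Function.update_of_ne (by rintro rfl; exact (hi (by simp)).not_gt (has w hw)) _ _
    calc ∫⁻ x, ∏ w ∈ insert a s, f w x ∂Measure.pi μ
        ≤ ∫⁻ x, M * ∏ w ∈ s, f w x ∂Measure.pi μ := by
          refine lintegral_le_of_lmarginal_le {a} (by fun_prop) (by fun_prop) fun x => ?_
          simp only [lmarginal_singleton, Finset.prod_insert ha]
          simp +contextual only [hs]
          rw [lintegral_mul_const _ (by fun_prop)]
          simpa using mul_le_mul_left (hM.1 x) _
      _ = M * ∫⁻ x, ∏ w ∈ s, f w x ∂Measure.pi μ := lintegral_const_mul _ (by fun_prop)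
      _ ≤ M * M ^ s.card := by
          gcongr
          exact ih (fun w hw => (hdep w (Finset.mem_insert_of_mem hw)).mono
            fun i (hi : i ∈ insert a s → i ≤ w) his => hi (Finset.mem_insert_of_mem his)) hM.2
      _ = M ^ (insert a s).card := by rw [Finset.card_insert_of_notMem ha, pow_succ']

/-- A Chernoff bound for variables that need not be independent: when the coordinates in `W` are
revealed in increasing order, `Y w` is determined by the time `w` is revealed, and its conditional
mean just before that is at most `m`. -/
theorem measureReal_sum_ge_le_exp_of_dependsOn {Y : ι → (∀ i, X i) → ℝ} (hY : ∀ w, Measurable (Y w))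
    (hY₀₁ : ∀ w x, Y w x ∈ Set.Icc 0 1) (hdep : ∀ w ∈ W, DependsOn (Y w) {i | i ∈ W → i ≤ w})
    {m t : ℝ} (hm : ∀ w ∈ W, ∀ x, ∫ a, Y w (Function.update x w a) ∂μ w ≤ m) (ht : 0 ≤ t)
    (τ : ℝ) :
    (Measure.pi μ).real {x | τ ≤ ∑ w ∈ W, Y w x} ≤
      Real.exp (W.card * (m * (Real.exp t - 1)) - t * τ) := by
  have hmgf : mgf (fun x => ∑ w ∈ W, Y w x) (Measure.pi μ) t ≤
      Real.exp (m * (Real.exp t - 1)) ^ W.card := by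
    rw [mgf, integral_eq_lintegral_of_nonneg_ae (.of_forall fun x => by positivity) (by fun_prop)]
    refine ENNReal.toReal_le_of_le_ofReal (by positivity) ?_
    simp only [Finset.mul_sum, Real.exp_sum]
    rw [ENNReal.ofReal_pow (by positivity)]
    simp only [ENNReal.ofReal_prod_of_nonneg, Real.exp_nonneg, implies_true]
    refine lintegral_prod_le_pow_card (by fun_prop)
      (fun w hw x y hxy => by simp only [hdep w hw hxy]) fun w hw x => ?_
    have hupd : Measurable fun a => Y w (Function.update x w a) := by fun_prop
    rw [← ofReal_integral_eq_lintegral_ofReal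
      (integrable_exp_mul_of_mem_Icc hupd.aemeasurable (.of_forall fun a => hY₀₁ w _))
      (.of_forall fun a => by positivity)]
    exact ENNReal.ofReal_le_ofReal (mgf_le_exp_of_mem_Icc hupd (fun a => hY₀₁ w _) (hm w hw x) ht)
  have hsum (x) : ∑ w ∈ W, Y w x ∈ Set.Icc (0 : ℝ) W.card :=
    ⟨Finset.sum_nonneg fun w _ => (hY₀₁ w x).1,
      by simpa using Finset.sum_le_card_nsmul W _ 1 fun w _ => (hY₀₁ w x).2⟩
  have hsummeas : Measurable fun x => ∑ w ∈ W, Y w x := by fun_prop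
  calc (Measure.pi μ).real {x | τ ≤ ∑ w ∈ W, Y w x}
      ≤ Real.exp (-t * τ) * mgf (fun x => ∑ w ∈ W, Y w x) (Measure.pi μ) t :=
        measure_ge_le_exp_mul_mgf τ ht
          (integrable_exp_mul_of_mem_Icc hsummeas.aemeasurable (.of_forall hsum))
    _ ≤ Real.exp (-t * τ) * Real.exp (m * (Real.exp t - 1)) ^ W.card := by gcongr
    _ = Real.exp (W.card * (m * (Real.exp t - 1)) - t * τ) := by
        rw [← Real.exp_nat_mul, ← Real.exp_add]
        ring_nf

end AdaptiveChernoff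

section ColourTails

open MeasureTheory
open scoped Finset

variable {V α : Type*}

lemma ncard_mem_and_eq_sum (W : Finset V) (p : V → Prop) [DecidablePred p] :
    ({w | w ∈ W ∧ p w}.ncard : ℝ) = ∑ w ∈ W, if p w then 1 else 0 := by
  rw [Finset.sum_boole, ← Set.ncard_coe_finset, Finset.coe_filter]

/-- The vertex `w` shares its colour with a neighbour outside `N`. -/
def IsMatchedOutside (G : SimpleGraph V) (N : Finset V) (C : V → α) (w : V) : Prop :=
  ∃ x ∉ N, G.Adj w x ∧ C x = C w

/-- The vertex `w` shares its colour with a smaller element of `N`, adjacent to it or not. -/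
def IsMatchedBefore [LT V] (N : Finset V) (C : V → α) (w : V) : Prop :=
  ∃ x ∈ N, x < w ∧ C x = C w

section Matched

variable [LinearOrder V] (G : SimpleGraph V) (N : Finset V)

/-- The vertices that are not matched before but share their colour with a larger element of `N`
inject into those matched before, since the first vertex of a colour determines the colour. -/
lemma ncard_sameColour_le (C : V → α) :
    {w | w ∈ N ∧ ∃ x, G.Adj w x ∧ C x = C w}.ncard ≤
      {w | w ∈ N ∧ IsMatchedOutside G N C w}.ncard +
        2 * {w | w ∈ N ∧ IsMatchedBefore N C w}.ncard := by
  set A := {w | w ∈ N ∧ IsMatchedOutside G N C w}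
  set B := {w | w ∈ N ∧ IsMatchedBefore N C w}
  set F := {w | w ∈ N ∧ w ∉ B ∧ ∃ x ∈ N, w < x ∧ C x = C w}
  have hfin {s : Set V} (hs : ∀ w ∈ s, w ∈ N) : s.Finite := N.finite_toSet.subset hs
  have hcover : {w | w ∈ N ∧ ∃ x, G.Adj w x ∧ C x = C w} ⊆ A ∪ (B ∪ F) := by
    rintro w ⟨hw, x, hadj, hx⟩
    by_cases hxN : x ∈ N
    · rcases hadj.ne.lt_or_gt with hlt | hlt
      · by_cases hwB : w ∈ B
        exacts [.inr (.inl hwB), .inr (.inr ⟨hw, hwB, x, hxN, hlt, hx⟩)]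
      · exact .inr (.inl ⟨hw, x, hxN, hlt, hx⟩)
    · exact .inl ⟨hw, x, hxN, hadj, hx⟩
  have hFB : F.ncard ≤ B.ncard := by
    choose! f hf using fun w (hw : w ∈ F) => hw.2.2
    refine Set.ncard_le_ncard_of_injOn f (fun w hw => ?_) (fun w hw w' hw' hww' => ?_)
      (hfin fun w hw => hw.1)
    · exact ⟨(hf w hw).1, w, hw.1, (hf w hw).2.1, (hf w hw).2.2.symm⟩
    · have hC : C w = C w' := by rw [← (hf w hw).2.2, ← (hf w' hw').2.2, hww']
      by_contra hne
      rcases lt_or_gt_of_ne hne with hlt | hlt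
      exacts [hw'.2.1 ⟨hw'.1, w, hw.1, hlt, hC⟩, hw.2.1 ⟨hw.1, w', hw'.1, hlt, hC.symm⟩]
  calc {w | w ∈ N ∧ ∃ x, G.Adj w x ∧ C x = C w}.ncard
      ≤ (A ∪ (B ∪ F)).ncard :=
        Set.ncard_le_ncard hcover (hfin (by rintro w (hw | hw | hw) <;> exact hw.1))
    _ ≤ A.ncard + (B.ncard + F.ncard) :=
        (Set.ncard_union_le _ _).trans (by gcongr; exact Set.ncard_union_le _ _)
    _ ≤ A.ncard + 2 * B.ncard := by lia

variable {G N}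

lemma dependsOn_isMatchedOutside (w : V) :
    DependsOn (fun C : V → α => IsMatchedOutside G N C w) {i | i ∈ N → i ≤ w} := by
  intro C C' h
  simp only [IsMatchedOutside, h w fun _ => le_rfl, eq_iff_iff]
  refine exists_congr fun x => and_congr_right fun hx => ?_
  rw [h x fun hxN => absurd hxN hx]

lemma dependsOn_isMatchedBefore (w : V) :
    DependsOn (fun C : V → α => IsMatchedBefore N C w) {i | i ∈ N → i ≤ w} := by
  intro C C' h
  simp only [IsMatchedBefore, h w fun _ => le_rfl, eq_iff_iff]
  refine exists_congr fun x => and_congr_right fun _ => and_congr_right fun hx => ?_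
  rw [h x fun _ => hx.le]

end Matched

variable [MeasurableSpace α] {ν : Measure α}

lemma measureReal_exists_mem_eq_le {q : ℝ} (hq : ∀ c, ν.real {c} ≤ q) (s : Finset V) (C : V → α) :
    ν.real {a | ∃ x ∈ s, C x = a} ≤ #s * q := by
  have : {a | ∃ x ∈ s, C x = a} = ⋃ x ∈ s, {C x} := by ext; simp [eq_comm]
  rw [this]
  refine (measureReal_biUnion_finset_le _ _).trans ?_
  simpa using Finset.sum_le_card_nsmul s _ q fun x _ => hq (C x)

lemma measureReal_isMatchedOutside_update_le [IsFiniteMeasure ν] [DecidableEq V]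
    {G : SimpleGraph V} [G.LocallyFinite] {q : ℝ} (hq : ∀ c, ν.real {c} ≤ q) (N : Finset V)
    (C : V → α) (w : V) :
    ν.real {a | IsMatchedOutside G N (Function.update C w a) w} ≤ G.degree w * q := by
  refine (measureReal_mono ?_).trans (measureReal_exists_mem_eq_le hq (G.neighborFinset w) C)
  rintro a ⟨x, -, hadj, hx⟩
  rw [Function.update_self, Function.update_of_ne hadj.ne'] at hx
  exact ⟨x, by simpa using hadj, hx⟩

lemma measureReal_isMatchedBefore_update_le [IsFiniteMeasure ν] [LinearOrder V] {q : ℝ}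
    (hq : ∀ c, ν.real {c} ≤ q) (N : Finset V) (C : V → α) (w : V) :
    ν.real {a | IsMatchedBefore N (Function.update C w a) w} ≤ #N * q := by
  refine (measureReal_mono ?_).trans (measureReal_exists_mem_eq_le hq N C)
  rintro a ⟨x, hxN, hlt, hx⟩
  rw [Function.update_self, Function.update_of_ne hlt.ne] at hx
  exact ⟨x, hxN, hx⟩

variable [Countable α] [MeasurableSingletonClass α]

lemma integrable_ite_one_zero [IsFiniteMeasure ν] (p : α → Prop) [DecidablePred p] :
    Integrable (fun a => if p a then (1 : ℝ) else 0) ν :=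
  .of_mem_Icc 0 1 .of_discrete (.of_forall fun a => by split_ifs <;> simp)

lemma integral_ite_one_zero (p : α → Prop) [DecidablePred p] :
    ∫ a, (if p a then (1 : ℝ) else 0) ∂ν = ν.real {a | p a} := by
  rw [← integral_indicator_one .of_discrete]
  exact integral_congr_ae (.of_forall fun a => by simp [Set.indicator_apply])

variable [Fintype V] [IsProbabilityMeasure ν]

lemma measureReal_ncard_rel_ge_le {r : α → α → Prop} {m t : ℝ} (hr : ∀ c, ν.real {a | r c a} ≤ m)
    {W : Finset V} {v : V} (hv : v ∉ W) (ht : 0 ≤ t) (τ : ℝ) :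
    (Measure.pi fun _ : V => ν).real {C | τ ≤ {w | w ∈ W ∧ r (C v) (C w)}.ncard} ≤
      Real.exp (#W * (m * (Real.exp t - 1)) - t * τ) := by
  classical
  let _ : LinearOrder V := LinearOrder.lift' (Fintype.equivFin V) (Equiv.injective _)
  simp only [ncard_mem_and_eq_sum]
  refine measureReal_sum_ge_le_exp_of_dependsOn (fun w => .of_discrete) (fun w C => ?_)
    (fun w _ C C' h => ?_) (fun w hw C => ?_) ht τ
  · split_ifs <;> simp
  · simp only [h v fun hvW => absurd hvW hv, h w fun _ => le_rfl]
  · have hne : v ≠ w := by rintro rfl; exact hv hw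
    simp only [Function.update_of_ne hne, Function.update_self]
    rw [integral_ite_one_zero]
    exact hr (C v)

lemma measureReal_ncard_sameColour_ge_le {G : SimpleGraph V} [G.LocallyFinite] {d : ℕ}
    (hdeg : ∀ v, G.degree v ≤ d) {N : Finset V} (hN : #N ≤ d) {q t : ℝ} (hq : ∀ c, ν.real {c} ≤ q)
    (ht : 0 ≤ t) (τ : ℝ) :
    (Measure.pi fun _ : V => ν).real
        {C | τ ≤ {w | w ∈ N ∧ ∃ x, G.Adj w x ∧ C x = C w}.ncard} ≤
      Real.exp (#N * (d * q * (Real.exp t - 1)) - t * (τ / 3)) := by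
  classical
  let _ : LinearOrder V := LinearOrder.lift' (Fintype.equivFin V) (Equiv.injective _)
  let Y (w : V) (C : V → α) : ℝ :=
    ((if IsMatchedOutside G N C w then 1 else 0) +
      2 * (if IsMatchedBefore N C w then 1 else 0)) / 3
  have hY (C : V → α) :
      ({w | w ∈ N ∧ ∃ x, G.Adj w x ∧ C x = C w}.ncard : ℝ) / 3 ≤ ∑ w ∈ N, Y w C := by
    rw [← Finset.sum_div, Finset.sum_add_distrib, ← Finset.mul_sum, ← ncard_mem_and_eq_sum,
      ← ncard_mem_and_eq_sum]
    gcongr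
    exact_mod_cast ncard_sameColour_le G N C
  refine (measureReal_mono fun C hC => ?_).trans
    (measureReal_sum_ge_le_exp_of_dependsOn (Y := Y) (fun w => .of_discrete) (fun w C => ?_)
      (fun w _ C C' h => ?_) (fun w _ C => ?_) ht (τ / 3))
  · exact (div_le_div_of_nonneg_right hC (by norm_num)).trans (hY C)
  · simp only [Y, Set.mem_Icc]
    split_ifs <;> norm_num
  · simp only [Y, dependsOn_isMatchedOutside w h, dependsOn_isMatchedBefore w h]
  · have hq₀ : 0 ≤ q := measureReal_nonneg.trans (hq (C w))
    have hout := (measureReal_isMatchedOutside_update_le (G := G) hq N C w).trans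
      (mul_le_mul_of_nonneg_right (Nat.cast_le.2 (hdeg w)) hq₀)
    have hbefore := (measureReal_isMatchedBefore_update_le hq N C w).trans
      (mul_le_mul_of_nonneg_right (Nat.cast_le.2 hN) hq₀)
    simp only [Y]
    rw [integral_div, integral_add (integrable_ite_one_zero _)
      ((integrable_ite_one_zero _).const_mul 2), integral_const_mul, integral_ite_one_zero,
      integral_ite_one_zero]
    linarith

end ColourTails

section Colours

open MeasureTheory ProbabilityTheory
open scoped Finset

/-- The uniform distribution on the set `[K]²` of colours, as a measure on `ℕ × ℕ`; it is
zero if `K = 0`. -/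
noncomputable def uniformColour (K : ℕ) : Measure (ℕ × ℕ) :=
  (uniformOn (Finset.Icc 1 K : Set ℕ)).prod (uniformOn (Finset.Icc 1 K : Set ℕ))

/-- The integers `m` and `n` are distinct modulo `K`, but at distance at most `b` modulo `K`. -/
def IsNear (K : ℕ) (b : ℝ) (m n : ℕ) : Prop :=
  1 ≤ modDist K m n ∧ (modDist K m n : ℝ) ≤ b

/-- Two colours agree in a coordinate; this is the relation behind `specialSet`. -/
def ShareCoord (c a : ℕ × ℕ) : Prop :=
  c.1 = a.1 ∨ c.2 = a.2

/-- Two colours are near each other in a coordinate; this is the relation behind `riskySet`. -/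
def NearCoord (K : ℕ) (b : ℝ) (c a : ℕ × ℕ) : Prop :=
  IsNear K b c.1 a.1 ∨ IsNear K b c.2 a.2

section Residues

lemma card_filter_one_le_and_le {β : Type*} {s : Finset β} {f : β → ℤ} (hf : Set.InjOn f s)
    {b : ℝ} (hb : 0 ≤ b) : (#{n ∈ s | 1 ≤ f n ∧ (f n : ℝ) ≤ b} : ℝ) ≤ b := by
  have hcard : #{n ∈ s | 1 ≤ f n ∧ (f n : ℝ) ≤ b} ≤ #(Finset.Icc 1 ⌊b⌋) := by
    refine Finset.card_le_card_of_injOn f (fun n hn => ?_)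
      (hf.mono (Finset.coe_subset.2 (Finset.filter_subset _ _)))
    have hn := (Finset.mem_filter.1 hn).2
    exact Finset.mem_coe.2 (Finset.mem_Icc.2 ⟨hn.1, Int.le_floor.2 hn.2⟩)
  calc (#{n ∈ s | 1 ≤ f n ∧ (f n : ℝ) ≤ b} : ℝ)
      ≤ ⌊b⌋₊ := by simpa [Int.floor_toNat] using hcard
    _ ≤ b := Nat.floor_le hb

lemma eq_of_mem_Icc_of_modEq {K n n' : ℕ} (hn : n ∈ Finset.Icc 1 K) (hn' : n' ∈ Finset.Icc 1 K)
    (h : (n : ℤ) ≡ n' [ZMOD K]) : n = n' := by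
  rw [Finset.mem_Icc] at hn hn'
  have := Int.eq_zero_of_abs_lt_dvd h.dvd (by rw [abs_lt]; constructor <;> lia)
  lia

open Classical in
lemma card_isNear_le {b : ℝ} (hb : 0 ≤ b) (K m : ℕ) :
    (#{n ∈ Finset.Icc 1 K | IsNear K b m n} : ℝ) ≤ 2 * b := by
  have hinj : Set.InjOn (fun n : ℕ => (m - n : ℤ) % K) (Finset.Icc 1 K) := fun n hn n' hn' h =>
    eq_of_mem_Icc_of_modEq hn hn' (by simpa using Int.ModEq.sub_left (m : ℤ) h)
  have hinj' : Set.InjOn (fun n : ℕ => (n - m : ℤ) % K) (Finset.Icc 1 K) := fun n hn n' hn' h =>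
    eq_of_mem_Icc_of_modEq hn hn' (by simpa using Int.ModEq.add_right (m : ℤ) h)
  have hcover : {n ∈ Finset.Icc 1 K | IsNear K b m n} ⊆
      {n ∈ Finset.Icc 1 K | 1 ≤ (m - n : ℤ) % K ∧ ((m - n : ℤ) % K : ℤ) ≤ b} ∪
        {n ∈ Finset.Icc 1 K | 1 ≤ (n - m : ℤ) % K ∧ ((n - m : ℤ) % K : ℤ) ≤ b} := by
    intro n hn
    obtain ⟨hn, hlower, hupper⟩ := Finset.mem_filter.1 hn
    rw [modDist, le_min_iff] at hlower
    rw [modDist, Int.cast_min, min_le_iff] at hupper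
    rw [← Finset.filter_or, Finset.mem_filter]
    exact ⟨hn, hupper.imp (⟨hlower.1, ·⟩) (⟨hlower.2, ·⟩)⟩
  calc (#{n ∈ Finset.Icc 1 K | IsNear K b m n} : ℝ)
      ≤ _ := Nat.cast_le.2 ((Finset.card_le_card hcover).trans (Finset.card_union_le _ _))
    _ ≤ b + b := by
        rw [Nat.cast_add]
        exact add_le_add (card_filter_one_le_and_le hinj hb) (card_filter_one_le_and_le hinj' hb)
    _ = 2 * b := by ring

end Residues

lemma measureReal_uniformOn_finset {Ω : Type*} [MeasurableSpace Ω] [MeasurableSingletonClass Ω]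
    (s : Finset Ω) (p : Ω → Prop) [DecidablePred p] :
    (uniformOn (s : Set Ω)).real {x | p x} = #{x ∈ s | p x} / #s := by
  have hinter : (s : Set Ω) ∩ {x | p x} = ({x ∈ s | p x} : Finset Ω) := by ext; simp
  rw [Measure.real, uniformOn, cond_apply s.measurableSet, hinter, Measure.count_apply_finset,
    Measure.count_apply_finset]
  simp [div_eq_inv_mul]

lemma measureReal_prod_fst_or_snd {Ω Ω' : Type*} [MeasurableSpace Ω] [MeasurableSpace Ω']
    {μ : Measure Ω} {μ' : Measure Ω'} [IsProbabilityMeasure μ] [IsProbabilityMeasure μ']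
    {s : Set Ω} {t : Set Ω'} (hs : MeasurableSet s) (ht : MeasurableSet t) :
    (μ.prod μ').real {x | x.1 ∈ s ∨ x.2 ∈ t} = 1 - (1 - μ.real s) * (1 - μ'.real t) := by
  have hcompl : {x : Ω × Ω' | x.1 ∈ s ∨ x.2 ∈ t} = (sᶜ ×ˢ tᶜ)ᶜ := by ext; simp; tauto
  rw [hcompl, probReal_compl_eq_one_sub (hs.compl.prod ht.compl), measureReal_prod_prod,
    probReal_compl_eq_one_sub hs, probReal_compl_eq_one_sub ht]

variable {K : ℕ}

lemma isProbabilityMeasure_uniformOn_Icc (hK : 0 < K) :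
    IsProbabilityMeasure (uniformOn (Finset.Icc 1 K : Set ℕ)) :=
  isProbabilityMeasure_uniformOn (Finset.finite_toSet _)
    (by simpa using Nat.one_le_iff_ne_zero.2 hK.ne')

lemma isProbabilityMeasure_uniformColour (hK : 0 < K) :
    IsProbabilityMeasure (uniformColour K) := by
  have := isProbabilityMeasure_uniformOn_Icc hK
  unfold uniformColour
  infer_instance

lemma ae_uniformColour_mem (K : ℕ) :
    ∀ᵐ c ∂uniformColour K, c ∈ Finset.Icc 1 K ×ˢ Finset.Icc 1 K := by
  have hmem : ∀ᵐ n ∂uniformOn (Finset.Icc 1 K : Set ℕ), n ∈ Finset.Icc 1 K :=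
    ae_cond_mem (Finset.measurableSet _)
  filter_upwards [Measure.quasiMeasurePreserving_fst.ae hmem,
    Measure.quasiMeasurePreserving_snd.ae hmem] with c h₁ h₂ using Finset.mem_product.2 ⟨h₁, h₂⟩

lemma measureReal_uniformOn_Icc_singleton_le (K n : ℕ) :
    (uniformOn (Finset.Icc 1 K : Set ℕ)).real {n} ≤ 1 / K := by
  have := measureReal_uniformOn_finset (Finset.Icc 1 K) (· = n)
  have hcard : #{x ∈ Finset.Icc 1 K | x = n} ≤ 1 := by
    rw [Finset.filter_eq']; split_ifs <;> simp
  simp only [Set.ofPred_eq_eq_singleton, Nat.card_Icc, Nat.add_sub_cancel] at this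
  rw [this]
  gcongr
  exact_mod_cast hcard

lemma measureReal_uniformColour_singleton_le (K : ℕ) (c : ℕ × ℕ) :
    (uniformColour K).real {c} ≤ 1 / K ^ 2 := by
  rw [uniformColour, ← Set.singleton_prod_singleton, measureReal_prod_prod, sq,
    ← one_div_mul_one_div]
  gcongr <;> exact measureReal_uniformOn_Icc_singleton_le K _

lemma measureReal_shareCoord_le (hK : 0 < K) (c : ℕ × ℕ) :
    (uniformColour K).real {a | ShareCoord c a} ≤ 2 / K := by
  have := isProbabilityMeasure_uniformOn_Icc hK
  have hset : {a | ShareCoord c a} = {a | a.1 ∈ ({c.1} : Set ℕ) ∨ a.2 ∈ ({c.2} : Set ℕ)} := by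
    ext; simp [ShareCoord, eq_comm]
  rw [hset, uniformColour, measureReal_prod_fst_or_snd .of_discrete .of_discrete]
  have hfst := measureReal_uniformOn_Icc_singleton_le K c.1
  have hsnd := measureReal_uniformOn_Icc_singleton_le K c.2
  have hfst₀ : (0 : ℝ) ≤ (uniformOn (Finset.Icc 1 K : Set ℕ)).real {c.1} := measureReal_nonneg
  have hsnd₀ : (0 : ℝ) ≤ (uniformOn (Finset.Icc 1 K : Set ℕ)).real {c.2} := measureReal_nonneg
  rw [show (2 : ℝ) / K = 1 / K + 1 / K by ring]
  nlinarith

lemma measureReal_nearCoord_le {b : ℝ} (hb : 0 ≤ b) (hbK : 2 * b ≤ K) (hK : 0 < K) (c : ℕ × ℕ) :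
    (uniformColour K).real {a | NearCoord K b c a} ≤ 1 - (1 - 2 * b / K) ^ 2 := by
  classical
  have := isProbabilityMeasure_uniformOn_Icc hK
  have hnear (m : ℕ) : (uniformOn (Finset.Icc 1 K : Set ℕ)).real {n | IsNear K b m n} ≤
      2 * b / K := by
    rw [measureReal_uniformOn_finset, Nat.card_Icc, Nat.add_sub_cancel]
    gcongr
    exact card_isNear_le hb K m
  have hle : 2 * b / K ≤ 1 := div_le_one_of_le₀ hbK (Nat.cast_nonneg K)
  calc (uniformColour K).real {a | NearCoord K b c a}
      = 1 - (1 - (uniformOn (Finset.Icc 1 K : Set ℕ)).real {n | IsNear K b c.1 n}) *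
          (1 - (uniformOn (Finset.Icc 1 K : Set ℕ)).real {n | IsNear K b c.2 n}) :=
        measureReal_prod_fst_or_snd (s := {n | IsNear K b c.1 n}) (t := {n | IsNear K b c.2 n})
          .of_discrete .of_discrete
    _ ≤ 1 - (1 - 2 * b / K) ^ 2 := by
        rw [sq]
        gcongr
        exacts [sub_nonneg.2 ((hnear c.1).trans hle), hnear c.1, hnear c.2]

end Colours

section Numerics

lemma mul_add_one_pow_le_exp {A B x₀ x : ℝ} {n : ℕ} (hx₀ : 0 ≤ x₀) (hx : x₀ ≤ x)
    (hn : n ≤ B * (x₀ + 1)) (h : A * (x₀ + 1) ^ n ≤ Real.exp (B * x₀)) :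
    A * (x + 1) ^ n ≤ Real.exp (B * x) := by
  have hpos : 0 < x₀ + 1 := by linarith
  have hratio : (x + 1) / (x₀ + 1) = (x - x₀) / (x₀ + 1) + 1 := by field_simp; ring
  calc A * (x + 1) ^ n
      = A * (x₀ + 1) ^ n * ((x + 1) / (x₀ + 1)) ^ n := by rw [div_pow]; field_simp
    _ ≤ Real.exp (B * x₀) * Real.exp ((x - x₀) / (x₀ + 1)) ^ n := by
        rw [hratio]
        have : 0 ≤ (x - x₀) / (x₀ + 1) := div_nonneg (sub_nonneg.2 hx) hpos.le
        gcongr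
        exact Real.add_one_le_exp _
    _ = Real.exp (B * x₀ + n * ((x - x₀) / (x₀ + 1))) := by
        rw [← Real.exp_nat_mul, ← Real.exp_add]
    _ ≤ Real.exp (B * x₀ + B * (x₀ + 1) * ((x - x₀) / (x₀ + 1))) := by
        have : 0 ≤ (x - x₀) / (x₀ + 1) := div_nonneg (sub_nonneg.2 hx) hpos.le
        gcongr
    _ = Real.exp (B * x) := by congr 1; field_simp; ring

lemma pow_lt_exp_natCast {n : ℕ} (hn : n ≠ 0) : (2.7182818283 : ℝ) ^ n < Real.exp n := by
  rw [← Real.exp_one_pow]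
  exact pow_lt_pow_left₀ Real.exp_one_gt_d9 (by norm_num) hn

variable {d : ℝ}

lemma exp_neg_div_1500_le (hd : 54000 ≤ d) :
    Real.exp (-(d / 1500)) ≤ 1 / (16 * (d + 1) ^ 3) := by
  have hexp := pow_lt_exp_natCast (n := 36) (by norm_num)
  rw [Real.exp_neg, ← one_div, div_eq_inv_mul d]
  refine one_div_le_one_div_of_le (by positivity) ?_
  exact mul_add_one_pow_le_exp (by norm_num) hd (by norm_num) (by norm_num at hexp ⊢; linarith)

lemma exp_neg_div_1000_le (hd : 54000 ≤ d) :
    Real.exp (-(d / 1000)) ≤ 1 / (8 * (d + 1) ^ 4) := by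
  have hexp := pow_lt_exp_natCast (n := 54) (by norm_num)
  rw [Real.exp_neg, ← one_div, div_eq_inv_mul d]
  refine one_div_le_one_div_of_le (by positivity) ?_
  exact mul_add_one_pow_le_exp (by norm_num) hd (by norm_num) (by norm_num at hexp ⊢; linarith)

variable {K n : ℝ}

/- In the next three lemmas the multipliers `log 2`, `0.073` and `3 / 8` approximate the logarithm
of the ratio of the threshold to the mean, which minimises the exponent. -/
lemma shareCoord_exponent_le (hd : 54000 ≤ d) (hK : 0.025 * d ≤ K) (hn : n ≤ d) :
    n * (2 / K * (Real.exp (Real.log 2) - 1)) - Real.log 2 * (0.0031 * d) ≤ -(d / 1500) := by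
  have hK₀ : 0 < K := by linarith
  have hmean : n * (2 / K) ≤ 80 := by
    rw [mul_div, div_le_iff₀ hK₀]
    linarith
  rw [Real.exp_log two_pos]
  nlinarith [Real.log_two_gt_d9]

lemma nearCoord_exponent_le (hd : 54000 ≤ d) (hK : 0.025 * d ≤ K) (hn₀ : 0 ≤ n) (hn : n ≤ d) :
    n * ((1 - (1 - (0.0031 * d + 7) / K) ^ 2) * (Real.exp 0.073 - 1)) - 0.073 * (0.26 * d) ≤
      -(d / 1500) := by
  have hK₀ : 0 < K := by linarith
  have hratio : (0.0031 * d + 7) / K ≤ 0.1292 := by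
    rw [div_le_iff₀ hK₀]
    linarith
  have hmean : 1 - (1 - (0.0031 * d + 7) / K) ^ 2 ≤ 0.24171 := by nlinarith
  have hexp : Real.exp 0.073 ≤ 1.07574 := by
    refine (Real.exp_bound' (n := 4) (by norm_num) (by norm_num) (by norm_num)).trans ?_
    norm_num [Finset.sum_range_succ, Nat.factorial]
  have hexp₁ : 1 ≤ Real.exp 0.073 := Real.one_le_exp (by norm_num)
  calc n * ((1 - (1 - (0.0031 * d + 7) / K) ^ 2) * (Real.exp 0.073 - 1)) - 0.073 * (0.26 * d)
      ≤ n * (0.24171 * (1.07574 - 1)) - 0.073 * (0.26 * d) := by gcongr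
    _ ≤ -(d / 1500) := by linarith

lemma sameColour_exponent_le (hd : 54000 ≤ d) (hK : 0.025 * d ≤ K) (hn : n ≤ d) :
    n * (d * (1 / K ^ 2) * (Real.exp (3 / 8) - 1)) - 3 / 8 * (0.131 * d / 3) ≤ -(d / 1000) := by
  have hK₀ : 0 < K := by linarith
  have hmean : n * (d * (1 / K ^ 2)) ≤ 1600 := by
    rw [← mul_assoc, mul_one_div, div_le_iff₀ (by positivity)]
    nlinarith
  have hexp : Real.exp (3 / 8) ≤ 1.455 := by
    refine (Real.exp_bound' (n := 5) (by norm_num) (by norm_num) (by norm_num)).trans ?_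
    norm_num [Finset.sum_range_succ, Nat.factorial]
  have hexp₁ : 1 ≤ Real.exp (3 / 8) := Real.one_le_exp (by norm_num)
  nlinarith

end Numerics

section EdgeDegree

variable {V : Type*} {G : SimpleGraph V}

lemma modDist_comm (K : ℕ) (m n : ℤ) : modDist K m n = modDist K n m :=
  min_comm _ _

lemma ShareCoord.symm {c a : ℕ × ℕ} (h : ShareCoord c a) : ShareCoord a c :=
  h.imp Eq.symm Eq.symm

lemma NearCoord.symm {K : ℕ} {b : ℝ} {c a : ℕ × ℕ} (h : NearCoord K b c a) :
    NearCoord K b a c := by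
  simpa only [NearCoord, IsNear, modDist_comm K a.1, modDist_comm K a.2] using h

lemma edgeDeg_le_ncard [G.LocallyFinite] {r : V → V → Prop} (hr : ∀ {a b}, r a b → r b a)
    {E' : Set (Sym2 V)} (hE' : ∀ e ∈ E', e ∈ G.edgeSet ∧ ∃ a b, e = s(a, b) ∧ r a b) (v : V) :
    edgeDeg E' v ≤ {w | w ∈ G.neighborFinset v ∧ r v w}.ncard := by
  have hfin : {w | w ∈ G.neighborFinset v ∧ r v w}.Finite :=
    (G.neighborFinset v).finite_toSet.subset fun w hw => hw.1
  refine (Set.ncard_le_ncard ?_ (hfin.image fun w => s(v, w))).trans (Set.ncard_image_le hfin)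
  rintro e ⟨he, hv⟩
  obtain ⟨hadj, a, b, rfl, hab⟩ := hE' e he
  rw [SimpleGraph.mem_edgeSet] at hadj
  rcases Sym2.mem_iff.1 hv with rfl | rfl
  · exact ⟨b, ⟨by simpa using hadj, hab⟩, rfl⟩
  · exact ⟨a, ⟨by simpa using hadj.symm, hr hab⟩, Sym2.eq_swap⟩

lemma edgeDeg_specialSet_le [G.LocallyFinite] (C : V → ℕ × ℕ) (v : V) :
    edgeDeg (specialSet G C) v ≤ {w | w ∈ G.neighborFinset v ∧ ShareCoord (C v) (C w)}.ncard :=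
  edgeDeg_le_ncard (r := fun v w => ShareCoord (C v) (C w)) .symm
    (fun _ he => ⟨he.1.1, he.2⟩) v

lemma edgeDeg_riskySet_le [G.LocallyFinite] (C : V → ℕ × ℕ) (K : ℕ) (b : ℝ) (v : V) :
    edgeDeg (riskySet G C K b) v ≤
      {w | w ∈ G.neighborFinset v ∧ NearCoord K b (C v) (C w)}.ncard :=
  edgeDeg_le_ncard (r := fun v w => NearCoord K b (C v) (C w)) .symm
    (fun _ he => ⟨he.1.1, he.2⟩) v

lemma neighborSet_inter_uncolSet [G.LocallyFinite] (C : V → ℕ × ℕ) (v : V) :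
    G.neighborSet v ∩ uncolSet G C =
      {w | w ∈ G.neighborFinset v ∧ ∃ x, G.Adj w x ∧ C x = C w} := by
  ext
  simp [uncolSet]

end EdgeDegree

section Neighbourhoods

open MeasureTheory
open scoped Finset

variable {V : Type*} [DecidableEq V] (G : SimpleGraph V) [G.LocallyFinite]

/-- The closed neighbourhood of `v`, i.e. the ball of radius one around `v`. -/
def closedNbhd (v : V) : Finset V :=
  insert v (G.neighborFinset v)

/-- The ball of radius two around `v`. -/
def secondNbhd (v : V) : Finset V :=
  (closedNbhd G v).biUnion (closedNbhd G)

variable {G}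

lemma mem_closedNbhd {v w : V} : w ∈ closedNbhd G v ↔ w = v ∨ G.Adj v w := by
  simp [closedNbhd]

lemma mem_closedNbhd_comm {v w : V} : w ∈ closedNbhd G v ↔ v ∈ closedNbhd G w := by
  rw [mem_closedNbhd, mem_closedNbhd, eq_comm, G.adj_comm]

lemma mem_secondNbhd_comm {v w : V} : w ∈ secondNbhd G v ↔ v ∈ secondNbhd G w := by
  simp only [secondNbhd, Finset.mem_biUnion]
  exact exists_congr fun x => by
    rw [mem_closedNbhd_comm (w := x), mem_closedNbhd_comm (w := w), and_comm]

lemma subset_secondNbhd {v w : V} (h : w ∈ closedNbhd G v) : closedNbhd G w ⊆ secondNbhd G v :=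
  Finset.subset_biUnion_of_mem (closedNbhd G) h

variable {d : ℕ}

lemma card_closedNbhd_le (hdeg : ∀ v, G.degree v ≤ d) (v : V) : #(closedNbhd G v) ≤ d + 1 :=
  (Finset.card_insert_le _ _).trans (Nat.succ_le_succ (hdeg v))

lemma card_secondNbhd_le (hdeg : ∀ v, G.degree v ≤ d) (v : V) :
    #(secondNbhd G v) ≤ (d + 1) ^ 2 := by
  rw [sq]
  exact (Finset.card_biUnion_le_card_mul _ _ _ fun w _ => card_closedNbhd_le hdeg w).trans
    (Nat.mul_le_mul_right _ (card_closedNbhd_le hdeg v))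

lemma sum_mem_nbhd_le [Fintype V] (hdeg : ∀ v, G.degree v ≤ d) (w : V) {p q : ℝ} (hp : 0 ≤ p)
    (hq : 0 ≤ q) :
    ∑ l with w ∈ Sum.elim (closedNbhd G) (secondNbhd G) l, Sum.elim (fun _ => p) (fun _ => q) l ≤
      (d + 1) * p + (d + 1) ^ 2 * q := by
  have hclosed : (#(closedNbhd G w) : ℝ) ≤ d + 1 := mod_cast card_closedNbhd_le hdeg w
  have hsecond : (#(secondNbhd G w) : ℝ) ≤ (d + 1) ^ 2 := mod_cast card_secondNbhd_le hdeg w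
  calc ∑ l with w ∈ Sum.elim (closedNbhd G) (secondNbhd G) l, Sum.elim (fun _ => p) (fun _ => q) l
      = #(closedNbhd G w) * p + #(secondNbhd G w) * q := by
        rw [Finset.sum_filter, Fintype.sum_sum_type]
        simp only [Sum.elim_inl, Sum.elim_inr, mem_closedNbhd_comm (w := w),
          mem_secondNbhd_comm (w := w), Finset.sum_ite_mem, Finset.univ_inter, Finset.sum_const,
          nsmul_eq_mul]
    _ ≤ (d + 1) * p + (d + 1) ^ 2 * q := by gcongr

lemma exists_frequently_notMem_of_dependsOn_nbhd [Fintype V] (hdeg : ∀ v, G.degree v ≤ d)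
    {X : V → Type*} [∀ v, MeasurableSpace (X v)] {μ : ∀ v, Measure (X v)}
    [∀ v, IsProbabilityMeasure (μ v)] {A B : V → Set (∀ v, X v)}
    (hA : ∀ v, MeasurableSet (A v)) (hB : ∀ v, MeasurableSet (B v))
    (hAD : ∀ v, DependsOn (· ∈ A v) (closedNbhd G v : Set V))
    (hBD : ∀ v, DependsOn (· ∈ B v) (secondNbhd G v : Set V))
    (hAμ : ∀ v, (Measure.pi μ).real (A v) ≤ 1 / (8 * (d + 1) ^ 3))
    (hBμ : ∀ v, (Measure.pi μ).real (B v) ≤ 1 / (8 * (d + 1) ^ 4)) :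
    ∃ᵐ x ∂Measure.pi μ, ∀ v, x ∉ A v ∧ x ∉ B v := by
  let D : V ⊕ V → Finset V := Sum.elim (closedNbhd G) (secondNbhd G)
  let p : V ⊕ V → ℝ :=
    Sum.elim (fun _ => 1 / (8 * (d + 1) ^ 3)) (fun _ => 1 / (8 * (d + 1) ^ 4))
  have hp (k) : 0 ≤ p k := by cases k <;> simp only [p, Sum.elim_inl, Sum.elim_inr] <;> positivity
  have hcard (k) : #(D k) ≤ (d + 1) ^ 2 := by
    rcases k with v | v
    · exact (card_closedNbhd_le hdeg v).trans (Nat.le_self_pow two_ne_zero _)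
    · exact card_secondNbhd_le hdeg v
  have hpoint (w : V) : ∑ l with w ∈ D l, p l ≤ 1 / (4 * (d + 1) ^ 2) := by
    refine (sum_mem_nbhd_le hdeg w (by positivity) (by positivity)).trans_eq ?_
    field_simp
    norm_num
  have hsum (k) : ∑ l with ¬Disjoint (D k) (D l), p l ≤ 1 / 4 :=
    calc ∑ l with ¬Disjoint (D k) (D l), p l
        ≤ ∑ w ∈ D k, ∑ l with w ∈ D l, p l := sum_not_disjoint_le hp _
      _ ≤ #(D k) • (1 / (4 * (d + 1) ^ 2) : ℝ) := Finset.sum_le_card_nsmul _ _ _ fun w _ => hpoint w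
      _ ≤ (d + 1) ^ 2 * (1 / (4 * (d + 1) ^ 2)) := by
          rw [nsmul_eq_mul]
          gcongr
          exact mod_cast hcard k
      _ = 1 / 4 := by field_simp
  have hp₄ (k) : p k ≤ 1 / 4 := by
    cases k <;> refine one_div_le_one_div_of_le (by norm_num) ?_ <;>
      nlinarith [one_le_pow₀ (M₀ := ℝ) (a := d + 1) (n := 3) (by simp),
        one_le_pow₀ (M₀ := ℝ) (a := d + 1) (n := 4) (by simp)]
  refine (exists_frequently_forall_notMem (A := Sum.elim A B) (D := D) (p := p)
    (Sum.forall.2 ⟨hA, hB⟩) (Sum.forall.2 ⟨hAD, hBD⟩) (Sum.forall.2 ⟨hAμ, hBμ⟩) hp₄ hsum).mono ?_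
  exact fun x hx v => ⟨hx (.inl v), hx (.inr v)⟩

end Neighbourhoods

section BadEvents

open MeasureTheory
open scoped Finset

variable {V α : Type*} (G : SimpleGraph V) [G.LocallyFinite]

/-- The event that the colours of at least `τ` neighbours of `v` stand in the relation `r` to the
colour of `v`. -/
def manyRelated (r : α → α → Prop) (τ : ℝ) (v : V) : Set (V → α) :=
  {C | τ ≤ {w | w ∈ G.neighborFinset v ∧ r (C v) (C w)}.ncard}

/-- The event that at least `τ` neighbours of `v` share their colour with one of their own
neighbours. -/
def manySameColour (τ : ℝ) (v : V) : Set (V → α) :=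
  {C | τ ≤ {w | w ∈ G.neighborFinset v ∧ ∃ x, G.Adj w x ∧ C x = C w}.ncard}

variable {G}

section DependsOn

variable [DecidableEq V]

lemma dependsOn_manyRelated (r : α → α → Prop) (τ : ℝ) (v : V) :
    DependsOn (· ∈ manyRelated G r τ v) (closedNbhd G v : Set V) := by
  intro C C' h
  have hset : {w | w ∈ G.neighborFinset v ∧ r (C v) (C w)} =
      {w | w ∈ G.neighborFinset v ∧ r (C' v) (C' w)} := by
    ext w
    refine and_congr_right fun hw => ?_
    rw [h v (Finset.mem_insert_self _ _), h w (Finset.mem_insert_of_mem hw)]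
  simp only [manyRelated, Set.mem_ofPred_eq, hset]

lemma dependsOn_manySameColour (τ : ℝ) (v : V) :
    DependsOn (· ∈ manySameColour (α := α) G τ v) (secondNbhd G v : Set V) := by
  intro C C' h
  have hset : {w | w ∈ G.neighborFinset v ∧ ∃ x, G.Adj w x ∧ C x = C w} =
      {w | w ∈ G.neighborFinset v ∧ ∃ x, G.Adj w x ∧ C' x = C' w} := by
    ext w
    refine and_congr_right fun hw => exists_congr fun x => and_congr_right fun hx => ?_
    have hsub := subset_secondNbhd (G := G) (Finset.mem_insert_of_mem hw : w ∈ closedNbhd G v)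
    rw [h x (hsub (mem_closedNbhd.2 (.inr hx))), h w (hsub (mem_closedNbhd.2 (.inl rfl)))]
  simp only [manySameColour, Set.mem_ofPred_eq, hset]

end DependsOn

variable [Fintype V] {d K : ℕ}

lemma measureReal_manyRelated_shareCoord_le (hd : 54000 ≤ d) (hdeg : ∀ v, G.degree v ≤ d)
    (hK : (0.025 : ℝ) * d ≤ K) (v : V) :
    (Measure.pi fun _ : V => uniformColour K).real (manyRelated G ShareCoord (0.0031 * d) v) ≤
      1 / (16 * (d + 1) ^ 3) := by
  have hd' : (54000 : ℝ) ≤ d := mod_cast hd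
  have hK₀ : 0 < K := by rify; linarith
  have := isProbabilityMeasure_uniformColour hK₀
  exact (measureReal_ncard_rel_ge_le (measureReal_shareCoord_le hK₀) (by simp)
    (Real.log_nonneg one_le_two) _).trans <| (Real.exp_le_exp.2 <|
      shareCoord_exponent_le hd' hK (mod_cast hdeg v)).trans (exp_neg_div_1500_le hd')

lemma measureReal_manyRelated_nearCoord_le (hd : 54000 ≤ d) (hdeg : ∀ v, G.degree v ≤ d)
    (hK : (0.025 : ℝ) * d ≤ K) (v : V) :
    (Measure.pi fun _ : V => uniformColour K).real
        (manyRelated G (NearCoord K ((0.0031 * d + 7) / 2)) (0.26 * d) v) ≤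
      1 / (16 * (d + 1) ^ 3) := by
  have hd' : (54000 : ℝ) ≤ d := mod_cast hd
  have hK₀ : 0 < K := by rify; linarith
  have := isProbabilityMeasure_uniformColour hK₀
  have hnear (c) := measureReal_nearCoord_le (K := K) (b := (0.0031 * d + 7) / 2) (by positivity)
    (by linarith) hK₀ c
  rw [mul_div_cancel₀ _ two_ne_zero] at hnear
  exact (measureReal_ncard_rel_ge_le hnear (by simp) (by norm_num) _).trans <|
    (Real.exp_le_exp.2 <| nearCoord_exponent_le hd' hK (Nat.cast_nonneg _)
      (mod_cast hdeg v)).trans (exp_neg_div_1500_le hd')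

lemma measureReal_manyRelated_union_le (hd : 54000 ≤ d) (hdeg : ∀ v, G.degree v ≤ d)
    (hK : (0.025 : ℝ) * d ≤ K) (v : V) :
    (Measure.pi fun _ : V => uniformColour K).real (manyRelated G ShareCoord (0.0031 * d) v ∪
        manyRelated G (NearCoord K ((0.0031 * d + 7) / 2)) (0.26 * d) v) ≤
      1 / (8 * (d + 1) ^ 3) := by
  refine (measureReal_union_le _ _).trans <|
    (add_le_add (measureReal_manyRelated_shareCoord_le hd hdeg hK v)
      (measureReal_manyRelated_nearCoord_le hd hdeg hK v)).trans_eq ?_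
  field_simp
  norm_num

lemma measureReal_manySameColour_le (hd : 54000 ≤ d) (hdeg : ∀ v, G.degree v ≤ d)
    (hK : (0.025 : ℝ) * d ≤ K) (v : V) :
    (Measure.pi fun _ : V => uniformColour K).real (manySameColour G (0.131 * d) v) ≤
      1 / (8 * (d + 1) ^ 4) := by
  have hd' : (54000 : ℝ) ≤ d := mod_cast hd
  have hK₀ : 0 < K := by rify; linarith
  have := isProbabilityMeasure_uniformColour hK₀
  exact (measureReal_ncard_sameColour_ge_le hdeg (hdeg v)
    (measureReal_uniformColour_singleton_le K) (by norm_num) _).trans <| (Real.exp_le_exp.2 <|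
      sameColour_exponent_le hd' hK (mod_cast hdeg v)).trans (exp_neg_div_1000_le hd')

end BadEvents

open MeasureTheory in
theorem good_colour_assignment_exists_general {V : Type*} [Finite V] (G : SimpleGraph V)
    [G.LocallyFinite] (d K : ℕ) (hd : 54000 ≤ d) (hdeg : ∀ v, G.degree v ≤ d)
    (hK : (0.025 : ℝ) * d ≤ K) :
    ∃ C : V → ℕ × ℕ,
      (∀ v : V, C v ∈ Finset.Icc 1 K ×ˢ Finset.Icc 1 K) ∧
      ∀ v : V,
        (edgeDeg (specialSet G C) v : ℝ) < 0.0031 * d ∧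
        (edgeDeg (riskySet G C K ((0.0031 * d + 7) / 2)) v : ℝ) < 0.26 * d ∧
        ((G.neighborSet v ∩ uncolSet G C).ncard : ℝ) < 0.131 * d := by
  classical
  have := Fintype.ofFinite V
  have := isProbabilityMeasure_uniformColour (K := K) (by rify at hd ⊢; linarith)
  have hgood := exists_frequently_notMem_of_dependsOn_nbhd hdeg (fun v => .of_discrete)
    (fun v => .of_discrete)
    (fun v C C' h => congrArg₂ Or (dependsOn_manyRelated _ _ v h) (dependsOn_manyRelated _ _ v h))
    (dependsOn_manySameColour _) (measureReal_manyRelated_union_le hd hdeg hK)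
    (measureReal_manySameColour_le hd hdeg hK)
  have hmem : ∀ᵐ C ∂Measure.pi fun _ : V => uniformColour K, ∀ v,
      C v ∈ Finset.Icc 1 K ×ˢ Finset.Icc 1 K := ae_all_iff.2 fun v =>
    (measurePreserving_eval _ v).quasiMeasurePreserving.ae (ae_uniformColour_mem K)
  obtain ⟨C, hC, hCmem⟩ := (hgood.and_eventually hmem).exists
  refine ⟨C, hCmem, fun v => ⟨?_, ?_, ?_⟩⟩
  · exact (Nat.cast_le.2 (edgeDeg_specialSet_le C v)).trans_lt
      (not_le.1 fun h => (hC v).1 (.inl h))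
  · exact (Nat.cast_le.2 (edgeDeg_riskySet_le C K _ v)).trans_lt
      (not_le.1 fun h => (hC v).1 (.inr h))
  · rw [neighborSet_inter_uncolSet]
    exact not_le.1 (hC v).2

/-- For a `d`-regular graph with `d ≥ 54000`, `k = 0.025`, `s = 0.0031`, `r = 0.26`,
`u = 0.131` and `K = ⌈kd⌉, there is an assignment of colours `C_v = (O_v, I_v) ∈ [K]²`
such that every vertex `v` satisfies `d_S(v) < sd`, `d_R(v) < rd` and `d_U(v) < ud`. -/
theorem good_colour_assignment_exists
    {V : Type*} [Fintype V] (G : SimpleGraph V) [DecidableRel G.Adj]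
    (d : ℕ) (hd : 54000 ≤ d) (hreg : G.IsRegularOfDegree d) :
    ∃ C : V → ℕ × ℕ,
      (∀ v : V, C v ∈ Finset.Icc 1 (⌈(0.025 : ℝ) * d⌉₊) ×ˢ
        Finset.Icc 1 (⌈(0.025 : ℝ) * d⌉₊)) ∧
      ∀ v : V,
        (edgeDeg (specialSet G C) v : ℝ) < 0.0031 * d ∧
        (edgeDeg (riskySet G C (⌈(0.025 : ℝ) * d⌉₊) ((0.0031 * d + 7) / 2)) v : ℝ)
          < 0.26 * d ∧
        ((G.neighborSet v ∩ uncolSet G C).ncard : ℝ) < 0.131 * d :=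
  good_colour_assignment_exists_general G d _ hd (fun v => (hreg v).le) (Nat.le_ceil _)
end
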